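/- Let m be an odd integer with m > 7 and let n ≥ 1. If the group (ℤ/2ℤ)^r acts freely and continuously on the product (ℝP^m)^n, then r ≤ 2n. -/

import Mathlib

noncomputable section

/-- The unit sphere `S^m` in `ℝ^{m+1}`. -/
abbrev Sph (m : ℕ) : Type := Metric.sphere (0 : EuclideanSpace ℝ (Fin (m + 1))) 1

/-- The antipodal relation on the sphere `S^m`. -/
def antipodal (m : ℕ) (x y : Sph m) : Prop :=
  (y : EuclideanSpace ℝ (Fin (m + 1))) = (x : EuclideanSpace ℝ (Fin (m + 1))) ∨
    (y : EuclideanSpace ℝ (Fin (m + 1))) = -(x : EuclideanSpace ℝ (Fin (m + 1)))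

/-- Real projective `m`-space: the quotient of `S^m` by the antipodal map,
with the quotient topology. -/
abbrev RP (m : ℕ) : Type := Quot (antipodal m)

section Preliminaries

open Filter Topology Uniformity

/-! ### Cochains on lists of points, germs near the diagonal -/

section Cochains

variable {X Y M : Type*} [AddCommGroup M]

/-- The alternating-sum coboundary on functions of lists (augmented: the empty list is allowed). -/
def cobdAux : (List X → M) → List X → M
  | _, [] => 0
  | f, x :: l => f l - cobdAux (fun l' => f (x :: l')) l

theorem cobdAux_add (l : List X) : ∀ f g : List X → M,
    cobdAux (f + g) l = cobdAux f l + cobdAux g l := by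
  induction l with
  | nil => intro f g; simp [cobdAux]
  | cons x l ih =>
    intro f g
    have := ih (fun l' => f (x :: l')) (fun l' => g (x :: l'))
    simp only [cobdAux, Pi.add_apply]
    rw [show (fun l' => f (x :: l') + g (x :: l')) =
      (fun l' => f (x :: l')) + (fun l' => g (x :: l')) from rfl, this]
    abel

/-- The coboundary as a homomorphism. -/
def cobd : (List X → M) →+ (List X → M) :=
  AddMonoidHom.mk' cobdAux fun f g => funext fun l => cobdAux_add l f g

@[simp] theorem cobd_nil (f : List X → M) : cobd f [] = 0 := rfl

theorem cobd_cons (f : List X → M) (x : X) (l : List X) :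
    cobd f (x :: l) = f l - cobd (fun l' => f (x :: l')) l := rfl

theorem cobd_cobd (f : List X → M) : cobd (cobd f) = 0 := by
  funext l
  induction l generalizing f with
  | nil => simp
  | cons x l ih =>
    rw [cobd_cons]
    have : (fun l' => cobd f (x :: l')) = f - cobd (fun l' => f (x :: l')) := by
      funext l'; simp [cobd_cons]
    rw [this, map_sub, Pi.sub_apply, ih]
    simp

/-- Pull-back of cochains along a map of points. -/
def pull (φ : X → Y) : (List Y → M) →+ (List X → M) :=
  AddMonoidHom.mk' (fun f l => f (l.map φ)) fun _ _ => rfl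

@[simp] theorem pull_apply (φ : X → Y) (f : List Y → M) (l : List X) :
    pull φ f l = f (l.map φ) := rfl

theorem cobd_pull (φ : X → Y) (f : List Y → M) : cobd (pull φ f) = pull φ (cobd f) := by
  funext l
  induction l generalizing f with
  | nil => simp
  | cons x l ih =>
    have e : (fun l' => pull φ f (x :: l')) = pull φ (fun l' => f (φ x :: l')) := rfl
    rw [cobd_cons, e, ih]
    simp [cobd_cons]

theorem cobd_comp_hom {N : Type*} [AddCommGroup N] (φ : M →+ N) (f : List X → M) :
    cobd (fun l => φ (f l)) = fun l => φ (cobd f l) := by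
  funext l
  induction l generalizing f with
  | nil => simp
  | cons x l ih => simp [cobd_cons, ih]

theorem cobd_congr_of_sublist (l : List X) : ∀ {f g : List X → M},
    (∀ l', l'.Sublist l → l'.length + 1 = l.length → f l' = g l') → cobd f l = cobd g l := by
  induction l with
  | nil => intros; simp
  | cons x l ih =>
    intro f g h
    rw [cobd_cons, cobd_cons, h l (List.sublist_cons_self x l) (by simp)]
    congr 1
    exact ih fun l' h1 h2 => h _ (h1.cons_cons x) (by simp [h2])

/-- The prism operator between two maps. -/
def prism (φ ψ : X → Y) : (List Y → M) → List X → M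
  | _, [] => 0
  | f, x :: l => f (φ x :: ψ x :: l.map ψ) - prism φ ψ (fun l' => f (φ x :: l')) l

theorem prism_sub (φ ψ : X → Y) (f g : List Y → M) (l : List X) :
    prism φ ψ (f - g) l = prism φ ψ f l - prism φ ψ g l := by
  induction l generalizing f g with
  | nil => simp [prism]
  | cons x l ih =>
    have := ih (fun l' => f (φ x :: l')) (fun l' => g (φ x :: l'))
    simp only [prism, Pi.sub_apply]
    rw [show (fun l' => f (φ x :: l') - g (φ x :: l')) =
      (fun l' => f (φ x :: l')) - (fun l' => g (φ x :: l')) from rfl, this]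
    abel

theorem cobd_prism (φ ψ : X → Y) (f : List Y → M) (l : List X) :
    cobd (prism φ ψ f) l + prism φ ψ (cobd f) l = f (l.map ψ) - f (l.map φ) := by
  induction l generalizing f with
  | nil => simp [prism]
  | cons x l ih =>
    have e1 : (fun l' => prism φ ψ f (x :: l')) =
        pull ψ (fun l' => f (φ x :: ψ x :: l')) - prism φ ψ (fun l' => f (φ x :: l')) := by
      funext l'; simp [prism]
    have e2 : (fun l' => cobd f (φ x :: l')) = f - cobd (fun l' => f (φ x :: l')) := by
      funext l'; simp [cobd_cons]
    have e3 := ih (fun l' => f (φ x :: l'))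
    rw [cobd_cons, e1, map_sub, cobd_pull, Pi.sub_apply, pull_apply]
    simp only [prism]
    rw [e2, prism_sub, cobd_cons, cobd_cons, List.map_cons, List.map_cons]
    have e4 : f (φ x :: l.map ψ) - f (φ x :: l.map φ) =
      cobd (prism φ ψ fun l' => f (φ x :: l')) l +
        prism φ ψ (cobd fun l' => f (φ x :: l')) l := e3.symm
    have : f (φ x :: l.map φ) = f (φ x :: l.map ψ) -
      (cobd (prism φ ψ fun l' => f (φ x :: l')) l +
        prism φ ψ (cobd fun l' => f (φ x :: l')) l) := by rw [← e4]; abel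
    rw [this]
    abel

theorem prism_eq_zero (φ ψ : X → Y) (l : List X) : ∀ g : List Y → M,
    (∀ l' : List Y, l'.length = l.length + 1 → (∀ y ∈ l', ∃ x ∈ l, y = φ x ∨ y = ψ x) → g l' = 0) →
    prism φ ψ g l = 0 := by
  induction l with
  | nil => intros; rfl
  | cons x l ih =>
    intro g h
    have h1 : g (φ x :: ψ x :: l.map ψ) = 0 := by
      apply h
      · simp
      · intro y hy
        simp only [List.mem_cons, List.mem_map] at hy
        rcases hy with rfl | rfl | ⟨z, hz, rfl⟩
        · exact ⟨x, by simp, Or.inl rfl⟩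
        · exact ⟨x, by simp, Or.inr rfl⟩
        · exact ⟨z, by simp [hz], Or.inr rfl⟩
    have h2 : prism φ ψ (fun l' => g (φ x :: l')) l = 0 := by
      apply ih
      intro l' hl hm
      apply h
      · simp [hl]
      · intro y hy
        rcases List.mem_cons.1 hy with rfl | hy
        · exact ⟨x, by simp, Or.inl rfl⟩
        · obtain ⟨z, hz, h⟩ := hm y hy
          exact ⟨z, by simp [hz], h⟩
    simp [prism, h1, h2]

theorem prism_map (φ ψ : X → X) (γ : X → X) (f : List X → M) (l : List X)
    (hφ : ∀ x ∈ l, φ (γ x) = γ (φ x)) (hψ : ∀ x ∈ l, ψ (γ x) = γ (ψ x)) :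
    prism φ ψ f (l.map γ) = prism φ ψ (pull γ f) l := by
  induction l generalizing f with
  | nil => rfl
  | cons x l ih =>
    have h1 := ih (fun l' => f (γ (φ x) :: l')) (fun y hy => hφ y (by simp [hy]))
      (fun y hy => hψ y (by simp [hy]))
    have h2 : (l.map γ).map ψ = (l.map ψ).map γ := by
      simp only [List.map_map]
      exact List.map_congr_left fun y hy => hψ y (by simp [hy])
    simp only [List.map_cons, prism, pull_apply]
    rw [hφ x (by simp), hψ x (by simp), h2, h1]
    rfl

end Cochains

section Germs

variable {X Y M : Type*} [UniformSpace X] [UniformSpace Y] [AddCommGroup M]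

/-- The filter of lists of length `k` in `S` that are small for the uniformity. -/
def small (S : Set X) (k : ℕ) : Filter (List X) where
  sets := {s | ∃ V ∈ 𝓤 X, ∀ l : List X, l.length = k → (∀ x ∈ l, x ∈ S) →
    (∀ x ∈ l, ∀ y ∈ l, (x, y) ∈ V) → l ∈ s}
  univ_sets := ⟨Set.univ, univ_mem, by simp⟩
  sets_of_superset := fun ⟨V, hV, h⟩ hs => ⟨V, hV, fun l h1 h2 h3 => hs (h l h1 h2 h3)⟩
  inter_sets := fun ⟨V, hV, h⟩ ⟨W, hW, h'⟩ => ⟨V ∩ W, inter_mem hV hW, fun l h1 h2 h3 =>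
    ⟨h l h1 h2 fun x hx y hy => (h3 x hx y hy).1, h' l h1 h2 fun x hx y hy => (h3 x hx y hy).2⟩⟩

theorem eventually_small_of_forall {S : Set X} {k : ℕ} {p : List X → Prop}
    (h : ∀ l : List X, l.length = k → (∀ x ∈ l, x ∈ S) → p l) : ∀ᶠ l in small S k, p l :=
  ⟨Set.univ, univ_mem, fun l h1 h2 _ => h l h1 h2⟩

theorem eventually_small_close {S : Set X} {k : ℕ} {V : Set (X × X)} (hV : V ∈ 𝓤 X) :
    ∀ᶠ l in small S k, l.length = k ∧ (∀ x ∈ l, x ∈ S) ∧ ∀ x ∈ l, ∀ y ∈ l, (x, y) ∈ V :=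
  ⟨V, hV, fun _ h1 h2 h3 => ⟨h1, h2, h3⟩⟩

theorem small_mono {S T : Set X} (h : S ⊆ T) (k : ℕ) : small S k ≤ small T k :=
  fun _ ⟨V, hV, hs⟩ => ⟨V, hV, fun l h1 h2 h3 => hs l h1 (fun x hx => h (h2 x hx)) h3⟩

theorem eventually_small_zero {S : Set X} {p : List X → Prop} :
    (∀ᶠ l in small S 0, p l) ↔ p [] := by
  constructor
  · rintro ⟨V, -, h⟩
    exact h [] rfl (by simp) (by simp)
  · intro h
    refine eventually_small_of_forall fun l hl _ => ?_
    rwa [List.length_eq_zero_iff.1 hl]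

theorem cobd_congr {S : Set X} {k : ℕ} {f g : List X → M} (h : f =ᶠ[small S k] g) :
    cobd f =ᶠ[small S (k + 1)] cobd g := by
  obtain ⟨V, hV, h⟩ := h
  refine ⟨V, hV, fun l h1 h2 h3 => cobd_congr_of_sublist l fun l' hs hl => h l' (by omega)
    (fun x hx => h2 x (hs.subset hx))
    (fun x hx y hy => h3 x (hs.subset hx) y (hs.subset hy))⟩

theorem cobd_eq_zero_of {S : Set X} {k : ℕ} {f h : List X → M} (e : f =ᶠ[small S k] cobd h) :
    cobd f =ᶠ[small S (k + 1)] 0 := by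
  have := cobd_congr e
  rwa [cobd_cobd] at this

theorem tendsto_map_small {S : Set X} {T : Set Y} {φ : X → Y} (hφ : UniformContinuousOn φ S)
    (hm : Set.MapsTo φ S T) (k : ℕ) : Tendsto (List.map φ) (small S k) (small T k) := by
  rintro s ⟨V, hV, hs⟩
  have h1 : {p : X × X | p.1 ∈ S → p.2 ∈ S → (φ p.1, φ p.2) ∈ V} ∈ 𝓤 X := by
    have := hφ hV
    rw [mem_map, mem_inf_principal] at this
    filter_upwards [this] with p hp h1 h2 using hp ⟨h1, h2⟩
  refine ⟨_, h1, fun l hl hS hV => hs _ (by simpa using hl) ?_ ?_⟩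
  · intro y hy
    obtain ⟨x, hx, rfl⟩ := List.mem_map.1 hy
    exact hm (hS x hx)
  · intro y hy y' hy'
    obtain ⟨x, hx, rfl⟩ := List.mem_map.1 hy
    obtain ⟨x', hx', rfl⟩ := List.mem_map.1 hy'
    exact hV x hx x' hx' (hS x hx) (hS x' hx')

theorem pull_congr {S : Set X} {T : Set Y} {φ : X → Y} (hφ : UniformContinuousOn φ S)
    (hm : Set.MapsTo φ S T) {k : ℕ} {f g : List Y → M} (h : f =ᶠ[small T k] g) :
    pull φ f =ᶠ[small S k] pull φ g :=
  (tendsto_map_small hφ hm k).eventually h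

/-- Two overlapping half-spaces cover small lists. -/
theorem small_le_sup (S : Set X) (k : ℕ) {u : X → ℝ} (hu : UniformContinuous u) :
    small S k ≤ small (S ∩ {x | -(1 / 2) ≤ u x}) k ⊔ small (S ∩ {x | u x ≤ 1 / 2}) k := by
  rintro s ⟨⟨V, hV, h⟩, ⟨W, hW, h'⟩⟩
  have hU : {p : X × X | |u p.1 - u p.2| < 1} ∈ 𝓤 X := by
    have := hu (Metric.dist_mem_uniformity (show (0 : ℝ) < 1 by norm_num))
    simpa [Real.dist_eq] using this
  refine ⟨V ∩ W ∩ _, inter_mem (inter_mem hV hW) hU, fun l h1 h2 h3 => ?_⟩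
  by_cases hc : ∀ x ∈ l, -(1 / 2) ≤ u x
  · exact h l h1 (fun x hx => ⟨h2 x hx, hc x hx⟩) fun x hx y hy => (h3 x hx y hy).1.1
  · push Not at hc
    obtain ⟨y, hy, hy'⟩ := hc
    refine h' l h1 (fun x hx => ⟨h2 x hx, ?_⟩) fun x hx y hy => (h3 x hx y hy).1.2
    have hxy : |u x - u y| < 1 := (h3 x hx y hy).2
    have := abs_lt.1 hxy
    simp only [Set.mem_ofPred_eq]
    linarith [this.1, this.2]

open Classical in
/-- Gluing of two cochains. -/
def glue {N : Type*} (S : Set X) (f g : List X → N) (l : List X) : N :=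
  if ∀ x ∈ l, x ∈ S then f l else g l

theorem glue_left {N : Type*} (S : Set X) (f g : List X → N) (k : ℕ) : glue S f g =ᶠ[small S k] f :=
  eventually_small_of_forall fun _ _ h => if_pos h

theorem glue_right {N : Type*} {S T : Set X} {f g : List X → N} {k : ℕ}
    (h : f =ᶠ[small (S ∩ T) k] g) :
    glue S f g =ᶠ[small T k] g := by
  obtain ⟨V, hV, h⟩ := h
  refine ⟨V, hV, fun l h1 h2 h3 => ?_⟩
  by_cases hc : ∀ x ∈ l, x ∈ S
  · exact (if_pos hc).trans (h l h1 (fun x hx => ⟨hc x hx, h2 x hx⟩) h3)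
  · exact if_neg hc

/-- Invariance of a germ under a family of maps, uniformly in the family. -/
def GermInv (Γ : Set (X → X)) (S : Set X) (k : ℕ) (f : List X → M) : Prop :=
  ∀ᶠ l in small S k, ∀ γ ∈ Γ, f (l.map γ) = f l

theorem homotopy_invariance {S T : Set X} {Φ : ℝ → X → X}
    (hΦ : UniformContinuousOn (fun p : ℝ × X => Φ p.1 p.2) (Set.Icc 0 1 ×ˢ S))
    (hm : ∀ t ∈ Set.Icc (0 : ℝ) 1, Set.MapsTo (Φ t) S T) {k : ℕ} {f : List X → M}
    (hf : cobd f =ᶠ[small T (k + 1)] 0) (Γ : Set (X → X))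
    (hΓ : ∀ γ ∈ Γ, ∀ t ∈ Set.Icc (0 : ℝ) 1, ∀ x ∈ S, Φ t (γ x) = γ (Φ t x))
    (hinv : GermInv Γ T k f) :
    ∃ h : List X → M, h [] = 0 ∧ (∀ j, j + 1 = k → GermInv Γ S j h) ∧
      pull (Φ 1) f - pull (Φ 0) f =ᶠ[small S k] cobd h := by
  obtain ⟨V₁, hV₁, h₁⟩ := hf
  obtain ⟨V₂, hV₂, h₂⟩ := hinv
  have hV : V₁ ∩ V₂ ∈ 𝓤 X := inter_mem hV₁ hV₂
  have hu := hΦ hV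
  rw [mem_map, mem_inf_principal, uniformity_prod, mem_inf_iff_superset] at hu
  obtain ⟨P, hP, R, hR, hPR⟩ := hu
  obtain ⟨P', hP', hPP⟩ := mem_comap.1 hP
  obtain ⟨R', hR', hRR⟩ := mem_comap.1 hR
  obtain ⟨ε, hε, hεP⟩ := Metric.mem_uniformity_dist.1 hP'
  have key : ∀ s ∈ Set.Icc (0 : ℝ) 1, ∀ t ∈ Set.Icc (0 : ℝ) 1, dist s t < ε → ∀ x ∈ S, ∀ y ∈ S,
      (x, y) ∈ R' → (Φ s x, Φ t y) ∈ V₁ ∩ V₂ := by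
    intro s hs t ht hst x hx y hy hxy
    exact hPR (a := ((s, x), (t, y))) ⟨hPP (hεP hst), hRR hxy⟩ ⟨⟨hs, hx⟩, ⟨ht, hy⟩⟩
  obtain ⟨N, hN⟩ := exists_nat_gt (1 / ε)
  have hN0 : (0 : ℝ) < N := lt_trans (by positivity) hN
  have hNε : 1 / (N : ℝ) < ε := by
    rw [div_lt_iff₀ hN0]; rw [div_lt_iff₀ hε] at hN; linarith
  have claim : ∀ i : ℕ, i ≤ N → ∃ h : List X → M, h [] = 0 ∧ (∀ j, j + 1 = k → GermInv Γ S j h) ∧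
      pull (Φ (i / N)) f - pull (Φ 0) f =ᶠ[small S k] cobd h := by
    intro i
    induction i with
    | zero =>
      intro _
      refine ⟨0, rfl, fun j _ => eventually_small_of_forall fun _ _ _ _ _ => rfl, ?_⟩
      simp
    | succ i ih =>
      intro hi
      obtain ⟨h, h0, hI, he⟩ := ih (by omega)
      have hs : (i : ℝ) / N ∈ Set.Icc (0 : ℝ) 1 := by
        constructor
        · positivity
        · rw [div_le_one hN0]; exact_mod_cast (by omega : i ≤ N)
      have ht : ((i + 1 : ℕ) : ℝ) / N ∈ Set.Icc (0 : ℝ) 1 := by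
        constructor
        · positivity
        · rw [div_le_one hN0]; exact_mod_cast hi
      have hst : dist ((i : ℝ) / N) (((i + 1 : ℕ) : ℝ) / N) < ε := by
        rw [Real.dist_eq, ← sub_div]
        push_cast
        rw [show (i : ℝ) - (i + 1) = -1 by ring, neg_div, abs_neg, abs_of_pos (by positivity)]
        exact hNε
      have hts : dist (((i + 1 : ℕ) : ℝ) / N) ((i : ℝ) / N) < ε := by rwa [dist_comm]
      have hz : ∀ x ∈ S, ∀ y ∈ S, (x, y) ∈ R' → ∀ s' t' : ℝ,
          (s' = (i : ℝ) / N ∨ s' = ((i + 1 : ℕ) : ℝ) / N) →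
          (t' = (i : ℝ) / N ∨ t' = ((i + 1 : ℕ) : ℝ) / N) → (Φ s' x, Φ t' y) ∈ V₁ ∩ V₂ := by
        rintro x hx y hy hxy s' t' (rfl | rfl) (rfl | rfl)
        · exact key _ hs _ hs (by simpa using hε) x hx y hy hxy
        · exact key _ hs _ ht hst x hx y hy hxy
        · exact key _ ht _ hs hts x hx y hy hxy
        · exact key _ ht _ ht (by simpa using hε) x hx y hy hxy
      have hsm : ∀ l : List X, (∀ x ∈ l, x ∈ S) → (∀ x ∈ l, ∀ y ∈ l, (x, y) ∈ R') →
          ∀ l' : List X, (∀ y ∈ l', ∃ x ∈ l, y = Φ (i / N) x ∨ y = Φ ((i + 1 : ℕ) / N) x) →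
          (∀ y ∈ l', y ∈ T) ∧ ∀ y ∈ l', ∀ y' ∈ l', (y, y') ∈ V₁ ∩ V₂ := by
        intro l hS hR l' hl'
        constructor
        · intro y hy
          obtain ⟨x, hx, rfl | rfl⟩ := hl' y hy
          · exact hm _ hs (hS x hx)
          · exact hm _ ht (hS x hx)
        · intro y hy y' hy'
          obtain ⟨x, hx, hxy⟩ := hl' y hy
          obtain ⟨x', hx', hxy'⟩ := hl' y' hy'
          rcases hxy with rfl | rfl <;> rcases hxy' with rfl | rfl
          · exact hz x (hS x hx) x' (hS x' hx') (hR x hx x' hx') _ _ (Or.inl rfl) (Or.inl rfl)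
          · exact hz x (hS x hx) x' (hS x' hx') (hR x hx x' hx') _ _ (Or.inl rfl) (Or.inr rfl)
          · exact hz x (hS x hx) x' (hS x' hx') (hR x hx x' hx') _ _ (Or.inr rfl) (Or.inl rfl)
          · exact hz x (hS x hx) x' (hS x' hx') (hR x hx x' hx') _ _ (Or.inr rfl) (Or.inr rfl)
      refine ⟨h + prism (Φ (i / N)) (Φ ((i + 1 : ℕ) / N)) f, by simp [h0, prism], ?_, ?_⟩
      · intro j hj
        have hpr : GermInv Γ S j (prism (Φ (i / N)) (Φ ((i + 1 : ℕ) / N)) f) := by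
          refine ⟨R', hR', fun l hl hS hR γ hγ => ?_⟩
          rw [prism_map _ _ _ _ _ (fun x hx => hΓ γ hγ _ hs x (hS x hx))
            (fun x hx => hΓ γ hγ _ ht x (hS x hx)), ← sub_eq_zero, ← prism_sub]
          apply prism_eq_zero
          intro l' hl' hm'
          obtain ⟨hT, hV'⟩ := hsm l hS hR l' hm'
          have := h₂ l' (by omega) hT (fun y hy y' hy' => (hV' y hy y' hy').2) γ hγ
          simp [this]
        filter_upwards [hI j hj, hpr] with l h1 h2 γ hγ
        simp only [Pi.add_apply]
        rw [h1 γ hγ, h2 γ hγ]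
      · have hz0 : prism (Φ (i / N)) (Φ ((i + 1 : ℕ) / N)) (cobd f) =ᶠ[small S k] 0 := by
          refine ⟨R', hR', fun l hl hS hR => ?_⟩
          apply prism_eq_zero
          intro l' hl' hm'
          obtain ⟨hT, hV'⟩ := hsm l hS hR l' hm'
          exact h₁ l' (by omega) hT (fun y hy y' hy' => (hV' y hy y' hy').1)
        filter_upwards [he, hz0] with l h1 h2
        have h3 := cobd_prism (Φ (i / N)) (Φ ((i + 1 : ℕ) / N)) f l
        rw [h2] at h3
        simp only [Pi.sub_apply, pull_apply, map_add, Pi.add_apply, Pi.zero_apply, add_zero]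
          at h1 h3 ⊢
        rw [← h1, h3]
        abel
  have := claim N le_rfl
  rwa [div_self hN0.ne'] at this

end Germs

/-! ### Geometry of the sphere -/

section Sphere

variable {m : ℕ}

theorem Sph.norm_coe (u : Sph m) : ‖u.1‖ = 1 := mem_sphere_zero_iff_norm.1 u.2

theorem Sph.coe_ne_zero (u : Sph m) : u.1 ≠ 0 := by
  intro h; have := u.norm_coe; simp [h] at this

theorem Sph.neg_apply (u : Sph m) (l : Fin (m + 1)) : (-u).1 l = -u.1 l := rfl

theorem Sph.sum_sq (u : Sph m) : ∑ l, u.1 l ^ 2 = 1 := by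
  have := EuclideanSpace.real_norm_sq_eq u.1
  rw [u.norm_coe] at this
  simpa using this.symm

theorem Sph.neg_ne (u : Sph m) : -u ≠ u := by
  intro h
  apply u.coe_ne_zero
  ext l
  have h1 : -u.1 l = u.1 l := congrArg (fun v : Sph m => v.1 l) h
  simp only [PiLp.zero_apply]
  linarith

/-- The points `± e_j` of the sphere. -/
def pole (j : Fin (m + 1)) : Sph m := ⟨EuclideanSpace.single j 1, by simp⟩

@[simp] theorem pole_apply (j l : Fin (m + 1)) : (pole j).1 l = if l = j then 1 else 0 := by
  simp [pole]

/-- Normalization of a nonzero vector. -/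
def nrm (v : EuclideanSpace ℝ (Fin (m + 1))) : Sph m :=
  if h : v = 0 then pole 0 else ⟨‖v‖⁻¹ • v, by
    have : ‖v‖ ≠ 0 := norm_ne_zero_iff.2 h
    simp [norm_smul, this]⟩

theorem nrm_coe {v : EuclideanSpace ℝ (Fin (m + 1))} (h : v ≠ 0) : (nrm v).1 = ‖v‖⁻¹ • v := by
  rw [nrm, dif_neg h]

theorem nrm_apply {v : EuclideanSpace ℝ (Fin (m + 1))} (h : v ≠ 0) (l : Fin (m + 1)) :
    (nrm v).1 l = ‖v‖⁻¹ * v l := by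
  rw [nrm_coe h]; rfl

theorem nrm_val (u : Sph m) : nrm u.1 = u := by
  apply Subtype.ext
  rw [nrm_coe u.coe_ne_zero, u.norm_coe]; simp

theorem nrm_neg {v : EuclideanSpace ℝ (Fin (m + 1))} (h : v ≠ 0) : nrm (-v) = -nrm v := by
  apply Subtype.ext
  rw [nrm_coe (neg_ne_zero.2 h), coe_neg_sphere, nrm_coe h]; simp

theorem continuousOn_nrm : ContinuousOn (nrm (m := m)) {v | v ≠ 0} := by
  rw [Topology.IsInducing.subtypeVal.continuousOn_iff]
  refine ContinuousOn.congr (f := fun v => ‖v‖⁻¹ • v) ?_ fun v hv => nrm_coe hv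
  exact (continuous_norm.continuousOn.inv₀ fun v hv => norm_ne_zero_iff.2 hv).smul continuousOn_id

/-- The great subsphere spanned by the first `j` coordinates. -/
def flag (m j : ℕ) : Set (Sph m) := {u | ∀ l : Fin (m + 1), j ≤ l → u.1 l = 0}

theorem flag_mono {i j : ℕ} (h : i ≤ j) : flag m i ⊆ flag m j := fun _ hu l hl => hu l (h.trans hl)

theorem flag_zero : flag m 0 = ∅ := by
  ext u
  simp only [Set.mem_empty_iff_false, iff_false]
  intro hu
  have := u.sum_sq
  simp [hu _ (Nat.zero_le _)] at this

theorem flag_top : flag m (m + 1) = Set.univ :=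
  Set.eq_univ_of_forall fun _ l hl => absurd l.2 (by omega)

theorem neg_mem_flag {j : ℕ} {u : Sph m} (hu : u ∈ flag m j) : -u ∈ flag m j := fun l hl => by
  rw [Sph.neg_apply, hu l hl, neg_zero]

theorem continuous_coord (l : Fin (m + 1)) : Continuous fun u : Sph m => u.1 l :=
  (EuclideanSpace.proj (𝕜 := ℝ) l).continuous.comp continuous_subtype_val

theorem isClosed_flag (j : ℕ) : IsClosed (flag m j) := by
  simp only [flag, Set.ofPred_forall]
  exact isClosed_iInter fun l => isClosed_iInter fun _ =>
    isClosed_eq (continuous_coord l) continuous_const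

theorem pole_mem_flag (j : Fin (m + 1)) : pole j ∈ flag m (j + 1) := fun l hl => by
  rw [pole_apply, if_neg]; rintro rfl; omega

/-- Contraction along great circles towards `v`, defined away from `-v`. -/
def seg (v : Sph m) (t : ℝ) (u : Sph m) : Sph m := nrm ((1 - t) • u.1 + t • v.1)

theorem seg_ne_zero {v u : Sph m} (h : u ≠ -v) {t : ℝ} (ht : t ∈ Set.Icc (0 : ℝ) 1) :
    (1 - t) • u.1 + t • v.1 ≠ 0 := by
  intro h0
  have h1 : (1 - t) • u.1 = -(t • v.1) := eq_neg_of_add_eq_zero_left h0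
  have h2 := congrArg norm h1
  rw [norm_neg, norm_smul, norm_smul, u.norm_coe, v.norm_coe, Real.norm_of_nonneg ht.1,
    Real.norm_of_nonneg (by linarith [ht.2])] at h2
  have h3 : t = 1 / 2 := by linarith
  apply h
  apply Subtype.ext
  rw [coe_neg_sphere]
  subst h3
  have h4 : (1 / 2 : ℝ) • (u.1 + v.1) = 0 := by
    rw [smul_add]; convert h0 using 3; norm_num
  exact eq_neg_of_add_eq_zero_left ((smul_eq_zero.1 h4).resolve_left (by norm_num))

theorem seg_zero (v u : Sph m) : seg v 0 u = u := by simp [seg, nrm_val]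

theorem seg_one (v u : Sph m) : seg v 1 u = v := by simp [seg, nrm_val]

theorem continuousOn_seg (v : Sph m) :
    ContinuousOn (fun p : ℝ × Sph m => seg v p.1 p.2) (Set.Icc 0 1 ×ˢ {u | u ≠ -v}) := by
  refine continuousOn_nrm.comp (Continuous.continuousOn (by fun_prop)) ?_
  rintro ⟨t, u⟩ ⟨ht, hu⟩
  exact seg_ne_zero hu ht

theorem seg_mem_flag {v u : Sph m} {j : ℕ} (hv : v ∈ flag m j) (hu : u ∈ flag m j) (h : u ≠ -v)
    {t : ℝ} (ht : t ∈ Set.Icc (0 : ℝ) 1) : seg v t u ∈ flag m j := fun l hl => by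
  rw [seg, nrm_apply (seg_ne_zero h ht)]
  simp [hu l hl, hv l hl]

/-- Retraction onto the equator orthogonal to `e_j`, defined away from the poles. -/
def eqr (j : Fin (m + 1)) (t : ℝ) (u : Sph m) : Sph m :=
  nrm (u.1 - (t * u.1 j) • EuclideanSpace.single j 1)

theorem eqr_num_apply (j l : Fin (m + 1)) (t : ℝ) (u : Sph m) :
    (u.1 - (t * u.1 j) • (EuclideanSpace.single j (1 : ℝ))) l =
      if l = j then (1 - t) * u.1 j else u.1 l := by
  by_cases h : l = j
  · subst h; simp; ring
  · simp [h]

theorem eqr_norm_sq (j : Fin (m + 1)) (t : ℝ) (u : Sph m) :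
    ‖u.1 - (t * u.1 j) • (EuclideanSpace.single j (1 : ℝ))‖ ^ 2 =
      1 - u.1 j ^ 2 + ((1 - t) * u.1 j) ^ 2 := by
  have h1 := u.sum_sq
  rw [EuclideanSpace.real_norm_sq_eq]
  simp only [eqr_num_apply]
  rw [← Finset.add_sum_erase _ _ (Finset.mem_univ j)] at h1 ⊢
  rw [if_pos rfl, Finset.sum_congr rfl fun l hl => by rw [if_neg (Finset.ne_of_mem_erase hl)]]
  linarith

theorem eqr_ne_zero {j : Fin (m + 1)} {u : Sph m} (h : |u.1 j| ≤ 1 / 2) (t : ℝ) :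
    u.1 - (t * u.1 j) • (EuclideanSpace.single j (1 : ℝ)) ≠ 0 := by
  intro h0
  have h1 := eqr_norm_sq j t u
  rw [h0] at h1
  have h2 : u.1 j ^ 2 ≤ (1 / 2) ^ 2 := sq_le_sq' (by linarith [abs_le.1 h]) (abs_le.1 h).2
  have := sq_nonneg ((1 - t) * u.1 j)
  norm_num at h1 h2
  linarith

theorem eqr_zero (j : Fin (m + 1)) (u : Sph m) : eqr j 0 u = u := by simp [eqr, nrm_val]

theorem eqr_neg {j : Fin (m + 1)} {u : Sph m} (h : |u.1 j| ≤ 1 / 2) (t : ℝ) :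
    eqr j t (-u) = -eqr j t u := by
  rw [eqr, eqr, ← nrm_neg (eqr_ne_zero h t)]
  congr 1
  rw [Sph.neg_apply, coe_neg_sphere, mul_neg, neg_smul]
  abel

theorem continuousOn_eqr (j : Fin (m + 1)) :
    ContinuousOn (fun p : ℝ × Sph m => eqr j p.1 p.2)
      (Set.Icc 0 1 ×ˢ {u | |u.1 j| ≤ 1 / 2}) := by
  have := continuous_coord j
  refine continuousOn_nrm.comp (Continuous.continuousOn (by fun_prop)) ?_
  rintro ⟨t, u⟩ ⟨ht, hu⟩
  exact eqr_ne_zero hu t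

theorem abs_eqr_le {j : Fin (m + 1)} {u : Sph m} (h : |u.1 j| ≤ 1 / 2) {t : ℝ}
    (ht : t ∈ Set.Icc (0 : ℝ) 1) : |(eqr j t u).1 j| ≤ 1 / 2 := by
  have h0 := eqr_ne_zero h t
  have hn := norm_pos_iff.2 h0
  rw [eqr, nrm_apply h0, eqr_num_apply, if_pos rfl, abs_mul, abs_of_pos (inv_pos.2 hn),
    inv_mul_le_iff₀ hn]
  have h1 := eqr_norm_sq j t u
  have h2 : u.1 j ^ 2 ≤ (1 / 2) ^ 2 := sq_le_sq' (by linarith [abs_le.1 h]) (abs_le.1 h).2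
  have h3 : ((1 - t) * u.1 j) ^ 2 ≤ u.1 j ^ 2 := by
    rw [mul_pow]
    have : (1 - t) ^ 2 ≤ 1 := by nlinarith [ht.1, ht.2]
    nlinarith [sq_nonneg (u.1 j)]
  have h4 : (2 * |(1 - t) * u.1 j|) ^ 2 ≤
      ‖u.1 - (t * u.1 j) • (EuclideanSpace.single j (1 : ℝ))‖ ^ 2 := by
    rw [h1, mul_pow, sq_abs]; linarith
  have := (pow_le_pow_iff_left₀ (by positivity) hn.le two_ne_zero).1 h4
  linarith

theorem eqr_mem_flag {j : Fin (m + 1)} {i : ℕ} {u : Sph m} (hu : u ∈ flag m i)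
    (h : |u.1 j| ≤ 1 / 2) (t : ℝ) : eqr j t u ∈ flag m i := fun l hl => by
  rw [eqr, nrm_apply (eqr_ne_zero h t), eqr_num_apply]
  split_ifs with hlj
  · subst hlj; simp [hu l hl]
  · simp [hu l hl]

theorem eqr_one_mem_flag {j : Fin (m + 1)} {u : Sph m} (hu : u ∈ flag m (j + 1))
    (h : |u.1 j| ≤ 1 / 2) : eqr j 1 u ∈ flag m j := fun l hl => by
  rw [eqr, nrm_apply (eqr_ne_zero h 1), eqr_num_apply]
  split_ifs with hlj
  · simp
  · have : (l : ℕ) ≠ j := fun h => hlj (Fin.ext h)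
    simp [hu l (by omega)]

end Sphere

/-! ### The antipodal zigzag on the sphere -/

section Zigzag

variable {X M : Type*} [AddCommGroup M]

/-- The operator `f ↦ f ∘ z - (-1)^a f`. -/
def opz (z : X → X) (a : ℕ) : (List X → M) →+ (List X → M) :=
  pull z - (-1 : ℤ) ^ a • AddMonoidHom.id (List X → M)

theorem opz_apply (z : X → X) (a : ℕ) (f : List X → M) (l : List X) :
    opz z a f l = f (l.map z) - (-1 : ℤ) ^ a • f l := rfl

theorem cobd_opz (z : X → X) (a : ℕ) (f : List X → M) : cobd (opz z a f) = opz z a (cobd f) := by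
  simp only [opz, AddMonoidHom.sub_apply, AddMonoidHom.smul_apply, AddMonoidHom.id_apply, map_sub,
    map_zsmul, cobd_pull]

end Zigzag

section ZigzagStep

variable {m : ℕ}

open Classical in
/-- Extension of a zigzag from the flag sphere of index `j` to the next one. -/
def zzStep (j : Fin (m + 1)) (g : ℕ → List (Sph m) → ℤ) : ℕ → List (Sph m) → ℤ
  | 0, _ => 1
  | a + 1, l =>
    if ∀ x ∈ l, |x.1 j| ≤ 1 / 2 then (if a + 1 ≤ j then g (a + 1) (l.map (eqr j 1)) else 0)
    else if ∀ x ∈ l, 0 ≤ x.1 j then (-1) ^ a * cobd (zzStep j g a) l else 0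

/-- The zigzag `1 = f₀, f₁, …` on the flag spheres. -/
def zz (m : ℕ) : ℕ → ℕ → List (Sph m) → ℤ
  | 0 => fun _ _ => 1
  | j + 1 => zzStep (Fin.ofNat (m + 1) j) (zz m j)

variable {j : Fin (m + 1)} {g : ℕ → List (Sph m) → ℤ}

theorem zzStep_band {a : ℕ} (ha : a ≤ j) (hg : ∀ l, g 0 l = 1) {l : List (Sph m)}
    (hl : ∀ x ∈ l, |x.1 j| ≤ 1 / 2) : zzStep j g a l = pull (eqr j 1) (g a) l := by
  cases a with
  | zero => simp [zzStep, hg]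
  | succ a => rw [zzStep, if_pos hl, if_pos ha, pull_apply]

theorem zzStep_top_band {l : List (Sph m)} (hl : ∀ x ∈ l, |x.1 j| ≤ 1 / 2) :
    zzStep j g (j + 1) l = 0 := by
  rw [zzStep, if_pos hl, if_neg (by omega)]

theorem uniformContinuous_coord (j : Fin (m + 1)) : UniformContinuous fun u : Sph m => u.1 j :=
  CompactSpace.uniformContinuous_of_continuous (continuous_coord j)

theorem eqr_one_uniform : UniformContinuousOn (eqr j 1) {u : Sph m | |u.1 j| ≤ 1 / 2} := by
  refine IsCompact.uniformContinuousOn_of_continuous (IsClosed.isCompact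
    (isClosed_le (continuous_coord j).abs continuous_const)) ?_
  exact (continuousOn_eqr j).comp (f := fun u : Sph m => ((1 : ℝ), u))
    (Continuous.continuousOn (by fun_prop)) fun u hu => ⟨by simp, hu⟩

/-- The band around the equator in a flag sphere. -/
def band (j : Fin (m + 1)) : Set (Sph m) := flag m (j + 1) ∩ {u | |u.1 j| ≤ 1 / 2}

theorem eqr_one_band {f f' : List (Sph m) → ℤ} {k : ℕ} (h : f =ᶠ[small (flag m j) k] f') :
    pull (eqr j 1) f =ᶠ[small (band j) k] pull (eqr j 1) f' :=
  pull_congr (eqr_one_uniform.mono Set.inter_subset_right)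
    (fun _ hu => eqr_one_mem_flag hu.1 hu.2) h

theorem small_trichotomy (i k : ℕ) (j : Fin (m + 1)) :
    ∀ᶠ l in small (flag m i) k, (∀ x ∈ l, |x.1 j| ≤ 1 / 2) ∨
      ((¬ ∀ x ∈ l, |x.1 j| ≤ 1 / 2) ∧ ∀ x ∈ l, 0 < x.1 j) ∨
      ((¬ ∀ x ∈ l, |x.1 j| ≤ 1 / 2) ∧ l ≠ [] ∧ ∀ x ∈ l, x.1 j < 0) := by
  have hU : {p : Sph m × Sph m | |p.1.1 j - p.2.1 j| < 1 / 2} ∈ 𝓤 (Sph m) := by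
    have := uniformContinuous_coord j
      (Metric.dist_mem_uniformity (show (0 : ℝ) < 1 / 2 by norm_num))
    simpa [Real.dist_eq] using this
  filter_upwards [eventually_small_close (S := flag m i) (k := k) hU] with l hl
  by_cases h : ∀ x ∈ l, |x.1 j| ≤ 1 / 2
  · exact Or.inl h
  · refine Or.inr ?_
    have h' := h
    push Not at h'
    obtain ⟨y, hy, hy'⟩ := h'
    rcases lt_abs.1 hy' with h1 | h1
    · refine Or.inl ⟨h, fun x hx => ?_⟩
      have h2 : |y.1 j - x.1 j| < 1 / 2 := hl.2.2 y hy x hx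
      linarith [(abs_lt.1 h2).2]
    · refine Or.inr ⟨h, List.ne_nil_of_mem hy, fun x hx => ?_⟩
      have h2 : |y.1 j - x.1 j| < 1 / 2 := hl.2.2 y hy x hx
      linarith [(abs_lt.1 h2).1]

theorem zzStep_pos {a : ℕ} {l : List (Sph m)} (h : ¬ ∀ x ∈ l, |x.1 j| ≤ 1 / 2)
    (hp : ∀ x ∈ l, 0 < x.1 j) : zzStep j g (a + 1) l = (-1) ^ a * cobd (zzStep j g a) l := by
  rw [zzStep, if_neg h, if_pos fun x hx => (hp x hx).le]

theorem zzStep_neg {a : ℕ} {l : List (Sph m)} (h : ¬ ∀ x ∈ l, |x.1 j| ≤ 1 / 2) (h0 : l ≠ [])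
    (hp : ∀ x ∈ l, x.1 j < 0) : zzStep j g (a + 1) l = 0 := by
  obtain ⟨y, hy⟩ := List.exists_mem_of_ne_nil l h0
  rw [zzStep, if_neg h, if_neg fun h => absurd (h y hy) (not_le.2 (hp y hy))]

theorem abs_neg_map {l : List (Sph m)} :
    (∀ x ∈ l.map (fun u => -u), |x.1 j| ≤ 1 / 2) ↔ ∀ x ∈ l, |x.1 j| ≤ 1 / 2 := by
  simp only [List.forall_mem_map, Sph.neg_apply, abs_neg]

theorem map_eqr_neg {l : List (Sph m)} (hl : ∀ x ∈ l, |x.1 j| ≤ 1 / 2) :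
    (l.map (fun u => -u)).map (eqr j 1) = (l.map (eqr j 1)).map (fun u => -u) := by
  simp only [List.map_map]
  exact List.map_congr_left fun x hx => eqr_neg (hl x hx) 1

theorem cobd_zzStep_band {a : ℕ} (ha : a ≤ j) (hg : ∀ l, g 0 l = 1) {l : List (Sph m)}
    (hl : ∀ x ∈ l, |x.1 j| ≤ 1 / 2) : cobd (zzStep j g a) l = cobd (g a) (l.map (eqr j 1)) := by
  rw [← pull_apply (eqr j 1) (cobd (g a)), ← cobd_pull]
  exact cobd_congr_of_sublist l fun l' hs _ => zzStep_band ha hg fun x hx => hl x (hs.subset hx)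

theorem eventually_band {S T : Set (Sph m)} {k : ℕ} {p : List (Sph m) → Prop}
    (h : ∀ᶠ l in small (S ∩ T) k, p l) : ∀ᶠ l in small S k, (∀ x ∈ l, x ∈ T) → p l := by
  obtain ⟨V, hV, h⟩ := h
  exact ⟨V, hV, fun l h1 h2 h3 h4 => h l h1 (fun x hx => ⟨h2 x hx, h4 x hx⟩) h3⟩

theorem opz_zzStep (hg : ∀ l, g 0 l = 1)
    (hop : ∀ a : ℕ, a < j → opz (fun u => -u) (a + 1) (g (a + 1)) =ᶠ[small (flag m j) (a + 1)]
      cobd (g a)) (hd : cobd (g j) =ᶠ[small (flag m j) (j + 1)] 0) (a : ℕ) :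
    a ≤ j → opz (fun u => -u) (a + 1) (zzStep j g (a + 1)) =ᶠ[small (flag m (j + 1)) (a + 1)]
      cobd (zzStep j g a) := by
  have step : ∀ a : ℕ, a ≤ j →
      cobd (opz (fun u => -u) a (zzStep j g a)) =ᶠ[small (flag m (j + 1)) (a + 1)] 0 →
      opz (fun u => -u) (a + 1) (zzStep j g (a + 1)) =ᶠ[small (flag m (j + 1)) (a + 1)]
        cobd (zzStep j g a) := by
    intro a ha hsym
    have hband : ∀ᶠ l in small (flag m (j + 1)) (a + 1), (∀ x ∈ l, |x.1 j| ≤ 1 / 2) →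
        opz (fun u => -u) (a + 1) (zzStep j g (a + 1)) l = cobd (zzStep j g a) l := by
      rcases lt_or_eq_of_le ha with h | h
      · filter_upwards [eventually_band (eqr_one_band (hop a h))] with l h1 hl
        have h2 := h1 hl
        rw [pull_apply, pull_apply, opz_apply] at h2
        rw [cobd_zzStep_band ha hg hl, opz_apply, zzStep_band h hg (abs_neg_map.2 hl),
          zzStep_band h hg hl, pull_apply, pull_apply, map_eqr_neg hl, h2]
      · subst h
        filter_upwards [eventually_band (eqr_one_band hd)] with l h1 hl
        have h2 := h1 hl
        rw [pull_apply, pull_apply, Pi.zero_apply] at h2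
        rw [cobd_zzStep_band le_rfl hg hl, h2, opz_apply, zzStep_top_band hl,
          zzStep_top_band (abs_neg_map.2 hl)]
        simp
    filter_upwards [hband, hsym, small_trichotomy (j + 1) (a + 1) j] with l h1 h2 h3
    rcases h3 with h3 | ⟨h3, h4⟩ | ⟨h3, h5, h4⟩
    · exact h1 h3
    · rw [opz_apply, zzStep_pos h3 h4, zzStep_neg (fun h => h3 (abs_neg_map.1 h))
        (by rintro h; simp only [List.map_eq_nil_iff] at h; simp [h] at h3)
        (by simpa only [List.forall_mem_map, Sph.neg_apply, Left.neg_neg_iff,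
          Left.neg_pos_iff] using h4)]
      simp only [smul_eq_mul, ← mul_assoc, ← pow_add]
      rw [show a + 1 + a = 2 * a + 1 by ring, pow_succ, pow_mul]
      simp
    · rw [cobd_opz, opz_apply, Pi.zero_apply] at h2
      rw [opz_apply, zzStep_neg h3 h5 h4, zzStep_pos (fun h => h3 (abs_neg_map.1 h))
        (by simpa only [List.forall_mem_map, Sph.neg_apply, Left.neg_neg_iff,
          Left.neg_pos_iff] using h4),
        sub_eq_zero.1 h2]
      simp only [smul_eq_mul, ← mul_assoc, ← pow_add]
      rw [← two_mul, pow_mul]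
      simp
  induction a with
  | zero =>
    refine fun h => step 0 h (Eventually.of_forall fun l => ?_)
    have : opz (fun u : Sph m => -u) 0 (zzStep j g 0) = 0 := by
      funext l; simp [opz_apply, zzStep]
    rw [this, map_zero]
  | succ a ih =>
    exact fun h => step _ h (cobd_eq_zero_of (ih (by omega)))

theorem zzStep_top_pos (hg : ∀ l, g 0 l = 1)
    (hd : cobd (g j) =ᶠ[small (flag m j) (j + 1)] 0) :
    zzStep j g (j + 1) =ᶠ[small (flag m (j + 1) ∩ {u | -(1 / 2) ≤ u.1 j}) (j + 1)]
      cobd ((-1 : ℤ) ^ (j : ℕ) • zzStep j g j) := by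
  filter_upwards [small_mono Set.inter_subset_left _ (small_trichotomy (j + 1) (j + 1) j),
    eventually_small_of_forall fun l _ h => h,
    small_mono Set.inter_subset_left _ (eventually_band (eqr_one_band hd))] with l h3 h h1
  rw [map_zsmul, Pi.smul_apply]
  rcases h3 with h3 | ⟨h3, h4⟩ | ⟨h3, h5, h4⟩
  · have h2 := h1 h3
    rw [pull_apply, pull_apply, Pi.zero_apply] at h2
    rw [zzStep_top_band h3, cobd_zzStep_band le_rfl hg h3, h2, smul_zero]
  · rw [zzStep_pos h3 h4, smul_eq_mul]
  · refine absurd (fun x hx => ?_) h3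
    have h6 : -(1 / 2) ≤ x.1 j := (h x hx).2
    exact abs_le.2 ⟨h6, by linarith [h4 x hx]⟩

theorem zzStep_top_neg :
    zzStep j g (j + 1) =ᶠ[small (flag m (j + 1) ∩ {u | u.1 j ≤ 1 / 2}) (j + 1)] 0 := by
  filter_upwards [small_mono Set.inter_subset_left _ (small_trichotomy (j + 1) (j + 1) j),
    eventually_small_of_forall fun l _ h => h] with l h3 h
  rcases h3 with h3 | ⟨h3, h4⟩ | ⟨h3, h5, h4⟩
  · exact zzStep_top_band h3
  · refine absurd (fun x hx => ?_) h3
    have h6 : x.1 j ≤ 1 / 2 := (h x hx).2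
    exact abs_le.2 ⟨by linarith [h4 x hx], h6⟩
  · exact zzStep_neg h3 h5 h4

theorem cobd_zzStep_top (hg : ∀ l, g 0 l = 1)
    (hd : cobd (g j) =ᶠ[small (flag m j) (j + 1)] 0) :
    cobd (zzStep j g (j + 1)) =ᶠ[small (flag m (j + 1)) (j + 1 + 1)] 0 := by
  refine small_le_sup (flag m (j + 1)) _ (uniformContinuous_coord j) ⟨?_, ?_⟩
  · exact cobd_eq_zero_of (zzStep_top_pos hg hd)
  · have := cobd_congr (zzStep_top_neg (j := j) (g := g))
    rwa [map_zero] at this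

theorem zz_zero_right (j : ℕ) (l : List (Sph m)) : zz m j 0 l = 1 := by
  cases j <;> simp [zz, zzStep]

theorem ofNat_val {j : ℕ} (hj : j ≤ m) : (Fin.ofNat (m + 1) j : ℕ) = j :=
  Nat.mod_eq_of_lt (by omega)

theorem zz_spec (j : ℕ) : j ≤ m + 1 →
    (∀ a : ℕ, a < j → opz (fun u => -u) (a + 1) (zz m j (a + 1)) =ᶠ[small (flag m j) (a + 1)]
      cobd (zz m j a)) ∧ cobd (zz m j j) =ᶠ[small (flag m j) (j + 1)] 0 := by
  induction j with
  | zero =>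
    intro _
    refine ⟨fun a ha => absurd ha (by omega), eventually_small_of_forall fun l hl h => ?_⟩
    rw [flag_zero] at h
    obtain ⟨x, hx⟩ := List.length_pos_iff_exists_mem.1 (show 0 < l.length by omega)
    exact absurd (h x hx) (by simp)
  | succ j ih =>
    intro hj
    obtain ⟨h1, h2⟩ := ih (by omega)
    have hv := ofNat_val (m := m) (j := j) (by omega)
    have h3 := opz_zzStep (j := Fin.ofNat (m + 1) j) (g := zz m j) (zz_zero_right j)
      (by rwa [hv]) (by rwa [hv])
    have h4 := cobd_zzStep_top (j := Fin.ofNat (m + 1) j) (g := zz m j) (zz_zero_right j)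
      (by rwa [hv])
    rw [hv] at h3 h4
    exact ⟨fun a ha => h3 a (by omega), h4⟩

end ZigzagStep

/-! ### Deformations -/

section Deform

variable {X M : Type*} [UniformSpace X] [AddCommGroup M]

theorem GermInv.mono {N : Type*} {Γ Γ' : Set (X → X)} {S S' : Set X} {k : ℕ} {f : List X → N}
    (h : GermInv Γ' S' k f) (hΓ : Γ ⊆ Γ') (hS : S ⊆ S') : GermInv Γ S k f := by
  filter_upwards [small_mono hS k h] with l hl γ hγ using hl γ (hΓ hγ)

theorem germInv_empty {N : Type*} (S : Set X) (k : ℕ) (f : List X → N) : GermInv ∅ S k f :=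
  Eventually.of_forall fun _ _ h => absurd h (Set.notMem_empty _)

theorem GermInv.add {Γ : Set (X → X)} {S : Set X} {k : ℕ} {f g : List X → M}
    (hf : GermInv Γ S k f) (hg : GermInv Γ S k g) : GermInv Γ S k (f + g) := by
  filter_upwards [hf, hg] with l h1 h2 γ hγ
  rw [Pi.add_apply, Pi.add_apply, h1 γ hγ, h2 γ hγ]

theorem GermInv.sub {Γ : Set (X → X)} {S : Set X} {k : ℕ} {f g : List X → M}
    (hf : GermInv Γ S k f) (hg : GermInv Γ S k g) : GermInv Γ S k (f - g) := by
  filter_upwards [hf, hg] with l h1 h2 γ hγ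
  rw [Pi.sub_apply, Pi.sub_apply, h1 γ hγ, h2 γ hγ]

/-- If `Φ` deforms `S` into `S'`, a decomposition of a cocycle on `S'` gives one on `S`. -/
theorem deform {S T S' : Set X} {Φ : ℝ → X → X}
    (hΦ : UniformContinuousOn (fun p : ℝ × X => Φ p.1 p.2) (Set.Icc 0 1 ×ˢ S))
    (hm : ∀ t ∈ Set.Icc (0 : ℝ) 1, Set.MapsTo (Φ t) S T) (h0 : ∀ x ∈ S, Φ 0 x = x)
    (h1 : Set.MapsTo (Φ 1) S S') {k : ℕ} {f : List X → M}
    (hf : cobd f =ᶠ[small T (k + 1)] 0) (Γ : Set (X → X))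
    (hΓ : ∀ γ ∈ Γ, ∀ t ∈ Set.Icc (0 : ℝ) 1, ∀ x ∈ S, Φ t (γ x) = γ (Φ t x))
    (hinv : GermInv Γ T k f) {g h : List X → M} (hgh : f =ᶠ[small S' k] g + cobd h)
    (hh : ∀ j, j + 1 = k → GermInv Γ S' j h) :
    ∃ h' : List X → M, h' [] = h [] ∧ (∀ j, j + 1 = k → GermInv Γ S j h') ∧
      f =ᶠ[small S k] pull (Φ 1) g + cobd h' := by
  obtain ⟨h₁, h₁0, h₁i, h₁e⟩ := homotopy_invariance hΦ hm hf Γ hΓ hinv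
  have hu : UniformContinuousOn (Φ 1) S := by
    refine hΦ.comp (f := fun x => ((1 : ℝ), x)) ?_ fun x hx => ⟨by simp, hx⟩
    exact (uniformContinuous_const.prodMk uniformContinuous_id).uniformContinuousOn
  refine ⟨pull (Φ 1) h - h₁, by simp [h₁0], fun j hj => ?_, ?_⟩
  · refine GermInv.sub ?_ (h₁i j hj)
    filter_upwards [(tendsto_map_small hu h1 j).eventually (hh j hj),
      eventually_small_of_forall fun l _ h => h] with l h2 hl γ hγ
    rw [pull_apply, pull_apply, ← h2 γ hγ]
    congr 1
    simp only [List.map_map]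
    exact List.map_congr_left fun x hx => hΓ γ hγ 1 (by simp) x (hl x hx)
  · have h2 := pull_congr hu h1 hgh
    filter_upwards [h₁e, h2, eventually_small_of_forall fun l _ h => h] with l h3 h4 hl
    have h5 : l.map (Φ 0) = l := by
      conv_rhs => rw [← List.map_id l]
      exact List.map_congr_left fun x hx => h0 x (hl x hx)
    rw [map_add, Pi.add_apply, ← cobd_pull] at h4
    rw [Pi.sub_apply, pull_apply (Φ 0), h5, h4] at h3
    rw [map_sub, Pi.add_apply, Pi.sub_apply, ← h3]
    abel

end Deform

/-! ### Products of spheres -/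

section Product

variable {m n : ℕ}

/-- The action of the sign group on a product of spheres. -/
def act (a : Fin n → ZMod 2) (x : Fin n → Sph m) : Fin n → Sph m :=
  fun i => if a i = 0 then x i else -x i

theorem act_zero (x : Fin n → Sph m) : act 0 x = x := by funext i; simp [act]

theorem act_add (a b : Fin n → ZMod 2) (x : Fin n → Sph m) :
    act (a + b) x = act a (act b x) := by
  funext i
  simp only [act, Pi.add_apply]
  have : ∀ z w : ZMod 2, (z + w = 0 ↔ (z = 0 ↔ w = 0)) := by decide
  by_cases h1 : a i = 0 <;> by_cases h2 : b i = 0 <;> simp [h1, h2, this]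

theorem act_act (a : Fin n → ZMod 2) (x : Fin n → Sph m) : act a (act a x) = x := by
  have : a + a = 0 := by
    funext i
    exact CharTwo.add_self_eq_zero _
  rw [← act_add, this, act_zero]

theorem act_comm (a b : Fin n → ZMod 2) (x : Fin n → Sph m) :
    act a (act b x) = act b (act a x) := by
  rw [← act_add, ← act_add, add_comm]

theorem act_free {a : Fin n → ZMod 2} {x : Fin n → Sph m} (h : act a x = x) : a = 0 := by
  funext i
  by_contra hi
  have : act a x i = x i := congrFun h i
  rw [act, if_neg (by simpa using hi)] at this
  exact Sph.neg_ne _ this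

theorem continuous_act (a : Fin n → ZMod 2) : Continuous (act (m := m) a) := by
  refine continuous_pi fun i => ?_
  by_cases h : a i = 0
  · simpa [act, h] using continuous_apply i
  · simp only [act, h, if_false]
    exact continuous_neg.comp (continuous_apply i)

/-- The points that agree with `y` outside `I` and have `i`-th coordinate in `K`. -/
def strip (I : Finset (Fin n)) (y : Fin n → Sph m) (i : Fin n) (K : Set (Sph m)) :
    Set (Fin n → Sph m) :=
  {x | x i ∈ K ∧ ∀ l, l ∉ I → l ≠ i → x l = y l}

/-- The points that agree with `y` outside `I`. -/
def box (I : Finset (Fin n)) (y : Fin n → Sph m) : Set (Fin n → Sph m) :=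
  {x | ∀ l, l ∉ I → x l = y l}

theorem strip_univ (I : Finset (Fin n)) (y : Fin n → Sph m) (i : Fin n) :
    strip I y i Set.univ = box (insert i I) y := by
  ext x
  simp only [strip, box, Set.mem_ofPred_eq, Set.mem_univ, true_and, Finset.mem_insert, not_or]
  exact ⟨fun h l hl => h l hl.2 hl.1, fun h l h1 h2 => h l ⟨h2, h1⟩⟩

theorem strip_singleton {I : Finset (Fin n)} (y : Fin n → Sph m) {i : Fin n} (hi : i ∉ I)
    (u : Sph m) : strip I y i {u} = box I (Function.update y i u) := by
  ext x
  simp only [strip, box, Set.mem_ofPred_eq, Set.mem_singleton_iff]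
  constructor
  · rintro ⟨h1, h2⟩ l hl
    by_cases h : l = i
    · subst h; simpa using h1
    · rw [Function.update_of_ne h, h2 l hl h]
  · intro h
    refine ⟨by simpa using h i hi, fun l hl hli => ?_⟩
    rw [h l hl, Function.update_of_ne hli]

theorem strip_mono {I : Finset (Fin n)} {y : Fin n → Sph m} {i : Fin n} {K L : Set (Sph m)}
    (h : K ⊆ L) : strip I y i K ⊆ strip I y i L := fun _ hx => ⟨h hx.1, hx.2⟩

theorem box_univ (y : Fin n → Sph m) : box Finset.univ y = Set.univ :=
  Set.eq_univ_of_forall fun _ l hl => absurd (Finset.mem_univ l) hl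

theorem box_empty (y : Fin n → Sph m) : box ∅ y = {y} := by
  ext x
  simp only [box, Finset.notMem_empty, not_false_eq_true, forall_const, Set.mem_ofPred_eq,
    Set.mem_singleton_iff]
  exact ⟨fun h => funext h, fun h l => congrFun h l⟩

theorem isClosed_strip (I : Finset (Fin n)) (y : Fin n → Sph m) (i : Fin n) {K : Set (Sph m)}
    (hK : IsClosed K) : IsClosed (strip I y i K) := by
  have : strip I y i K = (fun x => x i) ⁻¹' K ∩ ⋂ l, ⋂ _ : l ∉ I, ⋂ _ : l ≠ i, {x | x l = y l} := by
    ext x; simp [strip]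
  rw [this]
  exact (hK.preimage (continuous_apply i)).inter (isClosed_iInter fun l => isClosed_iInter fun _ =>
    isClosed_iInter fun _ => isClosed_eq (continuous_apply l) continuous_const)

/-- Apply a map of the sphere to one coordinate. -/
def upd (i : Fin n) (H : Sph m → Sph m) (x : Fin n → Sph m) : Fin n → Sph m :=
  Function.update x i (H (x i))

theorem upd_uniform {I : Finset (Fin n)} {y : Fin n → Sph m} {i : Fin n} {K : Set (Sph m)}
    (hK : IsClosed K) {H : ℝ → Sph m → Sph m}
    (hH : ContinuousOn (fun p : ℝ × Sph m => H p.1 p.2) (Set.Icc 0 1 ×ˢ K)) :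
    UniformContinuousOn (fun p : ℝ × (Fin n → Sph m) => upd i (H p.1) p.2)
      (Set.Icc 0 1 ×ˢ strip I y i K) := by
  refine IsCompact.uniformContinuousOn_of_continuous
    (isCompact_Icc.prod (isClosed_strip I y i hK).isCompact) ?_
  refine continuousOn_pi.2 fun l => ?_
  by_cases h : l = i
  · subst h
    simp only [upd, Function.update_self]
    exact hH.comp (f := fun p : ℝ × (Fin n → Sph m) => (p.1, p.2 l))
      (Continuous.continuousOn (by fun_prop)) fun p hp => ⟨hp.1, hp.2.1⟩
  · simp only [upd, Function.update_of_ne h]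
    exact Continuous.continuousOn (by fun_prop)

theorem upd_mapsTo {I : Finset (Fin n)} {y : Fin n → Sph m} {i : Fin n} {K L : Set (Sph m)}
    {H : Sph m → Sph m} (h : Set.MapsTo H K L) :
    Set.MapsTo (upd i H) (strip I y i K) (strip I y i L) := by
  rintro x ⟨h1, h2⟩
  refine ⟨by simpa [upd] using h h1, fun l hl hli => ?_⟩
  rw [upd, Function.update_of_ne hli, h2 l hl hli]

theorem upd_id {i : Fin n} {H : Sph m → Sph m} {x : Fin n → Sph m} (h : H (x i) = x i) :
    upd i H x = x := by
  rw [upd, h, Function.update_eq_self]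

/-- The elements of the sign group supported on `I`, as maps. -/
def signs (I : Finset (Fin n)) : Set ((Fin n → Sph m) → (Fin n → Sph m)) :=
  {γ | ∃ a : Fin n → ZMod 2, (∀ i, i ∉ I → a i = 0) ∧ γ = act a}

theorem upd_act_of_zero {a : Fin n → ZMod 2} {i : Fin n} (ha : a i = 0) (H : Sph m → Sph m)
    (x : Fin n → Sph m) : upd i H (act a x) = act a (upd i H x) := by
  funext l
  by_cases h : l = i
  · subst h; simp [upd, act, ha]
  · simp [upd, act, Function.update_of_ne h]

theorem upd_act_of_odd (a : Fin n → ZMod 2) {i : Fin n} {H : Sph m → Sph m}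
    {x : Fin n → Sph m} (hH : H (-x i) = -H (x i)) : upd i H (act a x) = act a (upd i H x) := by
  funext l
  by_cases h : l = i
  · subst h
    by_cases h0 : a l = 0 <;> simp [upd, act, h0, hH]
  · simp [upd, act, Function.update_of_ne h]

end Product

/-! ### Mayer–Vietoris gluing -/

section MayerVietoris

variable {X M : Type*} [AddCommGroup M]

theorem mayer_vietoris [UniformSpace X] {S P N : Set X} {k : ℕ}
    (hcov : small S (k + 1) ≤ small P (k + 1) ⊔ small N (k + 1))
    {f L E hp hn h₃ : List X → M} (hfp : f =ᶠ[small P (k + 1)] cobd hp)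
    (hfn : f =ᶠ[small N (k + 1)] cobd hn) (hLp : L =ᶠ[small P (k + 1)] cobd E)
    (hLn : L =ᶠ[small N (k + 1)] 0) (hW : hp - hn =ᶠ[small (P ∩ N) k] E + cobd h₃) :
    ∃ H : List X → M, f =ᶠ[small S (k + 1)] L + cobd H := by
  refine ⟨glue P (hp - E) (hn + cobd h₃), hcov ⟨?_, ?_⟩⟩
  · filter_upwards [cobd_congr (glue_left P (hp - E) (hn + cobd h₃) k), hfp, hLp] with l h1 h2 h3
    rw [Pi.add_apply, h1, h2, h3, map_sub, Pi.sub_apply]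
    abel
  · have : glue P (hp - E) (hn + cobd h₃) =ᶠ[small N k] hn + cobd h₃ := by
      apply glue_right
      filter_upwards [hW] with l hl
      simp only [Pi.sub_apply, Pi.add_apply] at hl ⊢
      rw [sub_eq_iff_eq_add] at hl
      rw [hl]
      abel
    filter_upwards [cobd_congr this, hfn, hLn] with l h1 h2 h3
    rw [Pi.add_apply, h1, h2, h3, map_add, cobd_cobd, Pi.zero_apply, add_zero, zero_add]

/-- Every cocycle of arity `k` on `S` with values in `M` is a coboundary. -/
def Acyclic [UniformSpace X] (M : Type*) [AddCommGroup M] (S : Set X) (k : ℕ) : Prop :=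
  ∀ f : List X → M, cobd f =ᶠ[small S (k + 1)] 0 → ∃ h, f =ᶠ[small S k] cobd h

/-- Multiply an integral cochain by a coefficient. -/
def sc (c : M) (f : List X → ℤ) : List X → M := fun l => f l • c

theorem sc_apply (c : M) (f : List X → ℤ) (l : List X) : sc c f l = f l • c := rfl

theorem cobd_sc (c : M) (f : List X → ℤ) : cobd (sc c f) = sc c (cobd f) :=
  cobd_comp_hom (zmultiplesHom M c) f

end MayerVietoris

section Strips

variable {m n : ℕ} {M : Type*} [AddCommGroup M] {I : Finset (Fin n)} {y : Fin n → Sph m}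
  {i : Fin n}

theorem small_strip_le (L : Set (Sph m)) (j : Fin (m + 1)) (k : ℕ) :
    small (strip I y i L) k ≤ small (strip I y i (L ∩ {u | -(1 / 2) ≤ u.1 j})) k ⊔
      small (strip I y i (L ∩ {u | u.1 j ≤ 1 / 2})) k := by
  have hu : UniformContinuous fun x : Fin n → Sph m => (x i).1 j :=
    CompactSpace.uniformContinuous_of_continuous ((continuous_coord j).comp (continuous_apply i))
  refine (small_le_sup (strip I y i L) k hu).trans (sup_le_sup (small_mono ?_ k) (small_mono ?_ k))
  · exact fun x hx => ⟨⟨hx.1.1, hx.2⟩, hx.1.2⟩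
  · exact fun x hx => ⟨⟨hx.1.1, hx.2⟩, hx.1.2⟩

theorem strip_inter_band (j : Fin (m + 1)) :
    strip I y i (flag m (j + 1) ∩ {u | -(1 / 2) ≤ u.1 j}) ∩
      strip I y i (flag m (j + 1) ∩ {u | u.1 j ≤ 1 / 2}) ⊆ strip I y i (band j) :=
  fun x hx => ⟨⟨hx.1.1.1, show |(x i).1 j| ≤ 1 / 2 from abs_le.2 ⟨hx.1.1.2, hx.2.1.2⟩⟩, hx.1.2⟩

theorem deform_cap {J : Set (Sph m)} {K : Set (Sph m)} {v : Sph m} (hK : IsClosed K)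
    (hvK : -v ∉ K) (hJ : ∀ t ∈ Set.Icc (0 : ℝ) 1, Set.MapsTo (seg v t) K J) {k : ℕ}
    {f : List (Fin n → Sph m) → M}
    (hf : cobd f =ᶠ[small (strip I y i J) (k + 1)] 0)
    {Γ : Set ((Fin n → Sph m) → (Fin n → Sph m))} (hΓ : Γ ⊆ signs I) (hi : i ∉ I)
    (hinv : GermInv Γ (strip I y i J) k f) {g h : List (Fin n → Sph m) → M}
    (hgh : f =ᶠ[small (strip I y i {v}) k] g + cobd h)
    (hh : ∀ j, j + 1 = k → GermInv Γ (strip I y i {v}) j h) :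
    ∃ h' : List (Fin n → Sph m) → M, h' [] = h [] ∧
      (∀ j, j + 1 = k → GermInv Γ (strip I y i K) j h') ∧
      f =ᶠ[small (strip I y i K) k] pull (upd i fun _ => v) g + cobd h' := by
  have h1 : (fun u => seg v 1 u) = fun _ => v := funext fun u => seg_one v u
  have := deform (Φ := fun t => upd i (seg v t)) (S := strip I y i K) (S' := strip I y i {v})
    (upd_uniform hK ((continuousOn_seg v).mono (Set.prod_mono_right
      fun u hu h => hvK (h ▸ hu)))) (fun t ht => upd_mapsTo (hJ t ht))
    (fun x _ => upd_id (seg_zero v _))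
    (upd_mapsTo fun u _ => seg_one v u) hf Γ (fun γ hγ t _ x _ => ?_) hinv hgh hh
  · simpa only [h1] using this
  · obtain ⟨a, ha, rfl⟩ := hΓ hγ
    exact upd_act_of_zero (ha i hi) _ _

theorem isClosed_band (j : Fin (m + 1)) : IsClosed (band j) :=
  (isClosed_flag _).inter (isClosed_le (continuous_coord j).abs continuous_const)

theorem deform_band (j : Fin (m + 1)) {k : ℕ} {f : List (Fin n → Sph m) → M}
    (hf : cobd f =ᶠ[small (strip I y i (band j)) (k + 1)] 0)
    {Γ : Set ((Fin n → Sph m) → (Fin n → Sph m))} (hΓ : Γ ⊆ signs (insert i I))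
    (hinv : GermInv Γ (strip I y i (band j)) k f) {g h : List (Fin n → Sph m) → M}
    (hgh : f =ᶠ[small (strip I y i (flag m j)) k] g + cobd h)
    (hh : ∀ j', j' + 1 = k → GermInv Γ (strip I y i (flag m j)) j' h) :
    ∃ h' : List (Fin n → Sph m) → M, h' [] = h [] ∧
      (∀ j', j' + 1 = k → GermInv Γ (strip I y i (band j)) j' h') ∧
      f =ᶠ[small (strip I y i (band j)) k] pull (upd i (eqr j 1)) g + cobd h' := by
  refine deform (Φ := fun t => upd i (eqr j t)) (S := strip I y i (band j))
    (upd_uniform (isClosed_band j) ((continuousOn_eqr j).mono (Set.prod_mono_right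
      Set.inter_subset_right)))
    (fun t ht => upd_mapsTo fun u hu =>
      show _ ∈ band j from ⟨eqr_mem_flag hu.1 hu.2 t, abs_eqr_le hu.2 ht⟩)
    (fun x _ => upd_id (eqr_zero j _))
    (upd_mapsTo fun u hu => eqr_one_mem_flag hu.1 hu.2) hf Γ (fun γ hγ t _ x hx => ?_) hinv hgh hh
  obtain ⟨a, -, rfl⟩ := hΓ hγ
  exact upd_act_of_odd _ (eqr_neg hx.1.2 t)

/-- The top class of the flag sphere in the `i`-th factor. -/
def lam (m j : ℕ) (i : Fin n) : List (Fin n → Sph m) → ℤ := pull (fun x => x i) (zz m j j)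

theorem eval_uniform (i : Fin n) : UniformContinuous fun x : Fin n → Sph m => x i :=
  uniformContinuous_pi.1 uniformContinuous_id i

theorem pull_eval_congr {K : Set (Sph m)} {k : ℕ} {f g : List (Sph m) → M}
    (h : f =ᶠ[small K k] g) :
    pull (fun x : Fin n → Sph m => x i) f =ᶠ[small (strip I y i K) k] pull (fun x => x i) g :=
  pull_congr (eval_uniform i).uniformContinuousOn (fun _ hx => hx.1) h

theorem strip_empty : strip I y i (∅ : Set (Sph m)) = ∅ := by
  ext x; simp [strip]

theorem flag_subset_band (j : Fin (m + 1)) : flag m j ⊆ band j := fun u hu =>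
  ⟨flag_mono (by omega) hu, by simp [hu j le_rfl]⟩

theorem strip_class (hI : ∀ y k, k ≤ m → Acyclic M (box I y : Set (Fin n → Sph m)) k)
    (hi : i ∉ I) (j : ℕ) : j ≤ m + 1 → ∀ k ≤ j, ∀ f : List (Fin n → Sph m) → M,
      cobd f =ᶠ[small (strip I y i (flag m j)) (k + 1)] 0 →
      (∀ u ∈ flag m j, ∃ h, f =ᶠ[small (strip I y i {u}) k] cobd h) →
      ∃ (c : M) (h : List (Fin n → Sph m) → M), (k < j → c = 0) ∧
        f =ᶠ[small (strip I y i (flag m j)) k] sc c (lam m j i) + cobd h := by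
  induction j with
  | zero =>
    intro _ k hk f _ _
    obtain rfl : k = 0 := by omega
    refine ⟨f [], 0, by simp, eventually_small_zero.2 ?_⟩
    simp [sc_apply, lam, zz]
  | succ j ih =>
    intro hj k hk f hf hfu
    have hv := ofNat_val (m := m) (j := j) (by omega)
    set jj := Fin.ofNat (m + 1) j with hjj
    cases k with
    | zero =>
      refine ⟨0, 0, fun _ => rfl, eventually_small_zero.2 ?_⟩
      obtain ⟨h, hh⟩ := hfu (pole jj) (hv ▸ pole_mem_flag jj)
      have := eventually_small_zero.1 hh
      simpa [sc_apply] using this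
    | succ k =>
      have hfj : cobd f =ᶠ[small (strip I y i (flag m (jj + 1))) (k + 1 + 1)] 0 := by rwa [hv]
      have cap : ∀ v ∈ flag m (jj + 1), ∀ K, IsClosed K → K ⊆ flag m (jj + 1) → -v ∉ K →
          ∃ h, f =ᶠ[small (strip I y i K) (k + 1)] cobd h := by
        intro v hvJ K hK hKJ hvK
        obtain ⟨h, hh⟩ := hfu v (hv ▸ hvJ)
        obtain ⟨h', -, -, h3⟩ := deform_cap (g := 0) hK hvK
          (fun t ht u hu => seg_mem_flag hvJ (hKJ hu) (fun e => hvK (e ▸ hu)) ht) hfj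
          (Set.empty_subset _) hi (germInv_empty _ _ _) (by rwa [zero_add])
          fun _ _ => germInv_empty _ _ _
        exact ⟨h', by simpa using h3⟩
      obtain ⟨hp, hhp⟩ := cap (pole jj) (pole_mem_flag jj)
        (flag m (jj + 1) ∩ {u | -(1 / 2) ≤ u.1 jj})
        ((isClosed_flag _).inter (isClosed_le continuous_const (continuous_coord jj)))
        Set.inter_subset_left (by
          rintro ⟨-, h⟩
          simp only [Set.mem_ofPred_eq, Sph.neg_apply, pole_apply, if_true] at h
          norm_num at h)
      obtain ⟨hn, hhn⟩ := cap (-pole jj) (neg_mem_flag (pole_mem_flag jj))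
        (flag m (jj + 1) ∩ {u | u.1 jj ≤ 1 / 2})
        ((isClosed_flag _).inter (isClosed_le (continuous_coord jj) continuous_const))
        Set.inter_subset_left (by
          rintro ⟨-, h⟩
          simp only [Set.mem_ofPred_eq, neg_neg, pole_apply, if_true] at h
          norm_num at h)
      have hsubp : band jj ⊆ flag m (jj + 1) ∩ {u | -(1 / 2) ≤ u.1 jj} := fun u hu =>
        ⟨hu.1, show -(1 / 2) ≤ u.1 jj from (abs_le.1 hu.2).1⟩
      have hsubn : band jj ⊆ flag m (jj + 1) ∩ {u | u.1 jj ≤ 1 / 2} := fun u hu =>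
        ⟨hu.1, show u.1 jj ≤ 1 / 2 from (abs_le.1 hu.2).2⟩
      have hud : cobd (hp - hn) =ᶠ[small (strip I y i (band jj)) (k + 1)] 0 := by
        filter_upwards [small_mono (strip_mono hsubp) _ hhp, small_mono (strip_mono hsubn) _ hhn]
          with l h1 h2
        rw [map_sub, Pi.sub_apply, ← h1, ← h2, sub_self, Pi.zero_apply]
      obtain ⟨c, h₂, hc, hh₂⟩ := ih (by omega) k (by omega) (hp - hn)
        (small_mono (strip_mono (hv ▸ flag_subset_band jj)) _ hud) fun u hu => by
          rw [strip_singleton y hi]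
          refine hI _ k (by omega) _ ?_
          rw [← strip_singleton y hi]
          refine small_mono (strip_mono (Set.singleton_subset_iff.2 ?_)) _ hud
          exact flag_subset_band jj (hv.symm ▸ hu)
      obtain ⟨h₃, -, -, hh₃⟩ := deform_band jj hud (Set.empty_subset _) (germInv_empty _ _ _)
        (by rwa [hv]) fun _ _ => germInv_empty _ _ _
      have hcov := small_strip_le (I := I) (y := y) (i := i) (flag m (jj + 1)) jj (k + 1)
      by_cases hkj : k = j
      · subst hkj
        obtain ⟨-, hd⟩ := zz_spec (m := m) k (by omega)
        have hLp : pull (fun x : Fin n → Sph m => x i) (zzStep jj (zz m k) (k + 1))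
            =ᶠ[small (strip I y i (flag m (jj + 1) ∩ {u | -(1 / 2) ≤ u.1 jj})) (k + 1)]
            pull (fun x => x i) (cobd ((-1 : ℤ) ^ k • zzStep jj (zz m k) k)) := by
          have := pull_eval_congr (I := I) (y := y) (i := i)
            (zzStep_top_pos (j := jj) (zz_zero_right k) (by rwa [hv]))
          rw [hv] at this
          rwa [hv]
        have hLn : pull (fun x : Fin n → Sph m => x i) (zzStep jj (zz m k) (k + 1))
            =ᶠ[small (strip I y i (flag m (jj + 1) ∩ {u | u.1 jj ≤ 1 / 2})) (k + 1)]
            pull (fun x => x i) 0 := by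
          have := pull_eval_congr (I := I) (y := y) (i := i)
            (zzStep_top_neg (j := jj) (g := zz m k))
          rw [hv] at this
          rwa [hv]
        have hee : ((-1 : ℤ) ^ k * (-1) ^ k) = 1 := by
          rw [← mul_pow]; simp
        refine Exists.elim (mayer_vietoris hcov hhp hhn
          (L := sc ((-1 : ℤ) ^ k • c) (lam m (k + 1) i))
          (E := sc ((-1 : ℤ) ^ k • c) (pull (fun x => x i) ((-1 : ℤ) ^ k • zzStep jj (zz m k) k)))
          (h₃ := h₃) ?_ ?_ ?_) fun H hH => ?_
        · filter_upwards [hLp] with l hl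
          rw [cobd_sc, sc_apply, sc_apply, cobd_pull, ← hl]
          rfl
        · filter_upwards [hLn] with l hl
          have : lam m (k + 1) i l = 0 := hl
          rw [sc_apply, this, zero_smul, Pi.zero_apply]
        · filter_upwards [small_mono (strip_inter_band jj) _ hh₃,
            small_mono (strip_inter_band jj) _
              (eventually_small_of_forall (p := fun l => ∀ x ∈ l, x ∈ strip I y i (band jj))
                fun l _ h => h)] with l hl hlb
          rw [hl, Pi.add_apply, Pi.add_apply, sc_apply, pull_apply, pull_apply, sc_apply,
            Pi.smul_apply, zzStep_band hv.ge (zz_zero_right k), smul_smul]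
          · have e : (l.map fun x => x i).map (eqr jj 1) =
                (l.map (upd i (eqr jj 1))).map fun x => x i := by
              simp [upd, Function.comp_def]
            rw [pull_apply, e, smul_eq_mul, mul_right_comm, hee, one_mul]
            rfl
          · intro x hx
            obtain ⟨z, hz, rfl⟩ := List.mem_map.1 hx
            exact (hlb z hz).1.2
        · exact ⟨_, H, fun h => absurd h (lt_irrefl _), by rwa [hv] at hH⟩
      · obtain rfl := hc (by omega)
        refine Exists.elim (mayer_vietoris hcov hhp hhn (L := 0) (E := 0) (h₃ := h₃) ?_ ?_ ?_)
          fun H hH => ?_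
        · simp
        · rfl
        · filter_upwards [small_mono (strip_inter_band jj) _ hh₃] with l hl
          rw [hl]
          simp [sc_apply]
        · refine ⟨0, H, fun _ => rfl, ?_⟩
          rw [hv] at hH
          filter_upwards [hH] with l hl
          simpa [sc_apply] using hl

end Strips

/-! ### Top cohomology of a product of spheres -/

section TopClass

variable {m n : ℕ} {M : Type*} [AddCommGroup M]

theorem exact_point {X : Type*} [UniformSpace X] (y : X) {k : ℕ} {f : List X → M}
    (hf : cobd f =ᶠ[small {y} (k + 1)] 0) : f =ᶠ[small {y} k] cobd fun l => f (y :: l) := by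
  obtain ⟨V, hV, h⟩ := hf
  refine ⟨V, hV, fun l h1 h2 h3 => ?_⟩
  have hy : ∀ x ∈ y :: l, x = y := by simpa using h2
  have : cobd f (y :: l) = 0 := h (y :: l) (by simpa using h1) hy fun x hx x' hx' => by
    rw [hy x hx, hy x' hx']; exact refl_mem_uniformity hV
  rw [cobd_cons] at this
  exact sub_eq_zero.1 this

theorem strip_flag_top (I : Finset (Fin n)) (y : Fin n → Sph m) (i : Fin n) :
    strip I y i (flag m (m + 1)) = box (insert i I) y := by
  rw [flag_top, strip_univ]

theorem acyclic_box (I : Finset (Fin n)) : ∀ (y : Fin n → Sph m) (k : ℕ), k ≤ m →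
    Acyclic M (box I y) k := by
  induction I using Finset.induction_on with
  | empty =>
    intro y k _ f hf
    rw [box_empty] at hf ⊢
    exact ⟨_, exact_point y hf⟩
  | insert i I hi ih =>
    intro y k hk f hf
    rw [← strip_flag_top] at hf ⊢
    obtain ⟨c, h, hc, hh⟩ := strip_class ih hi (m + 1) le_rfl k (by omega) f hf fun u _ => by
      rw [strip_singleton y hi]
      refine ih _ k hk _ ?_
      rw [← strip_singleton y hi]
      exact small_mono (strip_mono (by simp [flag_top])) _ hf
    refine ⟨h, ?_⟩
    filter_upwards [hh] with l hl
    rw [hl, hc (by omega)]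
    simp [sc_apply]

theorem acyclic_univ {k : ℕ} (hk : k ≤ m) :
    Acyclic M (Set.univ : Set (Fin n → Sph m)) k := by
  have := acyclic_box (M := M) Finset.univ (fun _ : Fin n => pole (0 : Fin (m + 1))) k hk
  rwa [box_univ] at this

theorem cobd_lam (i : Fin n) (S : Set (Fin n → Sph m)) :
    cobd (lam m (m + 1) i) =ᶠ[small S (m + 1 + 1)] 0 := by
  obtain ⟨-, h⟩ := zz_spec (m := m) (m + 1) le_rfl
  rw [lam, cobd_pull]
  have := pull_congr (eval_uniform i).uniformContinuousOn (S := S) (by simp [flag_top]) h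
  filter_upwards [this] with l hl
  rw [hl]; rfl

theorem cobd_sum_lam (I : Finset (Fin n)) (c : Fin n → ℤ) (S : Set (Fin n → Sph m)) :
    cobd (∑ i ∈ I, c i • lam m (m + 1) i) =ᶠ[small S (m + 1 + 1)] 0 := by
  have : ∀ᶠ l in small S (m + 1 + 1), ∀ i, cobd (lam m (m + 1) i) l = 0 :=
    eventually_all.2 fun i => cobd_lam i S
  filter_upwards [this] with l hl
  rw [map_sum]
  simp only [map_zsmul, Finset.sum_apply, Pi.smul_apply, hl, smul_zero, Finset.sum_const_zero,
    Pi.zero_apply]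

theorem exact_of_exact_slice {I : Finset (Fin n)} {y : Fin n → Sph m} {i : Fin n} (hi : i ∉ I)
    (hm : 1 ≤ m) {k : ℕ} {f : List (Fin n → Sph m) → M}
    (hf : cobd f =ᶠ[small (strip I y i Set.univ) (k + 1)] 0)
    (h0 : ∃ h, f =ᶠ[small (strip I y i {pole 0}) k] cobd h) (u : Sph m) :
    ∃ h, f =ᶠ[small (strip I y i {u}) k] cobd h := by
  have move : ∀ v w : Sph m, w ≠ -v → (∃ h, f =ᶠ[small (strip I y i {v}) k] cobd h) →
      ∃ h, f =ᶠ[small (strip I y i {w}) k] cobd h := by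
    rintro v w hvw ⟨h, hh⟩
    obtain ⟨h', -, -, hh'⟩ := deform_cap (g := 0) (K := {w}) isClosed_singleton
      (fun e => hvw (Set.mem_singleton_iff.1 e).symm) (fun _ _ => Set.mapsTo_univ _ _) hf
      (Set.empty_subset _) hi (germInv_empty _ _ _) (by rwa [zero_add])
      fun _ _ => germInv_empty _ _ _
    exact ⟨h', by simpa using hh'⟩
  have hlast : (0 : Fin (m + 1)) ≠ Fin.last m := by
    intro h
    have := congrArg Fin.val h
    simp at this
    omega
  by_cases hu : u = -pole 0
  · refine move (pole (Fin.last m)) u ?_ (move (pole 0) _ ?_ h0)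
    · intro h
      rw [hu] at h
      have := congrArg (fun v : Sph m => v.1 0) h
      simp [hlast] at this
    · intro h
      have := congrArg (fun v : Sph m => v.1 0) h
      simp [hlast] at this
  · exact move _ u hu h0

theorem top_class_box (hm : 1 ≤ m) (I : Finset (Fin n)) : ∀ (y : Fin n → Sph m)
    (f : List (Fin n → Sph m) → ℤ), cobd f =ᶠ[small (box I y) (m + 1 + 1)] 0 →
    ∃ (c : Fin n → ℤ) (h : List (Fin n → Sph m) → ℤ),
      f =ᶠ[small (box I y) (m + 1)] (∑ i ∈ I, c i • lam m (m + 1) i) + cobd h := by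
  induction I using Finset.induction_on with
  | empty =>
    intro y f hf
    rw [box_empty] at hf ⊢
    exact ⟨0, _, by simpa using exact_point y hf⟩
  | insert i I hi ih =>
    intro y f hf
    rw [← strip_univ] at hf
    have hf0 := small_mono (strip_mono (Set.subset_univ {pole (0 : Fin (m + 1))})) _ hf
    rw [strip_singleton y hi] at hf0
    obtain ⟨c, h, hch⟩ := ih _ f hf0
    set f' := f - ∑ i ∈ I, c i • lam m (m + 1) i with hf'
    have hcf' : cobd f' =ᶠ[small (strip I y i Set.univ) (m + 1 + 1)] 0 := by
      filter_upwards [hf, cobd_sum_lam I c _] with l h1 h2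
      rw [hf', map_sub, Pi.sub_apply, h1, h2, sub_self]
      rfl
    obtain ⟨c₁, h₁, -, hh₁⟩ := strip_class (y := y) (acyclic_box I) hi (m + 1) le_rfl (m + 1) le_rfl
      f' (by rwa [flag_top]) fun u _ => exact_of_exact_slice hi hm hcf' (by
        rw [strip_singleton y hi]
        refine ⟨h, ?_⟩
        filter_upwards [hch] with l hl
        rw [hf', Pi.sub_apply, hl, Pi.add_apply]
        abel) u
    refine ⟨Function.update c i c₁, h₁, ?_⟩
    rw [← strip_flag_top]
    filter_upwards [hh₁] with l hl
    have e : ∑ l ∈ I, Function.update c i c₁ l • lam m (m + 1) l =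
        ∑ i ∈ I, c i • lam m (m + 1) i := by
      refine Finset.sum_congr rfl fun l hlI => ?_
      rw [Function.update_of_ne (by rintro rfl; exact hi hlI)]
    rw [Finset.sum_insert hi, e, Function.update_self]
    rw [hf', Pi.sub_apply, Pi.add_apply, sc_apply, smul_eq_mul, sub_eq_iff_eq_add] at hl
    rw [hl]
    simp only [Pi.add_apply, Pi.smul_apply, smul_eq_mul]
    ring

/-- The integral combination of the top classes of the factors. -/
def topc (m : ℕ) (c : Fin n → ℤ) : List (Fin n → Sph m) → ℤ := ∑ i, c i • lam m (m + 1) i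

theorem topc_class (hm : 1 ≤ m) (f : List (Fin n → Sph m) → ℤ)
    (hf : cobd f =ᶠ[small Set.univ (m + 1 + 1)] 0) :
    ∃ (c : Fin n → ℤ) (h : List (Fin n → Sph m) → ℤ),
      f =ᶠ[small Set.univ (m + 1)] topc m c + cobd h := by
  have := top_class_box hm Finset.univ (fun _ : Fin n => pole (0 : Fin (m + 1))) f
  rw [box_univ] at this
  exact this hf

theorem cobd_topc (c : Fin n → ℤ) :
    cobd (topc m c) =ᶠ[small Set.univ (m + 1 + 1)] 0 := cobd_sum_lam _ c _

theorem topc_add (c d : Fin n → ℤ) : topc m (c + d) = topc m c + topc m d := by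
  simp [topc, add_smul, Finset.sum_add_distrib]

theorem topc_zsmul (z : ℤ) (c : Fin n → ℤ) : topc m (z • c) = z • topc m c := by
  simp [topc, Finset.smul_sum, mul_smul]

theorem topc_sub (c d : Fin n → ℤ) : topc m (c - d) = topc m c - topc m d := by
  simp [topc, sub_smul, Finset.sum_sub_distrib]

end TopClass

/-! ### Products of germs -/

section Mul

variable {X : Type*}

/-- Multiply a cochain by a function of the first point; zero on the empty list. -/
def mulHead (D : X → ZMod 2) : (List X → ZMod 2) →+ (List X → ZMod 2) :=
  AddMonoidHom.mk' (fun u l => (l.head?.elim 0 D) * u l) fun u v => by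
    funext l; simp [mul_add]

@[simp] theorem mulHead_nil (D : X → ZMod 2) (u : List X → ZMod 2) : mulHead D u [] = 0 := by
  simp [mulHead]

theorem mulHead_cons (D : X → ZMod 2) (u : List X → ZMod 2) (x : X) (l : List X) :
    mulHead D u (x :: l) = D x * u (x :: l) := rfl

theorem cobd_mulHead_cons (D : X → ZMod 2) (u : List X → ZMod 2) (x : X) (l : List X) :
    cobd (mulHead D u) (x :: l) = mulHead D u l - D x * (u l - cobd u (x :: l)) := by
  rw [cobd_cons, cobd_cons, sub_sub_cancel]
  congr 1
  exact congrFun (cobd_comp_hom (AddMonoidHom.mulLeft (D x)) fun l' => u (x :: l')) l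

theorem mulHead_map {D : X → ZMod 2} {γ : X → X} {c : ZMod 2} (hD : ∀ x, D (γ x) = D x + c)
    {u : List X → ZMod 2} {l : List X} (hu : u (l.map γ) = u l) (h0 : l ≠ [] ∨ u [] = 0) :
    mulHead D u (l.map γ) = mulHead D u l + c * u l := by
  cases l with
  | nil =>
    have : u [] = 0 := by simpa using h0
    simp [this]
  | cons x l =>
    rw [List.map_cons] at hu ⊢
    rw [mulHead_cons, mulHead_cons, hu, hD, add_mul]

end Mul

theorem glue_map {X N : Type*} {S : Set X} {f : List X → N} {c : N} {γ : X → X}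
    (hS : ∀ x, γ x ∈ S ↔ x ∈ S) {l : List X} (h : (∀ x ∈ l, x ∈ S) → f (l.map γ) = f l) :
    glue S f (fun _ => c) (l.map γ) = glue S f (fun _ => c) l := by
  unfold glue
  have : (∀ x ∈ l.map γ, x ∈ S) ↔ ∀ x ∈ l, x ∈ S := by
    simp only [List.mem_map, forall_exists_index, and_imp, forall_apply_eq_imp_iff₂, hS]
  by_cases h0 : ∀ x ∈ l, x ∈ S
  · rw [if_pos h0, if_pos (this.2 h0), h h0]
  · rw [if_neg h0, if_neg (fun h1 => h0 (this.1 h1))]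

section Good

variable {X M : Type*} [UniformSpace X] [AddCommGroup M]

theorem GermInv.cobd {Γ : Set (X → X)} {S : Set X} {k : ℕ} {f : List X → M}
    (h : GermInv Γ S k f) : GermInv Γ S (k + 1) (cobd f) := by
  obtain ⟨V, hV, h⟩ := h
  refine ⟨V, hV, fun l h1 h2 h3 γ hγ => ?_⟩
  have := congrFun (cobd_pull γ f) l
  rw [pull_apply] at this
  rw [← this]
  exact cobd_congr_of_sublist l fun l' hs hl => h l' (by omega)
    (fun x hx => h2 x (hs.subset hx)) (fun x hx y hy => h3 x (hs.subset hx) y (hs.subset hy)) γ hγ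

theorem GermInv.congr {N : Type*} {Γ : Set (X → X)} {S : Set X} {k : ℕ} {f g : List X → N}
    (h : GermInv Γ S k f) (hfin : Γ.Finite) (hΓ : ∀ γ ∈ Γ, UniformContinuousOn γ S)
    (hS : ∀ γ ∈ Γ, Set.MapsTo γ S S) (hfg : f =ᶠ[small S k] g) : GermInv Γ S k g := by
  have : ∀ᶠ l in small S k, ∀ γ ∈ Γ, f (l.map γ) = g (l.map γ) :=
    (eventually_all_finite hfin).2 fun γ hγ =>
      (tendsto_map_small (hΓ γ hγ) (hS γ hγ) k).eventually hfg
  filter_upwards [h, hfg, this] with l h1 h2 h3 γ hγ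
  rw [← h3 γ hγ, h1 γ hγ, h2]

/-- A cocycle on the whole space that is invariant under `Γ`. -/
def InvCocycle (Γ : Set (X → X)) (k : ℕ) (P : List X → M) : Prop :=
  cobd P =ᶠ[small Set.univ (k + 1)] 0 ∧ GermInv Γ Set.univ k P

theorem InvCocycle.add {Γ : Set (X → X)} {k : ℕ} {P Q : List X → M} (hP : InvCocycle Γ k P)
    (hQ : InvCocycle Γ k Q) : InvCocycle Γ k (P + Q) := by
  refine ⟨?_, hP.2.add hQ.2⟩
  filter_upwards [hP.1, hQ.1] with l h1 h2
  rw [map_add, Pi.add_apply, h1, h2, Pi.zero_apply, add_zero]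

theorem InvCocycle.cobd_mulHead {Γ : Set (X → X)} {k : ℕ} {P : List X → ZMod 2}
    (hP : InvCocycle Γ k P) (hk : 1 ≤ k) {D : X → ZMod 2}
    (hD : ∀ γ ∈ Γ, ∃ c, ∀ x, D (γ x) = D x + c) : InvCocycle Γ (k + 1) (cobd (mulHead D P)) := by
  refine ⟨by rw [cobd_cobd], ?_⟩
  obtain ⟨⟨V, hV, h⟩, ⟨W, hW, h'⟩⟩ := hP
  refine ⟨V ∩ W, inter_mem hV hW, fun l h1 h2 h3 γ hγ => ?_⟩
  obtain ⟨c, hc⟩ := hD γ hγ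
  have e0 : cobd P l = 0 := h l h1 h2 fun x hx y hy => (h3 x hx y hy).1
  have e1 : cobd (mulHead D P) (l.map γ) = cobd (pull γ (mulHead D P)) l := by
    rw [cobd_pull]; rfl
  have e2 : cobd (fun l => c * P l) l = c * cobd P l :=
    congrFun (cobd_comp_hom (AddMonoidHom.mulLeft c) P) l
  have e3 : cobd (pull γ (mulHead D P)) l = cobd (mulHead D P + fun l => c * P l) l := by
    refine cobd_congr_of_sublist l fun l' hs hl => ?_
    refine mulHead_map hc (h' l' (by omega) (fun x hx => h2 x (hs.subset hx))
      (fun x hx y hy => (h3 x (hs.subset hx) y (hs.subset hy)).2) γ hγ) (Or.inl ?_)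
    rintro rfl
    simp at hl
    omega
  rw [e1, e3, map_add, Pi.add_apply, e2, e0, mul_zero, add_zero]

theorem GermInv.mulHead {Γ : Set (X → X)} {S : Set X} {k : ℕ} {h : List X → ZMod 2}
    (hh : GermInv Γ S k h) {D : X → ZMod 2} (hD : ∀ γ ∈ Γ, ∀ x, D (γ x) = D x) :
    GermInv Γ S k (mulHead D h) := by
  filter_upwards [hh] with l hl γ hγ
  cases l with
  | nil => rfl
  | cons x l =>
    have := hl γ hγ
    rw [List.map_cons] at this ⊢
    rw [mulHead_cons, mulHead_cons, this, hD γ hγ]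

theorem GermInv.extend_zero {Γ : Set (X → X)} {S : Set X} {k : ℕ} {f : List X → M}
    (hf : GermInv Γ S k f) (hS : ∀ γ ∈ Γ, ∀ x, γ x ∈ S ↔ x ∈ S) :
    GermInv Γ Set.univ k (glue S f fun _ => 0) := by
  obtain ⟨V, hV, h⟩ := hf
  exact ⟨V, hV, fun l h1 _ h3 γ hγ => glue_map (hS γ hγ) fun h2 => h l h1 h2 h3 γ hγ⟩

end Good

/-! ### Equivariant vanishing -/

section Equivariant

variable {m n : ℕ} {I : Finset (Fin n)} {y : Fin n → Sph m} {i : Fin n}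

theorem act_uniform (a : Fin n → ZMod 2) (S : Set (Fin n → Sph m)) :
    UniformContinuousOn (act a) S :=
  (CompactSpace.uniformContinuous_of_continuous (continuous_act a)).uniformContinuousOn

theorem signs_mono {I J : Finset (Fin n)} (h : I ⊆ J) : signs (m := m) I ⊆ signs J :=
  fun _ ⟨a, ha, e⟩ => ⟨a, fun i hi => ha i fun h' => hi (h h'), e⟩

theorem germInv_insert {M : Type*} [AddCommGroup M] {S : Set (Fin n → Sph m)}
    {k : ℕ} {f : List (Fin n → Sph m) → M}
    (hS : Set.MapsTo (act (Pi.single i 1)) S S)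
    (hf : GermInv (signs I) S k f) (h : pull (act (Pi.single i 1)) f =ᶠ[small S k] f) :
    GermInv (signs (insert i I)) S k f := by
  filter_upwards [hf, (tendsto_map_small (act_uniform _ S) hS k).eventually hf, h] with l h1 h2 h3
  rintro γ ⟨b, hb, rfl⟩
  by_cases hbi : b i = 0
  · refine h1 _ ⟨b, fun l hl => ?_, rfl⟩
    by_cases hli : l = i
    · rwa [hli]
    · exact hb l (by simp [hli, hl])
  · have hbi : b i = 1 := by
      generalize b i = z at hbi
      decide +revert
    have e : l.map (act b) = (l.map (act (Pi.single i 1))).map (act (b - Pi.single i 1)) := by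
      simp only [List.map_map]
      refine List.map_congr_left fun x _ => ?_
      rw [Function.comp_apply, ← act_add, sub_add_cancel]
    rw [e, h2 _ ⟨_, fun l hl => ?_, rfl⟩]
    · exact h3
    · by_cases hli : l = i
      · simp [hli, hbi]
      · simp [hli, hb l (by simp [hli, hl])]

theorem GermInv.pull_act {M : Type*} [AddCommGroup M] {S T : Set (Fin n → Sph m)}
    {k : ℕ} {f : List (Fin n → Sph m) → M} (hf : GermInv (signs I) T k f) {a : Fin n → ZMod 2}
    (hS : Set.MapsTo (act a) S T) : GermInv (signs I) S k (pull (act a) f) := by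
  filter_upwards [(tendsto_map_small (act_uniform _ S) hS k).eventually hf] with l h
  rintro γ ⟨b, hb, rfl⟩
  rw [pull_apply, pull_apply, ← h _ ⟨b, hb, rfl⟩, List.map_map, List.map_map]
  congr 1
  exact List.map_congr_left fun x _ => act_comm _ _ _

theorem pull_act_act {M : Type*} [AddCommGroup M] (a : Fin n → ZMod 2)
    (f : List (Fin n → Sph m) → M) : pull (act a) (pull (act a) f) = f := by
  funext l
  rw [pull_apply, pull_apply, List.map_map]
  congr 1
  conv_rhs => rw [← List.map_id l]
  exact List.map_congr_left fun x _ => act_act _ _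

theorem pull_mulHead {X : Type*} [UniformSpace X] {S : Set X} {k : ℕ} {γ : X → X}
    {D : X → ZMod 2} (hD : ∀ x, D (γ x) = D x + 1) {f : List X → ZMod 2}
    (hf : pull γ f =ᶠ[small S k] f) (h0 : f [] = 0 ∨ k ≠ 0) :
    pull γ (mulHead D f) =ᶠ[small S k] mulHead D f + f := by
  filter_upwards [hf, eventually_small_of_forall fun l hl _ => hl] with l h1 h2
  rw [pull_apply, mulHead_map hD h1, one_mul, Pi.add_apply]
  rcases h0 with h0 | h0
  · exact Or.inr h0
  · exact Or.inl fun e => h0 (by rw [← h2, e]; rfl)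

theorem GermInv.pull_eq {X M : Type*} [UniformSpace X] [AddCommGroup M] {Γ : Set (X → X)}
    {S : Set X} {k : ℕ} {f : List X → M} (h : GermInv Γ S k f) {γ : X → X} (hγ : γ ∈ Γ) :
    pull γ f =ᶠ[small S k] f := by
  filter_upwards [h] with l hl using hl γ hγ

theorem act_single_mapsTo {K L : Set (Sph m)} (h : ∀ u ∈ K, -u ∈ L) :
    Set.MapsTo (act (Pi.single i 1)) (strip I y i K) (strip I y i L) := by
  rintro x ⟨h1, h2⟩
  exact ⟨by simpa [act] using h _ h1, fun l hl hli => by simp [act, hli, h2 l hl hli]⟩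

theorem act_mem_band {b : Fin n → ZMod 2} (hb : ∀ l, l ∉ insert i I → b l = 0) (j : Fin (m + 1))
    (x : Fin n → Sph m) : act b x ∈ strip I y i (band j) ↔ x ∈ strip I y i (band j) := by
  have key : ∀ x ∈ strip I y i (band j), act b x ∈ strip I y i (band j) := by
    rintro x ⟨h1, h2⟩
    refine ⟨?_, fun l hl hli => by simp [act, hb l (by simp [hl, hli]), h2 l hl hli]⟩
    rw [act]
    split_ifs
    · exact h1
    · exact ⟨neg_mem_flag h1.1, by simpa using h1.2⟩
  exact ⟨fun h => act_act b x ▸ key _ h, key x⟩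

theorem signs_finite (I : Finset (Fin n)) : (signs (m := m) I).Finite :=
  (Set.finite_range fun a : Fin n → ZMod 2 => act (m := m) a).subset fun _ ⟨a, _, e⟩ => ⟨a, e.symm⟩

theorem GermInv.congr_strip {N : Type*} {K : Set (Sph m)} {k : ℕ} {f g : List (Fin n → Sph m) → N}
    (hi : i ∉ I) (h : GermInv (signs I) (strip I y i K) k f)
    (hfg : f =ᶠ[small (strip I y i K) k] g) : GermInv (signs I) (strip I y i K) k g := by
  refine h.congr (signs_finite I) ?_ ?_ hfg
  · rintro γ ⟨b, -, rfl⟩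
    exact act_uniform b _
  · rintro γ ⟨b, hb, rfl⟩ x ⟨h1, h2⟩
    exact ⟨by simpa [act, hb i hi] using h1, fun l hl hli => by simp [act, hb l hl, h2 l hl hli]⟩

private theorem zmod_two_aux : ∀ a b c d u v : ZMod 2, a + b - u = v →
    a - c - d = b - (c + u) - (d + v) := by decide

/-- An invariant cocycle on `S` is an everywhere defined invariant cocycle, up to an invariant
coboundary. -/
def Extends (Γ Δ : Set ((Fin n → Sph m) → (Fin n → Sph m))) (S : Set (Fin n → Sph m)) (k : ℕ)
    (f : List (Fin n → Sph m) → ZMod 2) : Prop :=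
  ∃ P h : List (Fin n → Sph m) → ZMod 2, InvCocycle Γ k P ∧ h [] = 0 ∧
    (∀ j, j + 1 = k → GermInv Δ S j h) ∧ f =ᶠ[small S k] P + cobd h

theorem extends_strip {Γ : Set ((Fin n → Sph m) → (Fin n → Sph m))}
    (hΓ : signs Finset.univ ⊆ Γ) {D : (Fin n → Sph m) → ZMod 2}
    (hDa : ∀ a x, D (act a x) = D x + a i) (hDΓ : ∀ γ ∈ Γ, ∃ c, ∀ x, D (γ x) = D x + c)
    (hi : i ∉ I) (ih : ∀ y k, 1 ≤ k → ∀ f, cobd f =ᶠ[small (box I y) (k + 1)] 0 →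
      GermInv (signs I) (box I y) k f → Extends Γ (signs I) (box I y) k f) (j : ℕ) :
    j ≤ m + 1 → ∀ k, 1 ≤ k → ∀ f, cobd f =ᶠ[small (strip I y i (flag m j)) (k + 1)] 0 →
      GermInv (signs (insert i I)) (strip I y i (flag m j)) k f →
      Extends Γ (signs (insert i I)) (strip I y i (flag m j)) k f := by
  induction j with
  | zero =>
    intro _ k hk f _ _
    refine ⟨0, 0, ⟨by simp, Eventually.of_forall fun _ _ _ => rfl⟩, rfl,
      fun _ _ => Eventually.of_forall fun _ _ _ => rfl, ?_⟩
    refine eventually_small_of_forall fun l hl h => ?_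
    rw [flag_zero, strip_empty] at h
    cases l with
    | nil => simp at hl; omega
    | cons x l => exact absurd (h x (by simp)) (Set.notMem_empty x)
  | succ j ihj =>
    intro hj k hk f hf hinv
    have hv := ofNat_val (m := m) (j := j) (by omega)
    set jj := Fin.ofNat (m + 1) j with hjj
    rw [← hv] at hf hinv ⊢
    set S := strip I y i (flag m (jj + 1)) with hS
    set U := strip I y i (flag m (jj + 1) ∩ {u | -(1 / 2) ≤ u.1 jj}) with hU
    set N := strip I y i (flag m (jj + 1) ∩ {u | u.1 jj ≤ 1 / 2}) with hN
    set W := strip I y i (band jj) with hW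
    set e : Fin n → ZMod 2 := Pi.single i 1 with he
    have hei : e i = 1 := by simp [he]
    have heI : act e ∈ signs (m := m) (insert i I) := by
      refine ⟨e, fun l hl => ?_, rfl⟩
      rw [he, Pi.single_eq_of_ne]
      rintro rfl
      simp at hl
    have hUN : Set.MapsTo (act e) U N := act_single_mapsTo fun u hu => ⟨neg_mem_flag hu.1, by
      have : -(1 / 2) ≤ u.1 jj := hu.2
      simp only [Set.mem_ofPred_eq, Sph.neg_apply]; linarith⟩
    have hNU : Set.MapsTo (act e) N U := act_single_mapsTo fun u hu => ⟨neg_mem_flag hu.1, by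
      have : u.1 jj ≤ 1 / 2 := hu.2
      simp only [Set.mem_ofPred_eq, Sph.neg_apply]; linarith⟩
    have hSS : Set.MapsTo (act e) S S := act_single_mapsTo fun u hu => neg_mem_flag hu
    have hWW : Set.MapsTo (act e) W W := fun x hx =>
      (act_mem_band (fun l hl => by
        rw [he, Pi.single_eq_of_ne]; rintro rfl; simp at hl) jj x).2 hx
    have hUS : U ⊆ S := strip_mono Set.inter_subset_left
    have hNS : N ⊆ S := strip_mono Set.inter_subset_left
    have hUNW : U ∩ N ⊆ W := strip_inter_band jj
    have hWU : W ⊆ U := strip_mono fun u hu =>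
      ⟨hu.1, show -(1 / 2) ≤ u.1 jj from (abs_le.1 hu.2).1⟩
    have hcov : ∀ k, small S k ≤ small U k ⊔ small N k := fun k => small_strip_le _ jj k
    have hII : signs (m := m) I ⊆ signs (insert i I) := signs_mono (Finset.subset_insert i I)
    have hIΓ : ∀ I, signs (m := m) (n := n) I ⊆ Γ := fun I =>
      (signs_mono (Finset.subset_univ I)).trans hΓ
    -- the slice over the pole
    have hpole : strip I y i {pole jj} ⊆ S :=
      strip_mono (Set.singleton_subset_iff.2 (pole_mem_flag jj))
    obtain ⟨P, h₀, hP, h₀0, h₀i, h₀e⟩ := ih (Function.update y i (pole jj)) k hk f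
      (strip_singleton y hi (pole jj) ▸ small_mono hpole _ hf)
      (strip_singleton y hi (pole jj) ▸ hinv.mono hII hpole)
    rw [← strip_singleton y hi] at h₀i h₀e
    have hf'c : cobd (f - P) =ᶠ[small S (k + 1)] 0 := by
      filter_upwards [hf, small_mono (Set.subset_univ S) _ hP.1] with l h1 h2
      rw [map_sub, Pi.sub_apply, h1, h2, sub_self]; rfl
    have hf'i : GermInv (signs (insert i I)) S k (f - P) :=
      hinv.sub (hP.2.mono (hIΓ _) (Set.subset_univ S))
    obtain ⟨h, hh0, hhi, hhe⟩ := deform_cap (I := I) (y := y) (i := i) (g := 0) (h := h₀)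
      (J := flag m (jj + 1)) (K := flag m (jj + 1) ∩ {u | -(1 / 2) ≤ u.1 jj}) (v := pole jj)
      ((isClosed_flag _).inter (isClosed_le continuous_const (continuous_coord jj)))
      (by
        rintro ⟨-, h⟩
        simp only [Set.mem_ofPred_eq, Sph.neg_apply, pole_apply, if_true] at h
        norm_num at h)
      (fun t ht u hu => seg_mem_flag (pole_mem_flag jj) hu.1 (by
        rintro rfl
        have := hu.2
        simp only [Set.mem_ofPred_eq, Sph.neg_apply, pole_apply, if_true] at this
        norm_num at this) ht) hf'c (subset_refl (signs I)) hi (hf'i.mono hII subset_rfl)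
      (by
        filter_upwards [h₀e] with l hl
        rw [Pi.sub_apply, hl, Pi.add_apply, zero_add]; abel) h₀i
    rw [map_zero, zero_add] at hhe
    rw [h₀0] at hh0
    have hhN : f - P =ᶠ[small N k] cobd (pull (act e) h) := by
      filter_upwards [(tendsto_map_small (act_uniform e N) hNU k).eventually hhe,
        small_mono hNS k (hf'i.pull_eq heI)] with l h1 h2
      rw [← h2, pull_apply, h1, cobd_pull, pull_apply]
    obtain ⟨k, rfl⟩ : ∃ k', k = k' + 1 := ⟨k - 1, by omega⟩
    obtain rfl | hk0 := Nat.eq_zero_or_pos k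
    · have hz : ∀ h : List (Fin n → Sph m) → ZMod 2, h [] = 0 → ∀ S,
          cobd h =ᶠ[small S 1] 0 := fun h h0 S => by
        refine eventually_small_of_forall fun l hl _ => ?_
        obtain ⟨x, rfl⟩ := List.length_eq_one_iff.1 hl
        simp [cobd_cons, h0]
      refine ⟨P, 0, hP, rfl, fun _ _ => Eventually.of_forall fun _ _ _ => rfl, hcov _ ⟨?_, ?_⟩⟩
      · filter_upwards [hhe, hz h hh0 U] with l h1 h2
        rw [h2, Pi.sub_apply, Pi.zero_apply, sub_eq_zero] at h1
        simp [h1]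
      · filter_upwards [hhN, hz (pull (act e) h) (by simpa using hh0) N] with l h1 h2
        rw [h2, Pi.sub_apply, Pi.zero_apply, sub_eq_zero] at h1
        simp [h1]
    have hhi := hhi k rfl
    -- the difference on the band
    set s := h + pull (act e) h with hs
    have hsc : cobd s =ᶠ[small W (k + 1)] 0 := by
      filter_upwards [small_mono hWU _ hhe,
        small_mono (show W ⊆ N from fun x hx => act_act e x ▸ hUN (hWU (hWW hx))) _ hhN]
        with l h1 h2
      rw [hs, map_add, Pi.add_apply, ← h1, ← h2]
      exact CharTwo.add_self_eq_zero _
    have hsi : GermInv (signs (insert i I)) W k s := by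
      refine germInv_insert hWW ((hhi.mono subset_rfl hWU).add
        (hhi.pull_act fun x hx => hWU (hWW hx))) (Eventually.of_forall fun l => ?_)
      rw [hs, map_add, pull_act_act, add_comm]
    have hFW : strip I y i (flag m j) ⊆ W := strip_mono (hv ▸ flag_subset_band jj)
    obtain ⟨P', h₁, hP', h₁0, h₁i, h₁e⟩ := ihj (by omega) k hk0 s (small_mono hFW _ hsc)
      (hsi.mono subset_rfl hFW)
    obtain ⟨h₂, h₂0, h₂i, h₂e⟩ := deform_band (I := I) (y := y) (i := i) (f := s - P') (g := 0)
      (h := h₁) jj (k := k) (Γ := signs (insert i I)) (by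
        filter_upwards [hsc, small_mono (Set.subset_univ W) _ hP'.1] with l h1 h2
        rw [map_sub, Pi.sub_apply, h1, h2, sub_self]; rfl) subset_rfl
      (hsi.sub (hP'.2.mono (hIΓ _) (Set.subset_univ W))) (by
        rw [hv]
        filter_upwards [h₁e] with l hl
        rw [Pi.sub_apply, hl, Pi.add_apply, zero_add]; abel) (by rwa [hv])
    rw [map_zero, zero_add] at h₂e
    rw [h₁0] at h₂0
    set q := glue W h₂ fun _ => 0 with hq
    have hq0 : q [] = 0 := by simp [hq, glue, h₂0]
    have hqe : s - P' =ᶠ[small W k] cobd q := by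
      obtain ⟨k', rfl⟩ : ∃ k', k = k' + 1 := ⟨k - 1, by omega⟩
      filter_upwards [h₂e, cobd_congr (glue_left W h₂ (fun _ => 0) k')] with l h1 h2
      rw [h1, hq, h2]
    have hqi : ∀ j', j' + 1 = k → GermInv (signs (insert i I)) Set.univ j' q := fun j' hj' => by
      refine (h₂i j' hj').extend_zero ?_
      rintro γ ⟨b, hb, rfl⟩ x
      exact act_mem_band hb jj x
    have hD1 : ∀ x, D (act e x) = D x + 1 := fun x => by rw [hDa, hei]
    have hDI : ∀ γ ∈ signs (m := m) I, ∀ x, D (γ x) = D x := by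
      rintro γ ⟨b, hb, rfl⟩ x
      rw [hDa, hb i hi, add_zero]
    have hPe : pull (act e) (mulHead D P') =ᶠ[small Set.univ k] mulHead D P' + P' :=
      pull_mulHead hD1 (hP'.2.pull_eq (hIΓ _ heI)) (Or.inr (by omega))
    have hQe : cobd (pull (act e) (mulHead D q)) =ᶠ[small Set.univ k] cobd (mulHead D q + q) := by
      obtain ⟨k', rfl⟩ : ∃ k', k = k' + 1 := ⟨k - 1, by omega⟩
      exact cobd_congr (pull_mulHead hD1 ((hqi k' rfl).pull_eq heI) (Or.inl hq0))
    set h₃ := h - mulHead D P' - cobd (mulHead D q) with hh₃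
    have h₃0 : h₃ [] = 0 := by simp [hh₃, hh0]
    have h₃i : GermInv (signs I) U k h₃ := by
      refine (hhi.sub ((hP'.2.mono (hIΓ _) (Set.subset_univ U)).mulHead hDI)).sub ?_
      obtain ⟨k', rfl⟩ : ∃ k', k = k' + 1 := ⟨k - 1, by omega⟩
      exact (((hqi k' rfl).mono hII (Set.subset_univ U)).mulHead hDI).cobd
    have h₃W : h₃ =ᶠ[small W k] pull (act e) h₃ := by
      filter_upwards [small_mono (Set.subset_univ W) _ hPe, small_mono (Set.subset_univ W) _ hQe,
        hqe] with l h1 h2 h3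
      rw [hh₃, map_sub, map_sub, Pi.sub_apply, Pi.sub_apply, Pi.sub_apply, Pi.sub_apply, h1,
        ← cobd_pull, h2, map_add, Pi.add_apply, Pi.add_apply]
      rw [hs, Pi.sub_apply, Pi.add_apply] at h3
      exact zmod_two_aux _ _ _ _ _ _ h3
    set h₄ := glue U h₃ (pull (act e) h₃) with hh₄
    have h₄U : h₄ =ᶠ[small U k] h₃ := glue_left U _ _ k
    have h₄N : h₄ =ᶠ[small N k] pull (act e) h₃ := glue_right (small_mono hUNW k h₃W)
    have h₄i : GermInv (signs (insert i I)) S k h₄ := by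
      refine germInv_insert hSS (hcov k ⟨?_, ?_⟩) (hcov k ⟨?_, ?_⟩)
      · exact h₃i.congr_strip hi h₄U.symm
      · exact (h₃i.pull_act hNU).congr_strip hi h₄N.symm
      · filter_upwards [(tendsto_map_small (act_uniform e U) hUN k).eventually h₄N, h₄U]
            with l h1 h2
        rw [pull_apply, h1, h2]
        exact congrFun (pull_act_act e h₃) l
      · filter_upwards [(tendsto_map_small (act_uniform e N) hNU k).eventually h₄U, h₄N]
            with l h1 h2
        rw [pull_apply, h1, h2, pull_apply]
    refine ⟨P + cobd (mulHead D P'), h₄, hP.add (hP'.cobd_mulHead hk0 hDΓ), ?_, ?_, ?_⟩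
    · simp [hh₄, glue, h₃0]
    · rintro j' hj'
      obtain rfl : j' = k := by omega
      exact h₄i
    · have hDP : pull (act e) (cobd (mulHead D P')) =ᶠ[small Set.univ (k + 1)]
          cobd (mulHead D P') := (hP'.cobd_mulHead hk0 hDΓ).2.pull_eq (hIΓ _ heI)
      have hU3 : f =ᶠ[small U (k + 1)] P + cobd (mulHead D P') + cobd h₃ := by
        filter_upwards [hhe] with l h1
        rw [hh₃, map_sub, map_sub, cobd_cobd, Pi.add_apply, Pi.add_apply, Pi.sub_apply,
          Pi.sub_apply, ← h1]
        simp
      refine hcov _ ⟨?_, ?_⟩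
      · filter_upwards [hU3, cobd_congr h₄U] with l h1 h2
        rw [h1, Pi.add_apply, Pi.add_apply (P + _), h2]
      · filter_upwards [cobd_congr h₄N, (tendsto_map_small (act_uniform e N) hNU _).eventually hU3,
          small_mono hNS _ (hinv.pull_eq heI),
          small_mono (Set.subset_univ N) _ (hP.2.pull_eq (hIΓ _ heI)),
          small_mono (Set.subset_univ N) _ hDP] with l h1 h2 h3 h4 h5
        rw [pull_apply] at h3 h4 h5
        rw [← h3, h2, Pi.add_apply, Pi.add_apply, Pi.add_apply, Pi.add_apply, h4, h5, h1,
          cobd_pull, pull_apply]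

end Equivariant

/-! ### Free actions of elementary abelian 2-groups extending the sign group -/

theorem exists_flip {E X : Type*} [AddGroup E] (ρ : E → X → X) (h0 : ∀ x, ρ 0 x = x)
    (hadd : ∀ g h x, ρ (g + h) x = ρ g (ρ h x)) (hfree : ∀ g x, ρ g x = x → g = 0)
    (χ : E →+ ZMod 2) : ∃ D : X → ZMod 2, ∀ g x, D (ρ g x) = D x + χ g := by
  have hinv : ∀ g x, ρ (-g) (ρ g x) = x := fun g x => by rw [← hadd, neg_add_cancel, h0]
  let r : Setoid X := ⟨fun x y => ∃ g, ρ g y = x, fun x => ⟨0, h0 x⟩,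
    fun {x y} ⟨g, h⟩ => ⟨-g, by rw [← h, hinv]⟩,
    fun {x y z} ⟨g, h⟩ ⟨g', h'⟩ => ⟨g + g', by rw [hadd, h', h]⟩⟩
  have hrep : ∀ x, ∃ g, ρ g (Quotient.mk r x).out = x := fun x =>
    r.symm (Quotient.mk_out (s := r) x)
  choose e he using hrep
  refine ⟨fun x => χ (e x), fun g x => ?_⟩
  have hq : Quotient.mk r (ρ g x) = Quotient.mk r x := Quotient.sound (s := r) ⟨g, rfl⟩
  have h1 := he (ρ g x)
  rw [hq] at h1
  have h2 : ρ (-(g + e x) + e (ρ g x)) (Quotient.mk r x).out = (Quotient.mk r x).out := by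
    have h3 : ρ g x = ρ (g + e x) (Quotient.mk r x).out := by rw [hadd, he]
    rw [hadd, h1, h3, hinv]
  have h3 : e (ρ g x) = g + e x := (neg_add_eq_zero.1 (hfree _ _ h2)).symm
  simp only [h3, map_add]
  exact add_comm _ _

theorem Sph.eq_or_eq_neg {m : ℕ} {u v : Sph m} (h : ∀ p q, v.1 p * v.1 q = u.1 p * u.1 q) :
    v = u ∨ v = -u := by
  obtain ⟨p, hp⟩ : ∃ p, u.1 p ≠ 0 := by
    by_contra! hu
    have := u.sum_sq
    simp [hu] at this
  rcases mul_self_eq_mul_self_iff.1 (h p p) with hv | hv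
  · refine Or.inl (Subtype.ext (PiLp.ext fun q => ?_))
    have := h p q
    rw [hv] at this
    exact mul_left_cancel₀ hp this
  · refine Or.inr (Subtype.ext (PiLp.ext fun q => ?_))
    have := h p q
    rw [hv, neg_mul, ← mul_neg] at this
    exact neg_eq_iff_eq_neg.1 (mul_left_cancel₀ hp (by simpa using this))

section NoExtension

variable {m n : ℕ}

theorem extends_univ {Γ : Set ((Fin n → Sph m) → (Fin n → Sph m))}
    (hΓ : signs Finset.univ ⊆ Γ) (hD : ∀ i, ∃ D : (Fin n → Sph m) → ZMod 2,
      (∀ a x, D (act a x) = D x + a i) ∧ ∀ γ ∈ Γ, ∃ c, ∀ x, D (γ x) = D x + c)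
    {k : ℕ} (hk : 1 ≤ k) {f : List (Fin n → Sph m) → ZMod 2}
    (hf : InvCocycle (signs Finset.univ) k f) :
    Extends Γ (signs Finset.univ) Set.univ k f := by
  have key : ∀ I : Finset (Fin n), ∀ y k, 1 ≤ k → ∀ f : List (Fin n → Sph m) → ZMod 2,
      cobd f =ᶠ[small (box I y) (k + 1)] 0 →
      GermInv (signs I) (box I y) k f → Extends Γ (signs I) (box I y) k f := by
    intro I
    induction I using Finset.induction_on with
    | empty =>
      intro y k hk f hf _
      rw [box_empty] at hf ⊢
      refine ⟨pull (fun _ => y) f, 0, ⟨?_, ?_⟩, rfl,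
        fun _ _ => Eventually.of_forall fun _ _ _ => rfl, ?_⟩
      · rw [cobd_pull]
        exact pull_congr uniformContinuous_const.uniformContinuousOn
          (fun _ _ => Set.mem_singleton y) hf
      · refine Eventually.of_forall fun l γ _ => ?_
        rw [pull_apply, pull_apply, List.map_map]
        rfl
      · refine eventually_small_of_forall fun l _ hl => ?_
        have : l.map (fun _ => y) = l := by
          conv_rhs => rw [← List.map_id l]
          exact List.map_congr_left fun x hx => (hl x hx).symm
        simp [this]
    | insert i I hi ih =>
      intro y k hk f hf hinv
      obtain ⟨D, hDa, hDΓ⟩ := hD i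
      have := extends_strip (y := y) hΓ hDa hDΓ hi ih (m + 1) le_rfl k hk f
      rw [flag_top, strip_univ] at this
      exact this hf hinv
  have := key Finset.univ (fun _ => pole 0) k hk f
  rw [box_univ] at this
  exact this hf.1 hf.2

section Products

variable {X : Type*}

/-- The product of the degree one classes attached to a list of sign functions. -/
def signProd : List (X → ZMod 2) → List X → ZMod 2
  | [] => fun _ => 1
  | D :: L => cobd (mulHead D (signProd L))

theorem signProd_invCocycle [UniformSpace X] {Γ : Set (X → X)} (L : List (X → ZMod 2))
    (hL : ∀ D ∈ L, ∀ γ ∈ Γ, ∃ c, ∀ x, D (γ x) = D x + c) :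
    InvCocycle Γ (L.length + 1) (signProd L) := by
  induction L with
  | nil =>
    refine ⟨eventually_small_of_forall fun l hl _ => ?_, Eventually.of_forall fun _ _ _ => rfl⟩
    obtain ⟨x, y, rfl⟩ := List.length_eq_two.1 hl
    simp [cobd_cons, signProd]
  | cons D L ih =>
    exact (ih fun D hD => hL D (by simp [hD])).cobd_mulHead (by omega) (hL D (by simp))

theorem eventually_small_tail [UniformSpace X] {k : ℕ} {p : List X → Prop}
    (h : ∀ᶠ l in small Set.univ k, p l) : ∀ᶠ l in small Set.univ (k + 1), p l.tail := by
  obtain ⟨V, hV, h⟩ := h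
  exact ⟨V, hV, fun l h1 _ h3 => h _ (by simp [h1]) (by simp)
    fun x hx y hy => h3 x (List.mem_of_mem_tail hx) y (List.mem_of_mem_tail hy)⟩

theorem signProd_eq_zero [UniformSpace X] (L : List (X → ZMod 2)) :
    ∀ᶠ l in small Set.univ (L.length + 1),
      (∃ D ∈ L, ∃ c, ∀ x ∈ l, D x = c) → signProd L l = 0 := by
  induction L with
  | nil => exact Eventually.of_forall fun l ⟨D, hD, _⟩ => absurd hD (by simp)
  | cons D L ih =>
    have hc := (signProd_invCocycle (Γ := ∅) L fun _ _ _ h => absurd h (Set.notMem_empty _)).1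
    filter_upwards [eventually_small_tail ih, hc, eventually_small_of_forall fun l hl _ => hl]
      with l h1 h2 hl
    rintro ⟨D', hD', c, hcl⟩
    obtain ⟨x, z, l, rfl⟩ : ∃ x z l', l = x :: z :: l' := by
      match l, hl with
      | x :: z :: l', _ => exact ⟨x, z, l', rfl⟩
    have h3 : signProd (D :: L) (x :: z :: l) = (D z - D x) * signProd L (z :: l) := by
      rw [signProd, cobd_mulHead_cons, h2, mulHead_cons, Pi.zero_apply]
      ring
    rw [h3]
    rcases List.mem_cons.1 hD' with rfl | hD'
    · rw [hcl z (by simp), hcl x (by simp), sub_self, zero_mul]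
    · have h4 : signProd L (z :: l) = 0 :=
        h1 ⟨D', hD', c, fun y hy => hcl y (List.mem_of_mem_tail hy)⟩
      rw [h4, mul_zero]

end Products

theorem signProd_ne {F : (Fin n → Sph m) → (Fin n → Sph m)} (hF : Continuous F)
    (hFF : ∀ x, F (F x) = x) (hc : ∀ a x, F (act a x) = act a (F x))
    {Γ : Set ((Fin n → Sph m) → (Fin n → Sph m))} 
    (hΓ : ∀ γ, γ ∈ Γ ↔ ∃ a, γ = act a ∨ γ = fun x => F (act a x))
    (hD : ∀ i, ∃ D : (Fin n → Sph m) → ZMod 2,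
      (∀ a x, D (act a x) = D x + a i) ∧ ∀ γ ∈ Γ, ∃ c, ∀ x, D (γ x) = D x + c)
    (L : List ((Fin n → Sph m) → ZMod 2))
    (hL : ∀ D ∈ L, (∀ a x, D (act a x) = D x) ∧ ∀ x, D (F x) = D x + 1)
    (g : List (Fin n → Sph m) → ZMod 2) (hg : GermInv Γ Set.univ L.length g) (hg0 : g [] = 0) :
    ¬ signProd L =ᶠ[small Set.univ (L.length + 1)] cobd g := by
  have hAΓ : signs Finset.univ ⊆ Γ := fun γ ⟨a, _, e⟩ => (hΓ γ).2 ⟨a, Or.inl e⟩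
  have hFΓ : F ∈ Γ := (hΓ F).2 ⟨0, Or.inr (by simp [act_zero])⟩
  have hFu : UniformContinuousOn F Set.univ :=
    (CompactSpace.uniformContinuous_of_continuous hF).uniformContinuousOn
  have hFm : Set.MapsTo F Set.univ Set.univ := Set.mapsTo_univ _ _
  have hLΓ : ∀ D ∈ L, ∀ γ ∈ Γ, ∃ c, ∀ x, D (γ x) = D x + c := by
    intro D hDL γ hγ
    obtain ⟨a, rfl | rfl⟩ := (hΓ γ).1 hγ
    · exact ⟨0, fun x => by rw [(hL D hDL).1, add_zero]⟩
    · exact ⟨1, fun x => by rw [(hL D hDL).2, (hL D hDL).1]⟩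
  induction L generalizing g with
  | nil =>
    intro h
    obtain ⟨V, hV, h⟩ := h
    have := h [fun _ => pole 0] rfl (by simp) (by simpa using refl_mem_uniformity hV)
    simp [signProd, cobd_cons, hg0] at this
  | cons D L ih =>
    intro h
    have hu := signProd_invCocycle (Γ := Γ) L fun D hD => hLΓ D (by simp [hD])
    have hv : InvCocycle (signs Finset.univ) (L.length + 1) (mulHead D (signProd L) - g) := by
      refine ⟨?_, ((hu.2.mono hAΓ subset_rfl).mulHead ?_).sub (hg.mono hAΓ subset_rfl)⟩
      · filter_upwards [h] with l hl
        rw [map_sub, Pi.sub_apply, ← hl, signProd, sub_self]; rfl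
      · rintro γ ⟨a, -, rfl⟩ x
        exact (hL D (by simp)).1 a x
    obtain ⟨P, h', hP, h0, hi, he⟩ := extends_univ hAΓ hD (by omega) hv
    have hi := hi L.length rfl
    have hiF := (tendsto_map_small hFu hFm L.length).eventually hi
    refine ih (fun D hD => hL D (by simp [hD])) (h' + pull F h') ?_ (by simp [h0])
      (fun D hD => hLΓ D (by simp [hD])) ?_
    · filter_upwards [hi, hiF] with l h1 h2 γ hγ
      have e1 : ∀ a, h' (l.map (act a)) = h' l := fun a => h1 _ ⟨a, by simp, rfl⟩
      have e2 : ∀ a, h' ((l.map (act a)).map F) = h' (l.map F) := fun a => by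
        rw [← h2 _ ⟨a, by simp, rfl⟩, List.map_map, List.map_map]
        congr 1
        exact List.map_congr_left fun x _ => hc a x
      obtain ⟨a, rfl | rfl⟩ := (hΓ γ).1 hγ
      · rw [Pi.add_apply, Pi.add_apply, pull_apply, pull_apply, e1, e2]
      · have e3 : l.map (fun x => F (act a x)) = (l.map (act a)).map F := by
          rw [List.map_map]; rfl
        have e4 : ((l.map (act a)).map F).map F = l.map (act a) := by
          simp [Function.comp_def, hFF]
        rw [Pi.add_apply, Pi.add_apply, pull_apply, pull_apply, e3, e2, e4, e1, add_comm]
    · have hD1 : ∀ x, D (F x) = D x + 1 := (hL D (by simp)).2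
      filter_upwards [he, (tendsto_map_small hFu hFm _).eventually he,
        pull_mulHead hD1 (hu.2.pull_eq hFΓ) (Or.inr (by omega)), hg.pull_eq hFΓ,
        hP.2.pull_eq hFΓ] with l h1 h2 h3 h4 h5
      rw [pull_apply] at h3 h4 h5
      rw [Pi.sub_apply, Pi.add_apply] at h1 h2
      rw [h3, h4, h5, Pi.add_apply] at h2
      rw [map_add, cobd_pull, Pi.add_apply, pull_apply]
      generalize mulHead D (signProd L) l = a at *
      generalize signProd L l = b at *
      have : ∀ a b g p c d : ZMod 2, a - g = p + c → a + b - g = p + d → b = c + d := by decide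
      exact this _ _ _ _ _ _ h1 h2

/-- The sign group action on a product of spheres does not extend to a free action of a larger
elementary abelian group by adding a commuting involution. -/
theorem not_free_of_commuting_involution {F : (Fin n → Sph m) → (Fin n → Sph m)}
    (hF : Continuous F) (hFF : ∀ x, F (F x) = x) (hc : ∀ a x, F (act a x) = act a (F x)) :
    ∃ a x, F (act a x) = x := by
  by_contra! hfree
  set ρ : (Fin n → ZMod 2) × ZMod 2 → (Fin n → Sph m) → (Fin n → Sph m) :=
    fun g x => if g.2 = 0 then act g.1 x else F (act g.1 x) with hρ
  have hρ0 : ∀ x, ρ 0 x = x := fun x => by simp [hρ, act_zero]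
  have hz : ∀ s t : ZMod 2, (s + t = 0 ↔ (s = 0 ↔ t = 0)) := by decide
  have hρadd : ∀ g h x, ρ (g + h) x = ρ g (ρ h x) := fun g h x => by
    by_cases h1 : g.2 = 0 <;> by_cases h2 : h.2 = 0 <;> simp [hρ, h1, h2, hz, act_add, hc, hFF]
  have hρfree : ∀ g x, ρ g x = x → g = 0 := fun g x h => by
    by_cases h1 : g.2 = 0
    · simp only [hρ, h1, if_true] at h
      exact Prod.ext (act_free h) h1
    · simp only [hρ, h1, if_false] at h
      exact absurd h (hfree _ _)
  set Γ : Set ((Fin n → Sph m) → (Fin n → Sph m)) :=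
    {γ | ∃ a, γ = act a ∨ γ = fun x => F (act a x)} with hΓ
  have hρa : ∀ a x, ρ (a, 0) x = act a x := fun a x => by simp [hρ]
  have hρF : ∀ a x, ρ (a, 1) x = F (act a x) := fun a x => by simp [hρ]
  have hD : ∀ i, ∃ D : (Fin n → Sph m) → ZMod 2,
      (∀ a x, D (act a x) = D x + a i) ∧ ∀ γ ∈ Γ, ∃ c, ∀ x, D (γ x) = D x + c := by
    intro i
    obtain ⟨D, hD⟩ := exists_flip ρ hρ0 hρadd hρfree
      ((Pi.evalAddMonoidHom _ i).comp (AddMonoidHom.fst _ _))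
    refine ⟨D, fun a x => by rw [← hρa, hD]; rfl, ?_⟩
    rintro γ ⟨a, rfl | rfl⟩
    · exact ⟨_, fun x => by rw [← hρa, hD]⟩
    · exact ⟨_, fun x => (congrArg D (hρF a x)).symm.trans (hD (a, 1) x)⟩
  obtain ⟨D₀, hD₀⟩ := exists_flip ρ hρ0 hρadd hρfree (AddMonoidHom.snd _ _)
  have hD₀a : ∀ a x, D₀ (act a x) = D₀ x := fun a x => by rw [← hρa, hD₀]; simp
  have hD₀F : ∀ x, D₀ (F x) = D₀ x + 1 := fun x => by
    have := hD₀ (0, 1) x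
    rwa [hρF, act_zero] at this
  -- functions that are odd under the involution
  let s : Fin n × Fin (m + 1) × Fin (m + 1) → (Fin n → Sph m) → ℝ := fun k x =>
    (x k.1).1 k.2.1 * (x k.1).1 k.2.2 - (F x k.1).1 k.2.1 * (F x k.1).1 k.2.2
  have hφ : ∀ (a : Fin n → ZMod 2) (x : Fin n → Sph m) i p q,
      (act a x i).1 p * (act a x i).1 q = (x i).1 p * (x i).1 q := fun a x i p q => by
    by_cases h : a i = 0 <;> simp [act, h]
  have hsa : ∀ k a x, s k (act a x) = s k x := fun k a x => by
    simp only [s, hc, hφ]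
  have hsF : ∀ k x, s k (F x) = -s k x := fun k x => by simp only [s, hFF]; ring
  have hsc : ∀ k, Continuous (s k) := fun k => by
    have h1 := fun p =>
      (continuous_coord (m := m) p).comp (continuous_apply (A := fun _ : Fin n => Sph m) k.1)
    exact ((h1 _).mul (h1 _)).sub (((h1 _).comp hF).mul ((h1 _).comp hF))
  have hs0 : ∀ x, ∃ k, s k x ≠ 0 := by
    intro x
    by_contra! h
    have key : ∀ i, F x i = x i ∨ F x i = -x i := fun i =>
      Sph.eq_or_eq_neg fun p q => (sub_eq_zero.1 (h (i, p, q))).symm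
    choose a ha using fun i => show ∃ t : ZMod 2, F x i = if t = 0 then x i else -x i from
      (key i).elim (fun h => ⟨0, by simp [h]⟩) fun h => ⟨1, by simp [h]⟩
    have : F x = act a x := funext ha
    exact hfree a x (by rw [hc, this, act_act])
  let Ds : Fin n × Fin (m + 1) × Fin (m + 1) → (Fin n → Sph m) → ZMod 2 := fun k x =>
    if 0 < s k x then 1 else if s k x < 0 then 0 else D₀ x
  set L := (Finset.univ : Finset (Fin n × Fin (m + 1) × Fin (m + 1))).toList.map Ds with hL
  refine signProd_ne hF hFF hc (Γ := Γ) (fun γ => Iff.rfl) hD L ?_ 0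
    (Eventually.of_forall fun _ _ _ => rfl) rfl ?_
  · intro D hDL
    obtain ⟨k, -, rfl⟩ := List.mem_map.1 hDL
    refine ⟨fun a x => by simp only [Ds, hsa, hD₀a], fun x => ?_⟩
    simp only [Ds, hsF, hD₀F, neg_pos, neg_lt_zero]
    have h11 : (0 : ZMod 2) = 1 + 1 := by decide
    rcases lt_trichotomy (s k x) 0 with h | h | h
    · simp [h, h.not_gt]
    · simp [h]
    · simp [h, h.not_gt, h11]
  · obtain ⟨V, hV, hVU⟩ := lebesgue_number_lemma (isCompact_univ (X := Fin n → Sph m))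
      (U := fun k : (Fin n × Fin (m + 1) × Fin (m + 1)) × Bool =>
        if k.2 then {x | 0 < s k.1 x} else {x | s k.1 x < 0})
      (by
        rintro ⟨k, b⟩
        cases b
        · exact isOpen_lt (hsc k) continuous_const
        · exact isOpen_lt continuous_const (hsc k))
      (fun x _ => by
        obtain ⟨k, hk⟩ := hs0 x
        rcases lt_or_gt_of_ne hk with h | h
        · exact Set.mem_iUnion.2 ⟨(k, false), by simpa using h⟩
        · exact Set.mem_iUnion.2 ⟨(k, true), by simpa using h⟩)
    filter_upwards [signProd_eq_zero L, eventually_small_close hV] with l h1 ⟨h2, _, h3⟩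
    rw [map_zero, Pi.zero_apply]
    refine h1 ?_
    obtain ⟨x, l, rfl⟩ := List.exists_cons_of_length_eq_add_one h2
    obtain ⟨⟨k, b⟩, hk⟩ := hVU x (Set.mem_univ x)
    refine ⟨Ds k, List.mem_map.2 ⟨k, by simp, rfl⟩, if b then 1 else 0, fun y hy => ?_⟩
    have hy : y ∈ _ := hk (h3 x (by simp) y hy)
    cases b
    · have hy : s k y < 0 := by simpa using hy
      simp [Ds, hy, hy.not_gt]
    · have hy : 0 < s k y := by simpa using hy
      simp [Ds, hy]

end NoExtension

/-! ### Pairings of degrees with the sign group -/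

section Pairing

variable {m n : ℕ}

theorem pull_congr_univ {X Y M : Type*} [UniformSpace X] [UniformSpace Y] {φ : X → Y}
    (hφ : UniformContinuous φ) {k : ℕ} {f g : List Y → M} [AddCommGroup M]
    (h : f =ᶠ[small Set.univ k] g) :
    pull φ f =ᶠ[small Set.univ k] pull φ g :=
  pull_congr hφ.uniformContinuousOn (Set.mapsTo_univ _ _) h

theorem opz_congr_univ {X M : Type*} [UniformSpace X] [AddCommGroup M] {z : X → X}
    (hz : UniformContinuous z) (a : ℕ) {k : ℕ} {f g : List X → M}
    (h : f =ᶠ[small Set.univ k] g) :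
    opz z a f =ᶠ[small Set.univ k] opz z a g := by
  filter_upwards [h, pull_congr_univ hz h] with l h1 h2
  rw [pull_apply, pull_apply] at h2
  rw [opz_apply, opz_apply, h1, h2]

theorem pull_pull {X Y Z M : Type*} [AddCommGroup M] (φ : X → Y) (ψ : Y → Z) (f : List Z → M) :
    pull φ (pull ψ f) = pull (fun x => ψ (φ x)) f := by
  funext l
  rw [pull_apply, pull_apply, List.map_map]
  rfl

theorem pull_id {X M : Type*} [AddCommGroup M] (f : List X → M) : pull (fun x => x) f = f := by
  funext l
  simp

theorem opz_opz {X M : Type*} [AddCommGroup M] {z : X → X} (hz : ∀ x, z (z x) = x) (a : ℕ)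
    (f : List X → M) : opz z a (opz z (a + 1) f) = 0 := by
  funext l
  have : (l.map z).map z = l := by simp [Function.comp_def, hz]
  rw [opz_apply, opz_apply, opz_apply, this, pow_succ]
  rcases neg_one_pow_eq_or ℤ a with h | h <;> (simp [h]; try abel)

/-- The cochain zigzags with integral coefficients for a map `z`. -/
def zig (m : ℕ) {X : Type*} [UniformSpace X] (z : X → X) :
    AddSubgroup (ℕ → List X → ℤ) where
  carrier := {f | ∀ b < m + 1, opz z (b + 1) (f (b + 1)) =ᶠ[small Set.univ (b + 1)] cobd (f b)}
  zero_mem' b _ := by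
    simp only [Pi.zero_apply, map_zero]
    exact EventuallyEq.rfl
  add_mem' {f g} hf hg b hb := by
    filter_upwards [hf b hb, hg b hb] with l h1 h2
    rw [Pi.add_apply, Pi.add_apply, map_add, map_add, Pi.add_apply, Pi.add_apply, h1, h2]
  neg_mem' {f} hf b hb := by
    filter_upwards [hf b hb] with l h1
    rw [Pi.neg_apply, Pi.neg_apply, map_neg, map_neg, Pi.neg_apply, Pi.neg_apply, h1]

theorem even_of_zig {z : (Fin n → Sph m) → Fin n → Sph m} (hz : UniformContinuous z)
    (hzz : ∀ x, z (z x) = x) {f : ℕ → List (Fin n → Sph m) → ℤ} (hf : f ∈ zig m z)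
    {h : List (Fin n → Sph m) → ℤ} (h0 : f (m + 1) =ᶠ[small Set.univ (m + 1)] cobd h) :
    Even (f 0 []) := by
  have key : ∀ d b, b + d = m + 1 → ∃ h g : List (Fin n → Sph m) → ℤ,
      f b =ᶠ[small Set.univ b] opz z (b + 1) h + cobd g := by
    intro d
    induction d with
    | zero =>
      rintro b rfl
      exact ⟨0, h, by simpa using h0⟩
    | succ d ih =>
      intro b hb
      obtain ⟨h, g, hg⟩ := ih (b + 1) (by omega)
      have h1 : cobd (f b - opz z (b + 1) g) =ᶠ[small Set.univ (b + 1)] 0 := by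
        filter_upwards [hf b (by omega), opz_congr_univ hz (b + 1) hg] with l h1 h2
        rw [map_sub, Pi.sub_apply, ← h1, h2, map_add, opz_opz hzz, cobd_opz, zero_add, sub_self]
        rfl
      obtain ⟨g', hg'⟩ := acyclic_univ (by omega : b ≤ m) _ h1
      refine ⟨g, g', ?_⟩
      filter_upwards [hg'] with l hl
      rw [Pi.add_apply, ← hl, Pi.sub_apply, add_sub_cancel]
  obtain ⟨h, g, hg⟩ := key (m + 1) 0 (by simp)
  have := eventually_small_zero.1 hg
  rw [Pi.add_apply, cobd_nil, opz_apply] at this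
  exact ⟨h [], by simpa using this⟩

/-- The uniform continuity of a continuous self-map of the product of spheres. -/
theorem uniformContinuous_piSph {z : (Fin n → Sph m) → Fin n → Sph m} (hz : Continuous z) :
    UniformContinuous z :=
  CompactSpace.uniformContinuous_of_continuous hz

/-- The zigzag of the group element `a` that starts at the top class of the `i`-th factor. -/
def baseZig (m : ℕ) (a : Fin n → ZMod 2) (i : Fin n) : ℕ → List (Fin n → Sph m) → ℤ := fun b =>
  if a i = 0 then (if b = m + 1 then lam m (m + 1) i else 0)
  else pull (fun x => x i) (zz m (m + 1) b)

theorem baseZig_top (a : Fin n → ZMod 2) (i : Fin n) : baseZig m a i (m + 1) = lam m (m + 1) i := by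
  simp [baseZig, lam]

theorem baseZig_zero (a : Fin n → ZMod 2) (i : Fin n) :
    ((baseZig m a i 0 [] : ℤ) : ZMod 2) = a i := by
  have : ∀ t : ZMod 2, t ≠ 0 → 1 = t := by decide
  by_cases h : a i = 0
  · simp [baseZig, h]
  · simp [baseZig, h, zz_zero_right, this _ h]

theorem baseZig_mem (hm : Odd m) (a : Fin n → ZMod 2) (i : Fin n) :
    baseZig m a i ∈ zig m (act a) := by
  intro b hb
  by_cases h : a i = 0
  · have h1 : baseZig m a i b = 0 := by simp [baseZig, h, hb.ne]
    rw [h1, map_zero]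
    by_cases hbm : b = m
    · refine Eventually.of_forall fun l => ?_
      have hl : (l.map (act a)).map (fun x => x i) = l.map fun x => x i := by
        simp [Function.comp_def, act, h]
      rw [hbm, baseZig_top, opz_apply, lam, pull_apply, hl, hm.add_one.neg_one_pow]
      simp
    · have h2 : baseZig m a i (b + 1) = 0 := by simp [baseZig, h, hbm]
      rw [h2, map_zero]
  · obtain ⟨h1, -⟩ := zz_spec (m := m) (m + 1) le_rfl
    have := pull_congr (eval_uniform i).uniformContinuousOn (S := Set.univ) (by simp [flag_top])
      (h1 b hb)
    filter_upwards [this] with l hl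
    have e : (l.map (act a)).map (fun x => x i) = (l.map fun x => x i).map fun u => -u := by
      simp [Function.comp_def, act, h]
    rw [pull_apply, opz_apply, pull_apply] at hl
    simp only [baseZig, h, if_false]
    rw [opz_apply, cobd_pull, pull_apply, pull_apply, pull_apply, e, hl]

theorem zig_bottom (hm : Odd m) {a : Fin n → ZMod 2} {f : ℕ → List (Fin n → Sph m) → ℤ}
    (hf : f ∈ zig m (act a)) {c : Fin n → ℤ}
    {h : List (Fin n → Sph m) → ℤ}
    (h0 : f (m + 1) =ᶠ[small Set.univ (m + 1)] topc m c + cobd h) :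
    ((f 0 [] : ℤ) : ZMod 2) = ∑ i, (c i : ZMod 2) * a i := by
  have hs : ∑ i, c i • baseZig m a i ∈ zig m (act a) :=
    sum_mem fun i _ => zsmul_mem (baseZig_mem hm a i) _
  have he := even_of_zig (h := h) (uniformContinuous_piSph (continuous_act a)) (act_act a)
    (sub_mem hf hs) (by
    filter_upwards [h0] with l hl
    rw [Pi.sub_apply, Pi.sub_apply, hl, Pi.add_apply, topc, Finset.sum_apply]
    simp only [Pi.smul_apply, baseZig_top, Finset.sum_apply]
    ring)
  rw [← ZMod.intCast_eq_zero_iff_even] at he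
  simp only [Pi.sub_apply, Finset.sum_apply, Pi.smul_apply, smul_eq_mul, Int.cast_sub,
    Int.cast_sum, Int.cast_mul, baseZig_zero] at he
  exact sub_eq_zero.1 he

theorem zig_pull {X Y : Type*} [UniformSpace X] [UniformSpace Y] {F : X → Y}
    (hF : UniformContinuous F) {z : X → X} {w : Y → Y} (hzw : ∀ x, F (z x) = w (F x))
    {f : ℕ → List Y → ℤ} (hf : f ∈ zig m w) : (fun b => pull F (f b)) ∈ zig m z := by
  intro b hb
  have e : opz z (b + 1) (pull F (f (b + 1))) = pull F (opz w (b + 1) (f (b + 1))) := by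
    funext l
    simp only [opz_apply, pull_apply, List.map_map]
    congr 3
    funext x
    exact hzw x
  rw [e, cobd_pull]
  exact pull_congr_univ hF (hf b hb)

theorem pairing_of_intertwine (hm : Odd m) {F : (Fin n → Sph m) → Fin n → Sph m}
    (hF : Continuous F) {a b : Fin n → ZMod 2} (hab : ∀ x, F (act a x) = act b (F x))
    {c c' : Fin n → ℤ} {h : List (Fin n → Sph m) → ℤ}
    (hc : pull F (topc m c) =ᶠ[small Set.univ (m + 1)] topc m c' + cobd h) :
    ∑ i, (c i : ZMod 2) * b i = ∑ i, (c' i : ZMod 2) * a i := by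
  have hs : ∑ i, c i • baseZig m b i ∈ zig m (act b) :=
    sum_mem fun i _ => zsmul_mem (baseZig_mem hm b i) _
  have ht : (∑ i, c i • baseZig m b i) (m + 1) = topc m c := by
    simp [topc, baseZig_top]
  rw [← zig_bottom (h := 0) hm hs (by rw [ht, map_zero, add_zero]),
    ← zig_bottom hm (zig_pull (uniformContinuous_piSph hF) hab hs) (by rwa [ht])]
  rfl

/-- The two operators of the twisted periodic resolution for a map of order four. -/
def opf {X : Type*} (z : X → X) (b : ℕ) : (List X → ℤ) →+ (List X → ℤ) :=
  if Even b then opz z 1 else (opz z 0).comp (opz (fun x => z (z x)) 1)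

theorem cobd_opf {X : Type*} (z : X → X) (b : ℕ) (f : List X → ℤ) :
    cobd (opf z b f) = opf z b (cobd f) := by
  by_cases h : Even b <;> simp [opf, h, cobd_opz]

theorem opf_congr {X : Type*} [UniformSpace X] {z : X → X}
    (hz : UniformContinuous z) (a : ℕ) {k : ℕ} {f g : List X → ℤ}
    (h : f =ᶠ[small Set.univ k] g) :
    opf z a f =ᶠ[small Set.univ k] opf z a g := by
  by_cases hb : Even a
  · simpa [opf, hb] using opz_congr_univ hz 1 h
  · simpa [opf, hb] using opz_congr_univ hz 0
      (opz_congr_univ (z := fun x => z (z x)) (hz.comp hz) 1 h)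

theorem opf_opf {X : Type*} {z : X → X} (hz : ∀ x, z (z (z (z x))) = x) (a : ℕ)
    (f : List X → ℤ) : opf z a (opf z (a + 1) f) = 0 := by
  have e : ∀ l : List X, (((l.map z).map z).map z).map z = l := fun l => by
    simp [Function.comp_def, hz]
  have e2 : ∀ l : List X, l.map (fun x => z (z x)) = (l.map z).map z := fun l => by
    simp [Function.comp_def]
  funext l
  rw [Pi.zero_apply]
  by_cases hb : Even a
  · simp only [opf, hb, Nat.even_add_one, not_true, if_false, if_true, AddMonoidHom.comp_apply,
      opz_apply, e2, e]
    norm_num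
    ring
  · simp only [opf, hb, Nat.even_add_one, not_false_eq_true, if_false, if_true,
      AddMonoidHom.comp_apply, opz_apply, e2, e]
    norm_num
    ring

theorem pairing_of_order_four (hm : Odd m) {z : (Fin n → Sph m) → Fin n → Sph m}
    (hz : Continuous z) {a : Fin n → ZMod 2} (hza : ∀ x, z (z x) = act a x)
    {c : Fin n → ℤ} {h : List (Fin n → Sph m) → ℤ}
    (hc : pull z (topc m c) =ᶠ[small Set.univ (m + 1)] -topc m c + cobd h) :
    ∑ i, (c i : ZMod 2) * a i = 0 := by
  have hz4 : ∀ x, z (z (z (z x))) = x := fun x => by rw [hza, hza, act_act]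
  have key : ∀ d ≤ m + 1, ∃ g : ℕ → List (Fin n → Sph m) → ℤ, g (m + 1) = topc m c ∧
      (∀ b < m + 1, m + 1 ≤ b + d →
        opf z (b + 1) (g (b + 1)) =ᶠ[small Set.univ (b + 1)] cobd (g b)) ∧
      ∃ h, opf z (m + 1 - d) (g (m + 1 - d)) =ᶠ[small Set.univ (m + 1 - d)] cobd h := by
    intro d
    induction d with
    | zero =>
      refine fun _ => ⟨fun _ => topc m c, rfl, fun b h1 h2 => by omega, h, ?_⟩
      filter_upwards [hc] with l hl
      simp only [opf, tsub_zero, hm.add_one, if_true, opz_apply]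
      rw [← pull_apply z (topc m c), hl]
      simp
    | succ d ih =>
      intro hd
      obtain ⟨g, hg1, hg2, h, hh⟩ := ih (by omega)
      obtain ⟨b, hb⟩ : ∃ b, b + d = m := ⟨m - d, by omega⟩
      have e1 : m + 1 - d = b + 1 := by omega
      have e2 : m + 1 - (d + 1) = b := by omega
      rw [e1] at hh
      rw [e2]
      refine ⟨Function.update g b h, ?_, fun b' h1 h2 => ?_, ?_⟩
      · rw [Function.update_of_ne (by omega), hg1]
      · rw [Function.update_of_ne (by omega)]
        rcases eq_or_ne b' b with rfl | hbb
        · rwa [Function.update_self]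
        · rw [Function.update_of_ne hbb]
          exact hg2 b' h1 (by omega)
      · rw [Function.update_self]
        refine acyclic_univ (by omega : b ≤ m) _ ?_
        rw [cobd_opf]
        filter_upwards [opf_congr (uniformContinuous_piSph hz) b hh] with l hl
        rw [← hl, opf_opf hz4]
  obtain ⟨g, hg1, hg2, h', hh'⟩ := key (m + 1) le_rfl
  have h0 : g 0 [] = 0 := by
    rw [Nat.sub_self] at hh'
    have := eventually_small_zero.1 hh'
    simp only [opf, Even.zero, if_true, opz_apply, List.map_nil, cobd_nil] at this
    simp at this
    omega
  have hf : (fun b => if Even b then g b else opz z 0 (g b)) ∈ zig m (act a) := by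
    have hza' : act a = fun x => z (z x) := funext fun x => (hza x).symm
    intro b hb
    have h1 := hg2 b hb (by omega)
    by_cases he : Even b
    · filter_upwards [h1] with l hl
      rw [hza']
      simp only [he, Nat.even_add_one, not_true, if_false, if_true, he.add_one.neg_one_pow, opf,
        AddMonoidHom.comp_apply, opz_apply] at hl ⊢
      rw [← hl]
      simp [Function.comp_def]
      ring
    · filter_upwards [opz_congr_univ (uniformContinuous_piSph hz) 0 h1] with l hl
      have e : opf z (b + 1) = opz z 1 := by simp [opf, he, Nat.even_add_one]
      rw [hza']
      simp only [he, Nat.even_add_one, not_false_eq_true, if_false, if_true, cobd_opz]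
      rw [← hl, e]
      simp only [opz_apply, (Nat.not_even_iff_odd.1 he).add_one.neg_one_pow]
      simp [Function.comp_def]
      ring
  have := zig_bottom (c := c) (h := 0) hm hf (by simp [hm.add_one, hg1])
  rw [← this]
  simp [h0]

/-- The map `F` pulls the top class `c` back to the top class `c'`, up to a coboundary. -/
def DegRel (F : (Fin n → Sph m) → Fin n → Sph m) (c c' : Fin n → ℤ) : Prop :=
  ∃ h, pull F (topc m c) =ᶠ[small Set.univ (m + 1)] topc m c' + cobd h

theorem even_of_exact (hm : Odd m) {c : Fin n → ℤ} {h : List (Fin n → Sph m) → ℤ}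
    (hc : topc m c =ᶠ[small Set.univ (m + 1)] cobd h) (i : Fin n) : Even (c i) := by
  have := pairing_of_intertwine (F := fun x => x) hm continuous_id (a := Pi.single i 1)
    (b := Pi.single i 1) (fun _ => rfl) (c := c) (c' := 0) (h := h) (by
      have h0 : topc m (0 : Fin n → ℤ) = 0 := by simp [topc]
      rwa [pull_id, h0, zero_add])
  simp only [Pi.single_apply, mul_ite, mul_one, mul_zero, Finset.sum_ite_eq', Finset.mem_univ,
    if_true, Pi.zero_apply, Int.cast_zero, ite_self, Finset.sum_const_zero] at this
  exact (ZMod.intCast_eq_zero_iff_even).1 this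

theorem exact_of_exact_two {X : Type*} [UniformSpace X] {k : ℕ}
    (hX : Acyclic (ZMod 2) (Set.univ : Set X) k) {f h : List X → ℤ}
    (hf : (2 : ℤ) • f =ᶠ[small Set.univ (k + 1)] cobd h) :
    ∃ h, f =ᶠ[small Set.univ (k + 1)] cobd h := by
  let φ : ℤ →+ ZMod 2 := Int.castAddHom (ZMod 2)
  obtain ⟨k₂, hk⟩ := hX (fun l => φ (h l)) (by
    filter_upwards [hf] with l hl
    rw [cobd_comp_hom]
    show φ (cobd h l) = 0
    rw [← hl]
    have : (2 : ZMod 2) = 0 := by decide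
    simp [φ, this])
  have hs : ∀ t : ZMod 2, φ (t.val : ℤ) = t := by decide
  have hk₂ : k₂ = fun l => φ ((k₂ l).val : ℤ) := funext fun l => (hs _).symm
  rw [hk₂, cobd_comp_hom] at hk
  set k' : List X → ℤ := fun l => ((k₂ l).val : ℤ)
  have he : (2 : ℤ) • (fun l => (h l - cobd k' l) / 2) =ᶠ[small Set.univ k] h - cobd k' := by
    filter_upwards [hk] with l hl
    have : Even (h l - cobd k' l) := by
      rw [← ZMod.intCast_eq_zero_iff_even, Int.cast_sub, sub_eq_zero]
      exact hl
    simp only [Pi.smul_apply, smul_eq_mul, Pi.sub_apply]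
    exact Int.mul_ediv_cancel' this.two_dvd
  refine ⟨fun l => (h l - cobd k' l) / 2, ?_⟩
  filter_upwards [hf, cobd_congr he] with l h1 h2
  rw [map_zsmul, map_sub, cobd_cobd, sub_zero, ← h1] at h2
  simp only [Pi.smul_apply, smul_eq_mul] at h2
  omega

theorem eq_zero_of_exact (hm : Odd m) {c : Fin n → ℤ} {h : List (Fin n → Sph m) → ℤ}
    (hc : topc m c =ᶠ[small Set.univ (m + 1)] cobd h) : c = 0 := by
  have key : ∀ N : ℕ, ∀ c : Fin n → ℤ, (∃ h, topc m c =ᶠ[small Set.univ (m + 1)] cobd h) →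
      ∀ i, (2 : ℤ) ^ N ∣ c i := by
    intro N
    induction N with
    | zero => simp
    | succ N ih =>
      rintro c ⟨h, hh⟩ i
      choose d hd using fun i => (even_of_exact hm hh i).two_dvd
      have hcd : c = (2 : ℤ) • d := funext hd
      rw [hcd, topc_zsmul] at hh
      obtain ⟨e, he⟩ := ih d (exact_of_exact_two (acyclic_univ le_rfl) hh) i
      exact ⟨e, by rw [hd, he]; ring⟩
  funext i
  by_contra h0
  obtain ⟨N, hN⟩ := exists_nat_gt |c i|
  have h1 := Int.le_of_dvd (abs_pos.2 h0) ((dvd_abs _ _).2 (key N c ⟨h, hc⟩ i))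
  have h2 : ((N : ℕ) : ℤ) < 2 ^ N := by exact_mod_cast N.lt_two_pow_self
  linarith

theorem DegRel.exists (hm : 1 ≤ m) {F : (Fin n → Sph m) → Fin n → Sph m} (hF : Continuous F)
    (c : Fin n → ℤ) : ∃ c', DegRel F c c' := by
  refine topc_class hm _ ?_
  rw [cobd_pull]
  filter_upwards [pull_congr_univ (uniformContinuous_piSph hF) (cobd_topc c)] with l hl
  rw [hl]
  rfl

theorem DegRel.unique (hm : Odd m) {F : (Fin n → Sph m) → Fin n → Sph m} {c d d' : Fin n → ℤ}
    (h : DegRel F c d) (h' : DegRel F c d') : d = d' := by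
  obtain ⟨h, hh⟩ := h
  obtain ⟨h', hh'⟩ := h'
  refine sub_eq_zero.1 (eq_zero_of_exact (h := h' - h) hm ?_)
  filter_upwards [hh, hh'] with l h1 h2
  rw [h1] at h2
  simp only [Pi.add_apply] at h2
  rw [topc_sub, map_sub, Pi.sub_apply, Pi.sub_apply, sub_eq_sub_iff_add_eq_add, h2, add_comm]

theorem DegRel.add {F : (Fin n → Sph m) → Fin n → Sph m} {c d c' d' : Fin n → ℤ}
    (h : DegRel F c d) (h' : DegRel F c' d') : DegRel F (c + c') (d + d') := by
  obtain ⟨h, hh⟩ := h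
  obtain ⟨h', hh'⟩ := h'
  refine ⟨h + h', ?_⟩
  filter_upwards [hh, hh'] with l h1 h2
  rw [topc_add, topc_add, map_add, map_add, Pi.add_apply, h1, h2]
  simp only [Pi.add_apply]
  ring

theorem DegRel.comp {F G : (Fin n → Sph m) → Fin n → Sph m} {c d e : Fin n → ℤ}
    (hG : Continuous G) (h : DegRel F c d) (h' : DegRel G d e) :
    DegRel (fun x => F (G x)) c e := by
  obtain ⟨h, hh⟩ := h
  obtain ⟨h', hh'⟩ := h'
  refine ⟨h' + pull G h, ?_⟩
  filter_upwards [pull_congr_univ (uniformContinuous_piSph hG) hh, hh'] with l h1 h2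
  rw [pull_pull, map_add, Pi.add_apply, h2] at h1
  rw [h1, map_add, cobd_pull]
  simp only [Pi.add_apply]
  ring

theorem DegRel.act (hm : Odd m) (a : Fin n → ZMod 2) (c : Fin n → ℤ) :
    DegRel (act (m := m) a) c c := by
  refine ⟨∑ i, c i • baseZig m a i m, ?_⟩
  have : ∀ᶠ l in small Set.univ (m + 1), ∀ i : Fin n,
      opz (_root_.act a) (m + 1) (baseZig m a i (m + 1)) l = cobd (baseZig m a i m) l :=
    eventually_all.2 fun i => baseZig_mem hm a i m (by omega)
  filter_upwards [this] with l hl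
  simp only [baseZig_top, opz_apply, hm.add_one.neg_one_pow, one_smul] at hl
  rw [Pi.add_apply, topc, map_sum, map_sum]
  simp only [map_zsmul, Finset.sum_apply, Pi.smul_apply, ← hl, pull_apply]
  rw [← Finset.sum_add_distrib]
  refine Finset.sum_congr rfl fun i _ => ?_
  simp only [smul_eq_mul]
  ring

end Pairing

/-! ### Quadratic maps and eigenvectors over ℤ/2 -/

section Quadratic

open MvPolynomial in
theorem exists_polynomial_of_quadratic {V ι : Type*} [AddCommGroup V] [Module (ZMod 2) V]
    (e : ι → V) {q : V → ZMod 2} (h0 : q 0 = 0)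
    (hq : ∀ x y z, q (x + y + z) = q (x + y) + q (y + z) + q (x + z) + q x + q y + q z)
    (I : Finset ι) : ∃ P : MvPolynomial ι (ZMod 2), P.totalDegree ≤ 2 ∧
      ∀ x : ι → ZMod 2, eval x P = q (∑ i ∈ I, x i • e i) := by
  classical
  induction I using Finset.induction_on with
  | empty => exact ⟨0, by simp, by simp [h0]⟩
  | insert i I hi ih =>
    obtain ⟨P, hP, hPe⟩ := ih
    have hneg : ∀ a b : ZMod 2, a - b = a + b := by decide
    let β : V →+ ZMod 2 := AddMonoidHom.mk' (fun y => q (e i + y) + q (e i) + q y) fun y z => by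
      have h1 := hq (e i) y z
      have h2 : ∀ a b c d f g : ZMod 2,
        (a + b + c + d + f + g) + d + b = (a + d + f) + (c + d + g) := by decide
      rw [← add_assoc, h1]
      exact h2 _ _ _ _ _ _
    have hβ : ∀ y, q (e i + y) = q (e i) + q y + β y := fun y => by
      have : ∀ a b c : ZMod 2, a = b + c + (a + b + c) := by decide
      exact this _ _ _
    have hval : ∀ t : ZMod 2, t = 0 ∨ t = 1 := by decide
    have hβs : ∀ x : ι → ZMod 2, β (∑ j ∈ I, x j • e j) = ∑ j ∈ I, β (e j) * x j := fun x => by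
      rw [map_sum]
      refine Finset.sum_congr rfl fun j _ => ?_
      rcases hval (x j) with h | h <;> simp [h]
    refine ⟨C (q (e i)) * X i + P + X i * ∑ j ∈ I, C (β (e j)) * X j, ?_, fun x => ?_⟩
    · have hC : ∀ (a : ZMod 2) (j : ι), (C a * X j : MvPolynomial ι (ZMod 2)).totalDegree ≤ 1 :=
        fun a j => (totalDegree_mul _ _).trans (by simp [totalDegree_X])
      refine (totalDegree_add _ _).trans (max_le ((totalDegree_add _ _).trans
        (max_le ((hC _ _).trans one_le_two) hP)) ((totalDegree_mul _ _).trans ?_))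
      have := totalDegree_finsetSum_le (s := I) (d := 1) (f := fun j => C (β (e j)) * X j)
        fun j _ => hC (β (e j)) j
      rw [totalDegree_X]
      omega
    · rw [Finset.sum_insert hi]
      rcases hval (x i) with h | h
      · simp [h, hPe]
      · simp [h, hPe, hβ, hβs]

theorem exists_zero_of_quadratic {V : Type*} [AddCommGroup V] [Module (ZMod 2) V]
    [Module.Finite (ZMod 2) V] {d : ℕ} {q : V → Fin d → ZMod 2} (h0 : q 0 = 0)
    (hq : ∀ x y z, q (x + y + z) = q (x + y) + q (y + z) + q (x + z) + q x + q y + q z)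
    (hd : 2 * d < Module.finrank (ZMod 2) V) : ∃ v ≠ 0, q v = 0 := by
  classical
  have b := Module.finBasis (ZMod 2) V
  choose P hP hPe using fun j => exists_polynomial_of_quadratic b (q := fun v => q v j)
    (congrFun h0 j) (fun x y z => congrFun (hq x y z) j) Finset.univ
  have hdvd := char_dvd_card_solutions_of_fintype_sum_lt (p := 2) (f := P) (by
    refine (Finset.sum_le_sum fun j _ => hP j).trans_lt ?_
    simpa [mul_comm] using hd)
  have h00 : ∀ j, MvPolynomial.eval (0 : Fin _ → ZMod 2) (P j) = 0 := fun j => by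
    rw [hPe]
    simp [h0]
  rw [Fintype.card_eq_nat_card] at hdvd
  have : Nonempty {x // ∀ j, MvPolynomial.eval x (P j) = 0} := ⟨⟨0, h00⟩⟩
  have h1 := Nat.le_of_dvd Nat.card_pos hdvd
  have := Finite.one_lt_card_iff_nontrivial.1 (one_lt_two.trans_le h1)
  obtain ⟨x, hx⟩ := exists_ne (⟨0, h00⟩ : {x // ∀ j, MvPolynomial.eval x (P j) = 0})
  refine ⟨∑ i, x.1 i • b i, fun h => hx (Subtype.ext ?_), funext fun j => ?_⟩
  · funext i
    exact Fintype.linearIndependent_iff.1 b.linearIndependent x.1 h i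
  · rw [← hPe]
    exact x.2 j

open Module in
theorem exists_zero_of_partially_linear {V : Type*} [AddCommGroup V] [Module (ZMod 2) V]
    [Module.Finite (ZMod 2) V] {n t : ℕ} {q : V → Fin n → ZMod 2} (h0 : q 0 = 0)
    (hq : ∀ x y z, q (x + y + z) = q (x + y) + q (y + z) + q (x + z) + q x + q y + q z)
    {c : Fin t → Fin n → ZMod 2} (hc : LinearIndependent (ZMod 2) c)
    (hlin : ∀ i x y, c i ⬝ᵥ q (x + y) = c i ⬝ᵥ q x + c i ⬝ᵥ q y)
    (hd : 2 * n < t + finrank (ZMod 2) V) : ∃ v ≠ 0, q v = 0 := by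
  let C : (Fin n → ZMod 2) →ₗ[ZMod 2] (Fin t → ZMod 2) := Matrix.mulVecLin (Matrix.of c)
  have hCr : finrank (ZMod 2) C.range = t := by
    have := hc.rank_matrix (M := Matrix.of c)
    simpa [Matrix.rank] using this
  have hCk := C.finrank_range_add_finrank_ker
  rw [hCr, finrank_fin_fun] at hCk
  let ℓ : V →ₗ[ZMod 2] (Fin t → ZMod 2) := AddMonoidHom.toZModLinearMap 2
    (AddMonoidHom.mk' (fun v => C (q v)) fun x y => funext fun i => hlin i x y)
  have hℓ := ℓ.finrank_range_add_finrank_ker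
  have hℓr : finrank (ZMod 2) ℓ.range ≤ t := by
    simpa using Submodule.finrank_le ℓ.range
  let E : LinearMap.ker C ≃ₗ[ZMod 2] (Fin (finrank (ZMod 2) (LinearMap.ker C)) → ZMod 2) :=
    (finBasis (ZMod 2) (LinearMap.ker C)).equivFun
  have hm : ∀ v : LinearMap.ker ℓ, q v ∈ LinearMap.ker C := fun v => v.2
  obtain ⟨v, hv, hv0⟩ := exists_zero_of_quadratic (V := LinearMap.ker ℓ)
    (q := fun v => E ⟨q v, hm v⟩) (by
      simp only [ZeroMemClass.coe_zero, h0]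
      exact map_zero E) (fun x y z => by
      simp only [← map_add]
      congr 1
      exact Subtype.ext (hq x y z)) (by omega)
  refine ⟨v, by simpa using hv, ?_⟩
  have := (map_eq_zero_iff E E.injective).1 hv0
  exact congrArg Subtype.val this

end Quadratic

section Eigen

variable {r n : ℕ} {μ : (Fin r → ZMod 2) → (Fin n → ℤ) →+ (Fin n → ℤ)}

theorem exists_common_eigenvector (h0 : ∀ c, μ 0 c = c)
    (hadd : ∀ g h c, μ (g + h) c = μ g (μ h c)) {h : Fin r → ZMod 2} (hh : ∃ c, μ h c ≠ c) :
    ∃ v ≠ 0, μ h v = -v ∧ ∀ g, μ g v = v ∨ μ g v = -v := by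
  classical
  have hinv : ∀ g c, μ g (μ g c) = c := fun g c => by
    have : g + g = 0 := funext fun i => CharTwo.add_self_eq_zero _
    rw [← hadd, this, h0]
  have hcomm : ∀ g g' c, μ g (μ g' c) = μ g' (μ g c) := fun g g' c => by
    rw [← hadd, ← hadd, add_comm]
  have key : ∀ T : Finset (Fin r → ZMod 2),
      ∃ v ≠ 0, μ h v = -v ∧ ∀ g ∈ T, μ g v = v ∨ μ g v = -v := by
    intro T
    induction T using Finset.induction_on with
    | empty =>
      obtain ⟨c, hc⟩ := hh
      exact ⟨μ h c - c, sub_ne_zero.2 hc, by rw [map_sub, hinv, neg_sub], by simp⟩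
    | insert g T _ ih =>
      obtain ⟨v, hv0, hvh, hvT⟩ := ih
      by_cases hg : v + μ g v = 0
      · refine ⟨v, hv0, hvh, fun g' hg' => ?_⟩
        rcases Finset.mem_insert.1 hg' with rfl | hg'
        · exact Or.inr (eq_neg_of_add_eq_zero_right hg)
        · exact hvT g' hg'
      · refine ⟨_, hg, ?_, fun g' hg' => ?_⟩
        · rw [map_add, hcomm, hvh, map_neg, neg_add]
        · rcases Finset.mem_insert.1 hg' with rfl | hg'
          · exact Or.inl (by rw [map_add, hinv, add_comm])
          · rw [map_add, hcomm]
            rcases hvT g' hg' with e | e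
            · exact Or.inl (by rw [e])
            · exact Or.inr (by rw [e, map_neg, neg_add])
  obtain ⟨v, h1, h2, h3⟩ := key Finset.univ
  exact ⟨v, h1, h2, fun g => h3 g (Finset.mem_univ g)⟩

theorem exists_eigencharacter (h0 : ∀ c, μ 0 c = c)
    (hadd : ∀ g h c, μ (g + h) c = μ g (μ h c)) {h : Fin r → ZMod 2} (hh : ∃ c, μ h c ≠ c) :
    ∃ χ : Module.Dual (ZMod 2) (Fin r → ZMod 2), χ h ≠ 0 ∧
      ∃ v ≠ 0, ∀ g, μ g v = if χ g = 0 then v else -v := by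
  obtain ⟨v, hv0, hvh, hv⟩ := exists_common_eigenvector h0 hadd hh
  have hvv : -v ≠ v := fun e => hv0 (self_eq_neg.1 e.symm)
  let χ : (Fin r → ZMod 2) →+ ZMod 2 := AddMonoidHom.mk' (fun g => if μ g v = v then 0 else 1)
    fun g g' => by
      have h2 : (0 : ZMod 2) = 1 + 1 := by decide
      rw [hadd]
      rcases hv g with e | e <;> rcases hv g' with e' | e' <;> simp [e, e', hvv, h2]
  have hχ : ∀ g, χ g = if μ g v = v then 0 else 1 := fun _ => rfl
  refine ⟨χ.toZModLinearMap 2, ?_, v, hv0, fun g => ?_⟩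
  · simp [hχ, hvh, hvv]
  · rcases hv g with e | e <;> simp [hχ, e, hvv]

open Module in
theorem exists_dual_family {K V : Type*} [Field K] [AddCommGroup V] [Module K V] {t : ℕ}
    {χ : Fin t → Dual K V} (hχ : LinearIndependent K χ) (y : Fin t → K) :
    ∃ g, ∀ i, χ i g = y i := by
  have : (LinearMap.pi χ).range = ⊤ := by
    by_contra hne
    obtain ⟨f, hf, hle⟩ := Submodule.exists_le_ker_of_lt_top _ (lt_top_iff_ne_top.2 hne)
    refine hf (LinearMap.pi_ext' fun i => LinearMap.ext_ring ?_)
    have h1 : ∑ i, f (Pi.single i 1) • χ i = 0 := by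
      ext v
      have h2 : f (LinearMap.pi χ v) = 0 := hle ⟨v, rfl⟩
      rw [LinearMap.pi_apply_eq_sum_univ] at h2
      have e : ∀ i : Fin t, (fun j => if i = j then (1 : K) else 0) = Pi.single i 1 := fun i =>
        funext fun j => by simp [Pi.single_apply, eq_comm]
      simpa [mul_comm, e] using h2
    exact Fintype.linearIndependent_iff.1 hχ _ h1 i
  obtain ⟨g, hg⟩ := LinearMap.range_eq_top.1 this y
  exact ⟨g, fun i => congrFun hg i⟩

open Module in
theorem exists_large_negative_part (h0 : ∀ c, μ 0 c = c)
    (hadd : ∀ g h c, μ (g + h) c = μ g (μ h c)) (K : Submodule (ZMod 2) (Fin r → ZMod 2))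
    (hK : ∀ g, (∀ c, μ g c = c) → g ∈ K) :
    ∃ (g : Fin r → ZMod 2) (t : ℕ) (v : Fin t → Fin n → ℤ), r ≤ t + finrank (ZMod 2) K ∧
      LinearIndependent ℤ v ∧ ∀ i, μ g (v i) = -v i := by
  let S : Set (Dual (ZMod 2) (Fin r → ZMod 2)) :=
    {χ | ∃ v ≠ 0, ∀ g, μ g v = if χ g = 0 then v else -v}
  have hS : (Submodule.span (ZMod 2) S).dualCoannihilator ≤ K := by
    intro h hh
    refine hK h ?_
    by_contra! hne
    obtain ⟨χ, hχ, hv⟩ := exists_eigencharacter h0 hadd hne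
    exact hχ ((Submodule.mem_dualCoannihilator _).1 hh χ (Submodule.subset_span hv))
  have hdim := Subspace.finrank_add_finrank_dualCoannihilator_eq (Submodule.span (ZMod 2) S)
  rw [finrank_fin_fun] at hdim
  have hle := Submodule.finrank_mono hS
  obtain ⟨χ, hχS, -, hχ⟩ := Submodule.exists_fun_fin_finrank_span_eq (ZMod 2) S
  choose v hv0 hv using hχS
  obtain ⟨g, hg⟩ := exists_dual_family hχ fun _ => 1
  refine ⟨g, _, v, by omega, ?_, fun i => by simp [hv, hg]⟩
  rw [Fintype.linearIndependent_iff]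
  intro a ha i
  obtain ⟨d, hd⟩ := exists_dual_family hχ (Pi.single i 1)
  have h1 := congrArg (μ d) ha
  have h2 : ∀ j, v j - μ d (v j) = if j = i then (2 : ℤ) • v i else 0 := fun j => by
    rw [hv, hd]
    rcases eq_or_ne j i with rfl | h
    · simp [two_smul]
    · simp [h]
  have h3 : ∑ j, a j • (v j - μ d (v j)) = 0 := by
    simp only [smul_sub, Finset.sum_sub_distrib, ha]
    rw [map_sum] at h1
    simp only [map_zsmul, map_zero] at h1
    rw [h1, sub_zero]
  simp only [h2, smul_ite, smul_zero, Finset.sum_ite_eq', Finset.mem_univ, if_true, smul_smul] at h3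
  rcases smul_eq_zero.1 h3 with h | h
  · omega
  · exact absurd h (hv0 i)

open Module in
theorem exists_independent_mod_two (ν : (Fin n → ℤ) →+ (Fin n → ℤ)) {t : ℕ}
    {v : Fin t → Fin n → ℤ} (hv : LinearIndependent ℤ v) (hν : ∀ i, ν (v i) = -v i) :
    ∃ c : Fin t → Fin n → ℤ, (∀ i, ν (c i) = -c i) ∧
      LinearIndependent (ZMod 2) fun i j => (c i j : ZMod 2) := by
  let L : Submodule ℤ (Fin n → ℤ) := LinearMap.ker (ν.toIntLinearMap + LinearMap.id)
  have hL : ∀ x, x ∈ L ↔ ν x = -x := fun x => by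
    simp [L, LinearMap.mem_ker, eq_neg_iff_add_eq_zero]
  have hle : t ≤ finrank ℤ L := by
    have : LinearIndependent ℤ fun i => (⟨v i, (hL _).2 (hν i)⟩ : L) :=
      LinearIndependent.of_comp L.subtype hv
    simpa using this.fintype_card_le_finrank
  let b := finBasis ℤ L
  refine ⟨fun i => b (Fin.castLE hle i), fun i => (hL _).1 (b _).2, ?_⟩
  have hb : LinearIndependent (ZMod 2) fun i j => (((b i : Fin n → ℤ) j : ℤ) : ZMod 2) := by
    rw [Fintype.linearIndependent_iff]
    intro a ha i
    have hs : ∀ z : ZMod 2, (((z.val : ℕ) : ℤ) : ZMod 2) = z := by decide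
    set w : L := ∑ i, ((a i).val : ℤ) • b i with hw
    have hw2 : ∀ j, (2 : ℤ) ∣ (w : Fin n → ℤ) j := fun j => by
      refine (ZMod.intCast_zmod_eq_zero_iff_dvd _ 2).1 ?_
      have := congrFun ha j
      simp only [Finset.sum_apply, Pi.smul_apply, smul_eq_mul, Pi.zero_apply] at this
      rw [hw]
      simp only [AddSubmonoidClass.coe_finsetSum, Submodule.coe_smul, Finset.sum_apply,
        Pi.smul_apply, smul_eq_mul, Int.cast_sum, Int.cast_mul, hs, this]
    choose u hu using hw2
    have hwu : (w : Fin n → ℤ) = (2 : ℤ) • u := funext hu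
    have huL : u ∈ L := by
      have h2 := (hL _).1 w.2
      rw [hwu, map_zsmul, ← smul_neg] at h2
      exact (hL _).2 (smul_right_injective _ (two_ne_zero (α := ℤ)) h2)
    have h1 := congrArg (fun x => b.repr x i) (show w = (2 : ℤ) • ⟨u, huL⟩ from Subtype.ext hwu)
    simp only [hw, b.repr_sum_self, map_smul, Finsupp.smul_apply, smul_eq_mul] at h1
    rw [← hs (a i), h1, Int.cast_mul]
    have : ((2 : ℤ) : ZMod 2) = 0 := by decide
    rw [this, zero_mul]
  exact hb.comp _ (Fin.castLE_injective hle)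

end Eigen

/-! ### Lifting maps to products of spheres -/

section Lifts

variable {m n : ℕ}

/-- The Euclidean inner product on the sphere, in coordinates. -/
def Sph.ip (u v : Sph m) : ℝ := ∑ p, u.1 p * v.1 p

theorem Sph.ip_self (u : Sph m) : Sph.ip u u = 1 := by
  rw [← u.sum_sq, Sph.ip]
  exact Finset.sum_congr rfl fun p _ => by ring

theorem Sph.ip_neg_right (u v : Sph m) : Sph.ip u (-v) = -Sph.ip u v := by
  simp [Sph.ip, Finset.sum_neg_distrib]

theorem Sph.ip_neg_left (u v : Sph m) : Sph.ip (-u) v = -Sph.ip u v := by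
  simp [Sph.ip, Finset.sum_neg_distrib]

theorem Sph.sum_sub_sq (u v : Sph m) : ∑ p, (u.1 p - v.1 p) ^ 2 = 2 - 2 * Sph.ip u v := by
  have : ∀ p, (u.1 p - v.1 p) ^ 2 = u.1 p ^ 2 + v.1 p ^ 2 - 2 * (u.1 p * v.1 p) := fun p => by ring
  simp only [this, Finset.sum_sub_distrib, Finset.sum_add_distrib, u.sum_sq, v.sum_sq,
    ← Finset.mul_sum, Sph.ip]
  ring

theorem Sph.ip_pos_of_close {u v w : Sph m} (h1 : 9 / 10 < Sph.ip u v) (h2 : 9 / 10 < Sph.ip u w) :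
    0 < Sph.ip v w := by
  have h3 : ∑ p, (v.1 p - w.1 p) ^ 2 ≤
      ∑ p, (2 * (u.1 p - v.1 p) ^ 2 + 2 * (u.1 p - w.1 p) ^ 2) :=
    Finset.sum_le_sum fun p _ => by nlinarith [sq_nonneg (2 * u.1 p - v.1 p - w.1 p)]
  rw [Finset.sum_add_distrib, ← Finset.mul_sum, ← Finset.mul_sum, sum_sub_sq, sum_sub_sq,
    sum_sub_sq] at h3
  linarith

theorem Sph.ip_sq (u v : Sph m) :
    Sph.ip u v ^ 2 = ∑ p, ∑ q, (u.1 p * u.1 q) * (v.1 p * v.1 q) := by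
  rw [sq, Sph.ip, Finset.sum_mul_sum]
  exact Finset.sum_congr rfl fun p _ => Finset.sum_congr rfl fun q _ => by ring

/-- The sign comparing two unit vectors. -/
def Sph.sgn (u v : Sph m) : ZMod 2 := if 0 < Sph.ip u v then 0 else 1

theorem Sph.sgn_cocycle {u v w : Sph m} (h1 : (9 / 10) ^ 2 < Sph.ip u v ^ 2)
    (h2 : (9 / 10) ^ 2 < Sph.ip u w ^ 2) : Sph.sgn v w - Sph.sgn u w + Sph.sgn u v = 0 := by
  have h10 : (0 : ZMod 2) - 1 + 1 = 0 := by decide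
  have h11 : (1 : ZMod 2) + 1 = 0 := by decide
  have key : ∀ x : ℝ, (9 / 10) ^ 2 < x ^ 2 → 9 / 10 < x ∨ 9 / 10 < -x := fun x hx => by
    rw [← lt_abs]
    exact lt_of_pow_lt_pow_left₀ 2 (abs_nonneg x) (by rwa [sq_abs])
  rcases key _ h1 with a | a <;> rcases key _ h2 with b | b
  · have := ip_pos_of_close a b
    simp [sgn, this, show 0 < ip u v by linarith, show 0 < ip u w by linarith]
  · rw [← ip_neg_right] at b
    have := ip_pos_of_close a b
    rw [ip_neg_right] at b this
    simp [sgn, show 0 < ip u v by linarith, show ¬ 0 < ip u w by linarith,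
      show ¬ 0 < ip v w by linarith]
  · rw [← ip_neg_right] at a
    have := ip_pos_of_close a b
    rw [ip_neg_right] at a
    rw [ip_neg_left] at this
    simp [sgn, show ¬ 0 < ip u v by linarith, show 0 < ip u w by linarith,
      show ¬ 0 < ip v w by linarith, h11]
  · rw [← ip_neg_right] at a b
    have := ip_pos_of_close a b
    rw [ip_neg_right] at a b
    rw [ip_neg_left, ip_neg_right, neg_neg] at this
    simp [sgn, show ¬ 0 < ip u v by linarith, show ¬ 0 < ip u w by linarith, this, h11]

theorem Sph.continuous_of_coord {X : Type*} [TopologicalSpace X] {g : X → Sph m}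
    (h : ∀ p, Continuous fun x => (g x).1 p) : Continuous g := by
  refine Continuous.subtype_mk (f := fun x => (g x).1) ?_ _
  exact (PiLp.continuous_toLp 2 (fun _ : Fin (m + 1) => ℝ)).comp (continuous_pi h)

theorem exists_continuous_sign (hm : 2 ≤ m) {s : (Fin n → Sph m) → Sph m}
    (hs : ∀ p q, Continuous fun x => (s x).1 p * (s x).1 q) :
    ∃ g : (Fin n → Sph m) → Sph m, Continuous g ∧ ∀ x, g x = s x ∨ g x = -s x := by
  have hU : ∀ t < (1 : ℝ), {z : (Fin n → Sph m) × (Fin n → Sph m) |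
      t < ∑ p, ∑ q, ((s z.1).1 p * (s z.1).1 q) * ((s z.2).1 p * (s z.2).1 q)} ∈ 𝓤 _ := by
    intro t ht
    rw [← nhdsSet_diagonal_eq_uniformity]
    refine IsOpen.mem_nhdsSet (isOpen_lt continuous_const ?_) |>.2 ?_
    · exact continuous_finsetSum _ fun p _ => continuous_finsetSum _ fun q _ =>
        ((hs p q).comp continuous_fst).mul ((hs p q).comp continuous_snd)
    · rintro ⟨x, y⟩ (rfl : x = y)
      show t < _
      rwa [← Sph.ip_sq, Sph.ip_self, one_pow]
  set V := {z : (Fin n → Sph m) × (Fin n → Sph m) |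
      (9 / 10) ^ 2 < ∑ p, ∑ q, ((s z.1).1 p * (s z.1).1 q) * ((s z.2).1 p * (s z.2).1 q)} with hVdef
  have hV : V ∈ 𝓤 _ := hU _ (by norm_num)
  have hVi : ∀ {x y}, (x, y) ∈ V → (9 / 10) ^ 2 < Sph.ip (s x) (s y) ^ 2 := fun {x y} h => by
    rw [Sph.ip_sq]
    exact h
  let f : List (Fin n → Sph m) → ZMod 2
    | [x, y] => Sph.sgn (s x) (s y)
    | _ => 0
  obtain ⟨h, W, hW, hh⟩ := acyclic_univ (M := ZMod 2) hm f (by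
    filter_upwards [eventually_small_close hV] with l ⟨h1, _, h3⟩
    obtain ⟨x, y, z, rfl⟩ := List.length_eq_three.1 h1
    have := Sph.sgn_cocycle (hVi (h3 x (by simp) y (by simp))) (hVi (h3 x (by simp) z (by simp)))
    rw [Pi.zero_apply, ← this]
    simp [cobd_cons, f]
    ring)
  set g : (Fin n → Sph m) → Sph m := fun x => if h [x] = 0 then s x else -s x with hg
  have hgs : ∀ x, g x = s x ∨ g x = -s x := fun x => by
    by_cases hx : h [x] = 0 <;> simp [hg, hx]
  refine ⟨g, ?_, hgs⟩
  have hgg : ∀ x p q, (g x).1 p * (g x).1 q = (s x).1 p * (s x).1 q := fun x p q => by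
    rcases hgs x with e | e <;> simp [e]
  obtain ⟨W', hW', hWs, hWW⟩ := symm_of_uniformity hW
  have hpos : ∀ x y, (x, y) ∈ W' ∩ V → 0 < Sph.ip (g x) (g y) := by
    rintro x y ⟨hxy, hxyV⟩
    have h1 : Sph.sgn (s x) (s y) = h [y] - h [x] := by
      have := hh [x, y] rfl (by simp) (by
        have hr : ∀ z, (z, z) ∈ W := fun z => refl_mem_uniformity hW
        have h1 : (x, y) ∈ W := hWW hxy
        have h2 : (y, x) ∈ W := hWW (hWs.symm _ _ hxy)
        simp [hr, h1, h2])
      simpa [cobd_cons, f] using this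
    have h2 := hVi hxyV
    have h3 : Sph.ip (s x) (s y) ≠ 0 := fun h => by
      rw [h] at h2
      norm_num at h2
    have ht : ∀ t : ZMod 2, t = 0 ∨ t = 1 := by decide
    have h01 : (0 : ZMod 2) - 1 ≠ 0 := by decide
    rcases lt_or_gt_of_ne h3 with h4 | h4 <;> rcases ht (h [x]) with a | a <;>
      rcases ht (h [y]) with b | b <;>
      simp [Sph.sgn, hg, a, b, h4, h4.not_gt, Sph.ip_neg_left, Sph.ip_neg_right] at h1 ⊢
  refine Sph.continuous_of_coord fun p => continuous_iff_continuousAt.2 fun x => ?_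
  have hev : ∀ᶠ y in 𝓝 x, (∑ q, (g x).1 q * ((s y).1 q * (s y).1 p)) /
      Real.sqrt (∑ p, ∑ q, ((s x).1 p * (s x).1 q) * ((s y).1 p * (s y).1 q)) = (g y).1 p := by
    filter_upwards [UniformSpace.ball_mem_nhds x (inter_mem hW' hV)] with y hy
    have h1 := hpos x y hy
    simp only [← hgg]
    rw [← Sph.ip_sq, Real.sqrt_sq h1.le, div_eq_iff h1.ne', Sph.ip, Finset.mul_sum]
    exact Finset.sum_congr rfl fun q _ => by ring
  refine ContinuousAt.congr (ContinuousAt.div ?_ ?_ ?_) hev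
  · exact (continuous_finsetSum _ fun q _ => continuous_const.mul (hs q p)).continuousAt
  · exact (Real.continuous_sqrt.comp (continuous_finsetSum _ fun p _ =>
      continuous_finsetSum _ fun q _ => continuous_const.mul (hs p q))).continuousAt
  · rw [← Sph.ip_sq, Sph.ip_self]
    simp

theorem Sph.preconnectedSpace (hm : 1 ≤ m) : PreconnectedSpace (Sph m) := by
  refine Subtype.preconnectedSpace (isPreconnected_sphere ?_ _ _)
  rw [← Module.finrank_eq_rank, finrank_euclideanSpace_fin]
  exact_mod_cast (by omega : 1 < m + 1)

theorem sign_constant {X : Type*} [TopologicalSpace X] [PreconnectedSpace X] {g g' : X → Sph m}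
    (hg : Continuous g) (hg' : Continuous g') (h : ∀ x, g' x = g x ∨ g' x = -g x) :
    (∀ x, g' x = g x) ∨ ∀ x, g' x = -g x := by
  have hc : Continuous fun x => Sph.ip (g x) (g' x) :=
    continuous_finsetSum _ fun p _ => ((continuous_coord p).comp hg).mul
      ((continuous_coord p).comp hg')
  have h1 : (1 : ℝ) ≠ -1 := by norm_num
  rcases isPreconnected_univ.eq_one_or_eq_neg_one_of_sq_eq hc.continuousOn (fun x _ => by
    rcases h x with e | e <;> simp [e, Sph.ip_neg_right, Sph.ip_self]) with e | e
  · refine Or.inl fun x => (h x).resolve_right fun e' => ?_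
    have := e (Set.mem_univ x)
    simp [e', Sph.ip_neg_right, Sph.ip_self] at this
    linarith
  · refine Or.inr fun x => (h x).resolve_left fun e' => ?_
    have := e (Set.mem_univ x)
    simp [e', Sph.ip_self] at this
    linarith

/-- The projection from the product of spheres to the product of projective spaces. -/
def proj (x : Fin n → Sph m) : Fin n → RP m := fun i => Quot.mk _ (x i)

theorem continuous_proj : Continuous (proj (m := m) (n := n)) :=
  continuous_pi fun i => continuous_quot_mk.comp (continuous_apply i)

/-- The product of two coordinates as a function on projective space. -/
def RP.coord (p q : Fin (m + 1)) : RP m → ℝ :=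
  Quot.lift (fun u : Sph m => u.1 p * u.1 q) fun u v h => by
    rcases h with h | h <;> simp [h]

theorem RP.continuous_coord (p q : Fin (m + 1)) : Continuous (RP.coord p q) :=
  continuous_quot_lift _ ((_root_.continuous_coord p).mul (_root_.continuous_coord q))

theorem RP.mk_eq {u v : Sph m} :
    (Quot.mk (antipodal m) u : RP m) = Quot.mk _ v ↔ v = u ∨ v = -u := by
  constructor
  · intro h
    exact Sph.eq_or_eq_neg fun p q => congrArg (RP.coord p q) h.symm
  · rintro (rfl | rfl)
    · rfl
    · exact Quot.sound (Or.inr rfl)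

theorem proj_act (a : Fin n → ZMod 2) (x : Fin n → Sph m) : proj (act a x) = proj x := by
  funext i
  by_cases h : a i = 0
  · simp [proj, act, h]
  · exact RP.mk_eq.2 (Or.inr (show x i = -(act a x i) by simp [act, h]))

theorem exists_lift (hm : 2 ≤ m) {R : (Fin n → RP m) → Fin n → RP m} (hR : Continuous R) :
    ∃ F : (Fin n → Sph m) → Fin n → Sph m, Continuous F ∧ ∀ x, proj (F x) = R (proj x) := by
  have key : ∀ i, ∃ g : (Fin n → Sph m) → Sph m, Continuous g ∧
      ∀ x, (Quot.mk _ (g x) : RP m) = R (proj x) i := by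
    intro i
    have hc : Continuous fun x : Fin n → Sph m => R (proj x) i :=
      (continuous_apply i).comp (hR.comp continuous_proj)
    obtain ⟨g, hg, hgs⟩ := exists_continuous_sign hm
      (s := fun x : Fin n → Sph m => (R (proj x) i).out) fun p q => by
        refine ((RP.continuous_coord p q).comp hc).congr fun x => ?_
        exact congrArg (RP.coord p q) (Quot.out_eq _).symm
    refine ⟨g, hg, fun x => ?_⟩
    rw [← Quot.out_eq (R (proj x) i), eq_comm, RP.mk_eq]
    exact hgs x
  choose g hg hgR using key
  exact ⟨fun x i => g i x, continuous_pi hg, fun x => funext fun i => hgR i x⟩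

theorem lift_unique (hm : 1 ≤ m) {F F' : (Fin n → Sph m) → Fin n → Sph m} (hF : Continuous F)
    (hF' : Continuous F') (h : ∀ x, proj (F' x) = proj (F x)) : ∃ a, ∀ x, F' x = act a (F x) := by
  have := Sph.preconnectedSpace hm
  have key : ∀ i, ∃ t : ZMod 2, ∀ x, F' x i = if t = 0 then F x i else -F x i := fun i => by
    rcases sign_constant ((continuous_apply i).comp hF) ((continuous_apply i).comp hF')
      (fun x => RP.mk_eq.1 (congrFun (h x) i).symm) with e | e
    · exact ⟨0, fun x => by simpa using e x⟩
    · exact ⟨1, fun x => by simpa using e x⟩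
  choose a ha using key
  exact ⟨a, fun x => funext fun i => ha i x⟩

end Lifts

/-! ### Extensions of the sign group -/

section Extension

variable {m n r : ℕ}

theorem act_injective {a b : Fin n → ZMod 2} {x : Fin n → Sph m} (h : act a x = act b x) :
    a = b := by
  have h0 : a + b = 0 := act_free (x := x) (by rw [act_add, ← h, act_act])
  funext i
  exact CharTwo.add_eq_zero.1 (congrFun h0 i)

theorem DegRel.pairing_eq_zero (hm : Odd m) {z : (Fin n → Sph m) → Fin n → Sph m}
    (hz : Continuous z) {a : Fin n → ZMod 2} (hza : ∀ x, z (z x) = _root_.act a x)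
    {c : Fin n → ℤ} (hc : DegRel z c (-c)) : (fun i => (c i : ZMod 2)) ⬝ᵥ a = 0 := by
  obtain ⟨h, hh⟩ := hc
  refine pairing_of_order_four hm hz hza (h := h) ?_
  rwa [← neg_one_zsmul c, topc_zsmul, neg_one_zsmul] at hh

theorem DegRel.pairing_eq (hm : Odd m) {F : (Fin n → Sph m) → Fin n → Sph m}
    (hF : Continuous F) {a b : Fin n → ZMod 2} (hab : ∀ x, F (_root_.act a x) = _root_.act b (F x))
    {c c' : Fin n → ℤ} (hc : DegRel F c c') :
    (fun i => (c i : ZMod 2)) ⬝ᵥ b = (fun i => (c' i : ZMod 2)) ⬝ᵥ a := by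
  obtain ⟨h, hh⟩ := hc
  exact pairing_of_intertwine hm hF hab hh

open Module in
/-- A group of maps extending the sign group by `(ℤ/2)^r` such that every point of the product of
spheres is fixed only by sign changes has `r ≤ 2 * n`. -/
theorem rank_le_of_free_extension (hm : Odd m)
    {φ : (Fin r → ZMod 2) → (Fin n → Sph m) → Fin n → Sph m} (hφ : ∀ g, Continuous (φ g))
    (hmul : ∀ g h, ∃ a, ∀ x, φ (g + h) x = act a (φ g (φ h x)))
    (hone : ∃ a, ∀ x, φ 0 x = act a x) (hconj : ∀ g a, ∃ b, ∀ x, φ g (act a x) = act b (φ g x))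
    (hfree : ∀ g a x, φ g (act a x) = x → g = 0) : r ≤ 2 * n := by
  obtain ⟨e, he⟩ := hone
  choose s hs using hmul
  choose κ hκ using hconj
  choose μ hμ using fun g c => DegRel.exists hm.pos (hφ g) c
  have hμ0 : ∀ c, μ 0 c = c := fun c =>
    (hμ 0 c).unique hm (by rw [show φ 0 = act e from funext he]; exact DegRel.act hm e c)
  have hμadd : ∀ g h c, μ (g + h) c = μ g (μ h c) := fun g h c => by
    refine (hμ (g + h) c).unique hm ?_
    rw [add_comm, show φ (h + g) = fun x => act (s h g) (φ h (φ g x)) from funext (hs h g)]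
    exact (DegRel.act hm (s h g) c).comp ((hφ h).comp (hφ g)) ((hμ h c).comp (hφ g) (hμ g _))
  have hμmap : ∀ g c d, μ g (c + d) = μ g c + μ g d := fun g c d =>
    (hμ g _).unique hm ((hμ g c).add (hμ g d))
  let ν : (Fin r → ZMod 2) → (Fin n → ℤ) →+ (Fin n → ℤ) := fun g => AddMonoidHom.mk' (μ g) (hμmap g)
  have hpair : ∀ g c a, (fun i => (c i : ZMod 2)) ⬝ᵥ κ g a = (fun i => (μ g c i : ZMod 2)) ⬝ᵥ a :=
    fun g c a => (hμ g c).pairing_eq hm (hφ g) (hκ g a)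
  have hpairneg : ∀ g c a, μ g c = -c →
      (fun i => (c i : ZMod 2)) ⬝ᵥ κ g a = (fun i => (c i : ZMod 2)) ⬝ᵥ a := fun g c a h => by
    rw [hpair, h]
    simp [dotProduct, CharTwo.neg_eq]
  let K : Submodule (ZMod 2) (Fin r → ZMod 2) :=
    { carrier := {k | ∀ c, μ k c = c}
      add_mem' := fun {g h} hg hh c => by rw [hμadd, hh, hg]
      zero_mem' := hμ0
      smul_mem' := fun t g hg => by
        have ht : ∀ t : ZMod 2, t = 0 ∨ t = 1 := by decide
        rcases ht t with rfl | rfl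
        · rw [zero_smul]
          exact hμ0
        · rwa [one_smul] }
  have hKκ : ∀ k ∈ K, ∀ a, κ k a = a := fun k hk a => by
    funext i
    have := hpair k (Pi.single i 1) a
    rw [show μ k (Pi.single i 1) = Pi.single i 1 from hk _] at this
    simpa [dotProduct, Pi.single_apply] using this
  have hKact : ∀ k ∈ K, ∀ a x, φ k (act a x) = act a (φ k x) := fun k hk a x => by
    rw [hκ, hKκ k hk]
  have hsq : ∀ g, ∃ q, ∀ x, φ g (φ g x) = act q x := fun g => by
    refine ⟨s g g + e, fun x => ?_⟩
    have h2 : g + g = 0 := funext fun i => CharTwo.add_self_eq_zero _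
    rw [act_add, ← he, ← h2, hs, act_act]
  choose q hq using hsq
  have hcomm : ∀ g h, ∃ β, ∀ x, φ g (φ h x) = act β (φ h (φ g x)) := fun g h => by
    refine ⟨s g h + s h g, fun x => ?_⟩
    rw [act_add, ← hs, add_comm, hs, act_act]
  choose β hβ using hcomm
  obtain ⟨x₀⟩ : Nonempty (Fin n → Sph m) := ⟨fun _ => ⟨EuclideanSpace.single 0 1, by simp⟩⟩
  have hβadd : ∀ g, ∀ h ∈ K, ∀ h', β g (h + h') + s h h' = κ g (s h h') + β g h + β g h' := by
    intro g h hh h'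
    refine act_injective (x := φ h (φ h' (φ g x₀))) ?_
    rw [act_add, ← hs, ← hβ, hs, hκ, hβ g h, hβ g h', hKact h hh, act_add, act_add]
  have hqadd : ∀ k ∈ K, ∀ k' ∈ K, q (k + k') = β k' k + q k + q k' := fun k hk k' hk' => by
    refine act_injective (x := x₀) ?_
    rw [← hq, hs, hs, hKact k' hk', hKact k hk, act_act, hβ k' k, hKact k hk, hq, hq k', act_add,
      act_add]
  have hβK : ∀ g ∈ K, ∀ h ∈ K, ∀ h', β g (h + h') = β g h + β g h' := fun g hg h hh h' => by
    have := hβadd g h hh h'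
    rw [hKκ g hg, add_assoc, add_comm] at this
    exact add_left_cancel this
  obtain ⟨g, t, v, hr, hv, hvg⟩ := exists_large_negative_part (μ := ν) hμ0 hμadd K fun g hg => hg
  obtain ⟨c, hcg, hc⟩ := exists_independent_mod_two (ν g) hv hvg
  by_contra! hlt
  have hqβ : ∀ i, ∀ k ∈ K, (fun j => (c i j : ZMod 2)) ⬝ᵥ q k =
      (fun j => (c i j : ZMod 2)) ⬝ᵥ β g k := by
    intro i k hk
    have hg : DegRel (φ g) (c i) (-c i) := by
      have := hμ g (c i)
      rwa [show μ g (c i) = -c i from hcg i] at this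
    have hk' : DegRel (φ k) (-c i) (-c i) := by
      have := hμ k (-c i)
      rwa [show μ k (-c i) = -c i from hk _] at this
    have h1 := hg.pairing_eq_zero hm (hφ g) (hq g)
    have h2 := (hg.comp (hφ k) hk').pairing_eq_zero hm ((hφ g).comp (hφ k))
      (a := β g k + q g + q k) fun x => by
        rw [Function.comp_apply, Function.comp_apply, hβ g k, hq g, hKact k hk, hq k,
          act_add, act_add]
    rw [dotProduct_add, dotProduct_add, h1, add_zero] at h2
    exact (CharTwo.add_eq_zero.1 h2).symm
  obtain ⟨k, hk0, hk⟩ := exists_zero_of_partially_linear (V := K) (q := fun k => q k)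
    (act_injective (x := x₀) (by
      show act (q 0) x₀ = _
      rw [← hq, he, he, act_act, act_zero]))
    (fun x y z => by
      have h : ∀ a b b' x y z : ZMod 2,
        b + b' + a + z = a + (b' + y + z) + (b + x + z) + x + y + z := by decide
      rw [Submodule.coe_add, hqadd _ (x + y).2 z z.2, Submodule.coe_add y z, hqadd y y.2 z z.2,
        Submodule.coe_add x z, hqadd x x.2 z z.2, Submodule.coe_add, hβK z z.2 x x.2]
      exact funext fun i => h _ _ _ _ _ _)
    hc (fun i x y => by
      rw [hqβ i _ (x + y).2, hqβ i x x.2, hqβ i y y.2, Submodule.coe_add]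
      have := congrArg ((fun j => (c i j : ZMod 2)) ⬝ᵥ ·) (hβadd g x x.2 y)
      simp only [dotProduct_add, hpairneg g (c i) _ (hcg i)] at this
      rwa [add_assoc, add_comm, add_left_cancel_iff] at this) (by omega)
  obtain ⟨a, x, hx⟩ := not_free_of_commuting_involution (hφ k)
    (fun x => by rw [hq, show q k = 0 from hk, act_zero]) (hKact k k.2)
  exact hk0 (Subtype.ext (hfree _ _ _ hx))

end Extension

end Preliminaries

theorem stmt8 (m n r : ℕ) (hm : Odd m) (hm7 : 7 < m) (hn : 1 ≤ n)
    (ρ : (Fin r → ZMod 2) → (Fin n → RP m) → (Fin n → RP m))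
    (hρ0 : ∀ x, ρ 0 x = x)
    (hρadd : ∀ g h x, ρ (g + h) x = ρ g (ρ h x))
    (hcont : ∀ g, Continuous (ρ g))
    (hfree : ∀ g x, ρ g x = x → g = 0) :
    r ≤ 2 * n := by
  have hm1 : 1 ≤ m := by omega
  choose φ hφ hp using fun g => exists_lift (by omega : 2 ≤ m) (hcont g)
  refine rank_le_of_free_extension hm hφ (fun g h => ?_) ?_ (fun g a => ?_) fun g a x hx => ?_
  · exact lift_unique hm1 ((hφ g).comp (hφ h)) (hφ _) fun x => by
      rw [hp, hρadd, hp, hp]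
  · exact lift_unique hm1 continuous_id (hφ 0) fun x => by rw [hp, hρ0]
  · exact lift_unique hm1 (hφ g) ((hφ g).comp (continuous_act a)) fun x => by
      rw [hp, hp, proj_act]
  · exact hfree g (proj x) (by rw [← proj_act a x, ← hp, hx, proj_act])
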